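/- Let 1 < p ≤ q < p*. For every open bounded convex set Ω ⊂ ℝ^N and every open ball B ⊂ ℝ^N one has the strict inequality μ_{p,q}(Ω) < λ_{p,q}(B) · (|B|/|Ω|)^{p/N + p/q − 1}. -/

import Mathlib

open MeasureTheory Metric Set Real

noncomputable section

/-- The Rayleigh quotient `(∫_Ω |∇v|^p) / (∫_Ω |v|^q)^(p/q)`, where the gradient is
understood as the (a.e. defined) Fréchet derivative. -/
def rayleighQuot {N : ℕ} (p q : ℝ) (Ω : Set (EuclideanSpace ℝ (Fin N)))
    (v : EuclideanSpace ℝ (Fin N) → ℝ) : ℝ :=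
  (∫ x in Ω, ‖fderiv ℝ v x‖ ^ p) / (∫ x in Ω, |v x| ^ q) ^ (p / q)

/-- The first (generalized) Dirichlet eigenvalue `λ_{p,q}(Ω)`: infimum of the Rayleigh
quotient over nontrivial smooth functions compactly supported in `Ω`. -/
def lambdaPQ {N : ℕ} (p q : ℝ) (Ω : Set (EuclideanSpace ℝ (Fin N))) : ℝ :=
  sInf { R : ℝ | ∃ v : EuclideanSpace ℝ (Fin N) → ℝ,
    ContDiff ℝ (⊤ : ℕ∞) v ∧ HasCompactSupport v ∧ tsupport v ⊆ Ω ∧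
    (∃ x ∈ Ω, v x ≠ 0) ∧ R = rayleighQuot p q Ω v }

/-- The first nontrivial (generalized) Neumann eigenvalue `μ_{p,q}(Ω)`: infimum of the
Rayleigh quotient over nontrivial Lipschitz functions on the closure of `Ω` satisfying
the constraint `∫_Ω |v|^(q-2) v = 0`. -/
def muPQ {N : ℕ} (p q : ℝ) (Ω : Set (EuclideanSpace ℝ (Fin N))) : ℝ :=
  sInf { R : ℝ | ∃ v : EuclideanSpace ℝ (Fin N) → ℝ, ∃ K : NNReal,
    LipschitzOnWith K v (closure Ω) ∧ (∃ x ∈ Ω, v x ≠ 0) ∧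
    (∫ x in Ω, |v x| ^ (q - 2) * v x) = 0 ∧ R = rayleighQuot p q Ω v }

/-- `q` is below the critical Sobolev exponent `p* = Np/(N-p)` (with `p* = ∞` if `p ≥ N`). -/
def ltCritical (N : ℕ) (p q : ℝ) : Prop := p < N → q < N * p / (N - p)

end

open MeasureTheory Metric Set Real

lemma bm1_compact {K L C : Set ℝ} (hK : IsCompact K) (hL : IsCompact L) (hK0 : K.Nonempty)
    (hL0 : L.Nonempty) (hC : ∀ a ∈ K, ∀ b ∈ L, a + b ∈ C) :
    volume K + volume L ≤ volume C := by
  set M := sSup K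
  set m := sInf L
  have hM : M ∈ K := hK.sSup_mem hK0
  have hm : m ∈ L := hL.sInf_mem hL0
  have h1 : ∀ a ∈ K, a ≤ M := fun a ha => le_csSup hK.bddAbove ha
  have h2 : ∀ b ∈ L, m ≤ b := fun b hb => csInf_le hL.bddBelow hb
  set K' := (fun x => x + m) '' K
  set L' := (fun x => x + M) '' L
  have hK' : volume K' = volume K := by
    simp [K', measure_preimage_add_right]
  have hL' : volume L' = volume L := by
    simp [L', measure_preimage_add_right]
  have hmK : MeasurableSet K' := (hK.image (by fun_prop)).measurableSet
  have hmL : MeasurableSet L' := (hL.image (by fun_prop)).measurableSet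
  have hi : volume (K' ∩ L') = 0 := by
    refine measure_mono_null (t := {M + m}) ?_ (by simp)
    rintro x ⟨⟨a, ha, rfl⟩, ⟨b, hb, hab⟩⟩
    have := h1 a ha
    have := h2 b hb
    simp only [mem_singleton_iff] at *
    linarith
  have hu : K' ∪ L' ⊆ C := by
    rintro x (⟨a, ha, rfl⟩ | ⟨b, hb, rfl⟩)
    · exact hC _ ha _ hm
    · simp only; rw [add_comm]; exact hC _ hM _ hb
  calc volume K + volume L = volume (K' ∪ L') + volume (K' ∩ L') := by
        rw [measure_union_add_inter _ hmL, hK', hL']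
    _ ≤ volume C := by rw [hi, add_zero]; exact measure_mono hu

lemma bm1 {A B C : Set ℝ} (hA : MeasurableSet A) (hB : MeasurableSet B) (hA0 : A.Nonempty)
    (hB0 : B.Nonempty) (hC : ∀ a ∈ A, ∀ b ∈ B, a + b ∈ C) :
    volume A + volume B ≤ volume C := by
  obtain ⟨a0, ha0⟩ := hA0
  obtain ⟨b0, hb0⟩ := hB0
  have key : ∀ K ⊆ A, IsCompact K → ∀ L ⊆ B, IsCompact L → volume K + volume L ≤ volume C := by
    intro K hKA hK L hLB hL
    refine le_trans (add_le_add (measure_mono (subset_insert a0 K))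
      (measure_mono (subset_insert b0 L))) ?_
    refine bm1_compact (hK.insert a0) (hL.insert b0) (by simp) (by simp) ?_
    intro a ha b hb
    exact hC a (insert_subset ha0 hKA ha) b (insert_subset hb0 hLB hb)
  rw [hA.measure_eq_iSup_isCompact, hB.measure_eq_iSup_isCompact]
  simp only [iSup_and']
  exact ENNReal.biSup_add_biSup_le' (p := fun K => K ⊆ A ∧ IsCompact K)
    (q := fun K => K ⊆ B ∧ IsCompact K) ⟨∅, by simp⟩ ⟨∅, by simp⟩
    (fun K h1 L h2 => key K h1.1 h1.2 L h2.1 h2.2)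

lemma bm1_l {A B C : Set ℝ} (hA : MeasurableSet A) (hB : MeasurableSet B) (hA0 : A.Nonempty)
    (hB0 : B.Nonempty) {k l : ℝ} (hk : 0 < k) (hl : 0 < l)
    (hC : ∀ a ∈ A, ∀ b ∈ B, k * a + l * b ∈ C) :
    ENNReal.ofReal k * volume A + ENNReal.ofReal l * volume B ≤ volume C := by
  have h := bm1 (A := (fun x => k⁻¹ * x) ⁻¹' A) (B := (fun x => l⁻¹ * x) ⁻¹' B) (C := C)
    (hA.preimage (by fun_prop)) (hB.preimage (by fun_prop)) ?_ ?_ ?_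
  · rwa [Real.volume_preimage_mul_left (by positivity), Real.volume_preimage_mul_left (by positivity),
      inv_inv, inv_inv, abs_of_pos hk, abs_of_pos hl] at h
  · obtain ⟨a, ha⟩ := hA0
    exact ⟨k * a, by simpa [hk.ne'] using ha⟩
  · obtain ⟨a, ha⟩ := hB0
    exact ⟨l * a, by simpa [hl.ne'] using ha⟩
  · intro a ha b hb
    have := hC _ ha _ hb
    field_simp at this
    exact this

/-- One-dimensional Prekopa-Leindler inequality, normalised form. -/
lemma pl1_norm {k l : ℝ} (hk : 0 < k) (hl : 0 < l) (hkl : k + l = 1) {a b c : ℝ → ℝ}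
    (ha : Measurable a) (hb : Measurable b) (hc : Measurable c)
    (ha0 : ∀ x, 0 ≤ a x) (hb0 : ∀ x, 0 ≤ b x) (hc0 : ∀ x, 0 ≤ c x)
    (ha1 : ∀ x, a x ≤ 1) (hb1 : ∀ x, b x ≤ 1)
    (ha2 : ∀ t < 1, ∃ x, t < a x) (hb2 : ∀ t < 1, ∃ x, t < b x)
    (h : ∀ s t, a s ^ k * b t ^ l ≤ c (k * s + l * t)) :
    ENNReal.ofReal k * (∫⁻ x, ENNReal.ofReal (a x)) + ENNReal.ofReal l * (∫⁻ x, ENNReal.ofReal (b x))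
      ≤ ∫⁻ x, ENNReal.ofReal (c x) := by
  rw [lintegral_eq_lintegral_meas_lt _ (.of_forall ha0) ha.aemeasurable,
    lintegral_eq_lintegral_meas_lt _ (.of_forall hb0) hb.aemeasurable,
    lintegral_eq_lintegral_meas_lt _ (.of_forall hc0) hc.aemeasurable]
  rw [← lintegral_const_mul' _ _ ENNReal.ofReal_ne_top, ← lintegral_const_mul' _ _ ENNReal.ofReal_ne_top]
  have hmeas : ∀ g : ℝ → ℝ, Measurable fun t : ℝ => volume {x | t < g x} := by
    intro g
    apply Antitone.measurable
    intro t t' htt'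
    exact measure_mono (fun x hx => lt_of_le_of_lt htt' hx)
  rw [← lintegral_add_left ((hmeas a).const_mul _)]
  refine setLIntegral_mono (hmeas c) ?_
  intro t ht
  have ht : 0 < t := ht
  rcases lt_or_ge t 1 with h1 | h1
  · refine bm1_l (measurableSet_lt measurable_const ha) (measurableSet_lt measurable_const hb)
      (ha2 t h1) (hb2 t h1) hk hl ?_
    intro x hx y hy
    refine lt_of_lt_of_le ?_ (h x y)
    calc t = t ^ k * t ^ l := by rw [← Real.rpow_add ht, hkl, Real.rpow_one]
      _ < _ := mul_lt_mul'' (Real.rpow_lt_rpow ht.le hx hk) (Real.rpow_lt_rpow ht.le hy hl)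
        (by positivity) (by positivity)
  · have e1 : {x | t < a x} = ∅ := by
      ext x; simp; exact (ha1 x).trans h1
    have e2 : {x | t < b x} = ∅ := by
      ext x; simp; exact (hb1 x).trans h1
    simp [e1, e2]

lemma pl1 {k l : ℝ} (hk : 0 < k) (hl : 0 < l) (hkl : k + l = 1) {a b c : ℝ → ℝ}
    (ha : Measurable a) (hb : Measurable b) (hc : Measurable c)
    (ha0 : ∀ x, 0 ≤ a x) (hb0 : ∀ x, 0 ≤ b x) (hc0 : ∀ x, 0 ≤ c x)
    {M : ℝ} (ha1 : ∀ x, a x ≤ M) (hb1 : ∀ x, b x ≤ M)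
    (h : ∀ s t, a s ^ k * b t ^ l ≤ c (k * s + l * t)) :
    (∫⁻ x, ENNReal.ofReal (a x)) ^ k * (∫⁻ x, ENNReal.ofReal (b x)) ^ l
      ≤ ∫⁻ x, ENNReal.ofReal (c x) := by
  have hbdd : ∀ g : ℝ → ℝ, (∀ x, g x ≤ M) → BddAbove (range g) := by
    rintro g hg; exact ⟨M, by rintro _ ⟨x, rfl⟩; exact hg x⟩
  have hz : ∀ g : ℝ → ℝ, (∀ x, 0 ≤ g x) → (∀ x, g x ≤ M) → ¬ (0 < ⨆ x, g x) →
      ∫⁻ x, ENNReal.ofReal (g x) = 0 := by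
    intro g h0 h1 h2
    have : ∀ x, g x = 0 := fun x =>
      le_antisymm ((le_ciSup (hbdd g h1) x).trans (not_lt.1 h2)) (h0 x)
    simp [this]
  by_cases hα : 0 < ⨆ x, a x
  swap
  · rw [hz a ha0 ha1 hα, ENNReal.zero_rpow_of_pos hk]; simp
  by_cases hβ : 0 < ⨆ x, b x
  swap
  · rw [hz b hb0 hb1 hβ, ENNReal.zero_rpow_of_pos hl]; simp
  set α := ⨆ x, a x with hαd
  set β := ⨆ x, b x with hβd
  have hγ : 0 < α ^ k * β ^ l := by positivity
  have key := pl1_norm hk hl hkl (a := fun x => a x / α) (b := fun x => b x / β)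
    (c := fun x => c x / (α ^ k * β ^ l)) (ha.div_const _) (hb.div_const _) (hc.div_const _)
    (fun x => div_nonneg (ha0 x) hα.le) (fun x => div_nonneg (hb0 x) hβ.le)
    (fun x => div_nonneg (hc0 x) hγ.le)
    (fun x => (div_le_one hα).2 (le_ciSup (hbdd a ha1) x))
    (fun x => (div_le_one hβ).2 (le_ciSup (hbdd b hb1) x))
    (fun t ht => by
      obtain ⟨x, hx⟩ := exists_lt_of_lt_ciSup (f := a) (b := t * α) (by rw [← hαd]; nlinarith)
      exact ⟨x, (lt_div_iff₀ hα).2 hx⟩)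
    (fun t ht => by
      obtain ⟨x, hx⟩ := exists_lt_of_lt_ciSup (f := b) (b := t * β) (by rw [← hβd]; nlinarith)
      exact ⟨x, (lt_div_iff₀ hβ).2 hx⟩)
    (fun s t => by
      rw [Real.div_rpow (ha0 s) hα.le, Real.div_rpow (hb0 t) hβ.le, div_mul_div_comm]
      gcongr
      exact h s t)
  have hdiv : ∀ (g : ℝ → ℝ) (y : ℝ), 0 < y → ∫⁻ x, ENNReal.ofReal (g x / y) =
      (∫⁻ x, ENNReal.ofReal (g x)) / ENNReal.ofReal y := by
    intro g y hy
    simp_rw [ENNReal.ofReal_div_of_pos hy, div_eq_mul_inv]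
    rw [lintegral_mul_const' _ _ (by simp [hy])]
  rw [hdiv _ _ hα, hdiv _ _ hβ, hdiv _ _ hγ] at key
  have amgm : ∀ x y : ENNReal, x ^ k * y ^ l ≤ ENNReal.ofReal k * x + ENNReal.ofReal l * y := by
    intro x y
    rcases eq_or_ne x ⊤ with rfl | hx
    · simp [ENNReal.mul_top, hk]
    rcases eq_or_ne y ⊤ with rfl | hy
    · simp [ENNReal.mul_top, hl]
    lift x to NNReal using hx
    lift y to NNReal using hy
    have := Real.geom_mean_le_arith_mean2_weighted hk.le hl.le x.2 y.2 hkl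
    rw [← ENNReal.ofReal_coe_nnreal, ← ENNReal.ofReal_coe_nnreal, ENNReal.ofReal_rpow_of_nonneg x.coe_nonneg hk.le,
      ENNReal.ofReal_rpow_of_nonneg y.coe_nonneg hl.le, ← ENNReal.ofReal_mul (by positivity), ← ENNReal.ofReal_mul hk.le,
      ← ENNReal.ofReal_mul hl.le, ← ENNReal.ofReal_add (by positivity) (by positivity)]
    exact ENNReal.ofReal_le_ofReal this
  have k2 := (amgm _ _).trans key
  rw [ENNReal.div_rpow_of_nonneg _ _ hk.le, ENNReal.div_rpow_of_nonneg _ _ hl.le,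
    ENNReal.ofReal_mul (by positivity), ← ENNReal.ofReal_rpow_of_pos hα, ← ENNReal.ofReal_rpow_of_pos hβ] at k2
  set X := ENNReal.ofReal α ^ k
  set Y := ENNReal.ofReal β ^ l
  have hX0 : X ≠ 0 := by simp [X, hα, hk, hk.le, ENNReal.rpow_eq_zero_iff]
  have hY0 : Y ≠ 0 := by simp [Y, hβ, hl, hl.le, ENNReal.rpow_eq_zero_iff]
  have hX1 : X ≠ ⊤ := ENNReal.rpow_ne_top_of_nonneg hk.le (by simp)
  have hY1 : Y ≠ ⊤ := ENNReal.rpow_ne_top_of_nonneg hl.le (by simp)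
  have e : ∀ U V : ENNReal, U / X * (V / Y) = (U * V) / (X * Y) := by
    intro U V
    rw [div_eq_mul_inv, div_eq_mul_inv, div_eq_mul_inv, ENNReal.mul_inv (Or.inl hX0) (Or.inl hX1)]
    ring
  rw [e] at k2
  have h0 := mul_ne_zero hX0 hY0
  have h1 := ENNReal.mul_ne_top hX1 hY1
  have k3 := mul_le_mul_left k2 (X * Y)
  rwa [ENNReal.div_mul_cancel h0 h1, ENNReal.div_mul_cancel h0 h1] at k3


open MeasureTheory Metric Set Real

lemma bm_step {F : Type*} [NormedAddCommGroup F] [NormedSpace ℝ F] [MeasureSpace F] [BorelSpace F]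
    [SecondCountableTopology F] [ProperSpace F]
    [IsFiniteMeasureOnCompacts (volume : Measure F)] [SigmaFinite (volume : Measure F)]
    {k l : ℝ} (hk : 0 < k) (hl : 0 < l) (hkl : k + l = 1)
    (ih : ∀ A B C : Set F, IsOpen A → IsOpen B → IsOpen C → Bornology.IsBounded A →
      Bornology.IsBounded B → Bornology.IsBounded C → (∀ a ∈ A, ∀ b ∈ B, k • a + l • b ∈ C) →
      volume A ^ k * volume B ^ l ≤ volume C)
    (A B C : Set (ℝ × F)) (hA : IsOpen A) (hB : IsOpen B) (hC : IsOpen C)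
    (hA' : Bornology.IsBounded A) (hB' : Bornology.IsBounded B) (hC' : Bornology.IsBounded C)
    (h : ∀ a ∈ A, ∀ b ∈ B, k • a + l • b ∈ C) :
    volume A ^ k * volume B ^ l ≤ volume C := by
  have hsec : ∀ S : Set (ℝ × F), IsOpen S → ∀ s, IsOpen (Prod.mk s ⁻¹' S) := fun S hS s =>
    hS.preimage (by fun_prop)
  have hsecb : ∀ S : Set (ℝ × F), Bornology.IsBounded S → ∃ r, ∀ s, Prod.mk s ⁻¹' S ⊆ closedBall 0 r := by
    intro S hS
    obtain ⟨r, hr⟩ := hS.subset_closedBall 0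
    refine ⟨r, fun s x hx => ?_⟩
    have := hr hx
    rw [mem_closedBall_zero_iff] at this ⊢
    exact (norm_snd_le (s, x)).trans this
  have hfin : ∀ S : Set (ℝ × F), Bornology.IsBounded S → ∀ s, volume (Prod.mk s ⁻¹' S) ≠ ⊤ := by
    intro S hS s
    obtain ⟨r, hr⟩ := hsecb S hS
    exact ((measure_mono (hr s)).trans_lt measure_closedBall_lt_top).ne
  have hvol : ∀ S : Set (ℝ × F), IsOpen S → Bornology.IsBounded S →
      volume S = ∫⁻ s, ENNReal.ofReal (volume (Prod.mk s ⁻¹' S)).toReal := by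
    intro S hS hS'
    simp_rw [fun s => ENNReal.ofReal_toReal (hfin S hS' s)]
    rw [Measure.volume_eq_prod, Measure.prod_apply hS.measurableSet]
  have hmeas : ∀ S : Set (ℝ × F), IsOpen S → Measurable fun s => (volume (Prod.mk s ⁻¹' S)).toReal :=
    fun S hS => (measurable_measure_prodMk_left hS.measurableSet).ennreal_toReal
  obtain ⟨r1, h1⟩ := hsecb A hA'
  obtain ⟨r2, h2⟩ := hsecb B hB'
  rw [hvol A hA hA', hvol B hB hB', hvol C hC hC']
  refine pl1 hk hl hkl (hmeas A hA) (hmeas B hB) (hmeas C hC) (fun _ => ENNReal.toReal_nonneg)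
    (fun _ => ENNReal.toReal_nonneg) (fun _ => ENNReal.toReal_nonneg)
    (M := (volume (closedBall (0:F) (max r1 r2))).toReal) ?_ ?_ ?_
  · intro s
    exact ENNReal.toReal_mono measure_closedBall_lt_top.ne
      (measure_mono ((h1 s).trans (closedBall_subset_closedBall (le_max_left _ _))))
  · intro s
    exact ENNReal.toReal_mono measure_closedBall_lt_top.ne
      (measure_mono ((h2 s).trans (closedBall_subset_closedBall (le_max_right _ _))))
  · intro s t
    rw [ENNReal.toReal_rpow, ENNReal.toReal_rpow, ← ENNReal.toReal_mul]
    refine ENNReal.toReal_mono (hfin C hC' _) ?_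
    obtain ⟨r3, h3⟩ := hsecb C hC'
    refine ih _ _ _ (hsec A hA s) (hsec B hB t) (hsec C hC _) (isBounded_closedBall.subset (h1 s))
      (isBounded_closedBall.subset (h2 t)) (isBounded_closedBall.subset (h3 _)) ?_
    intro a ha b hb
    have := h _ ha _ hb
    simpa using this

lemma bm_pi {k l : ℝ} (hk : 0 < k) (hl : 0 < l) (hkl : k + l = 1) (n : ℕ) :
    ∀ A B C : Set (Fin n → ℝ), IsOpen A → IsOpen B → IsOpen C → Bornology.IsBounded A →
      Bornology.IsBounded B → Bornology.IsBounded C → (∀ a ∈ A, ∀ b ∈ B, k • a + l • b ∈ C) →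
      volume A ^ k * volume B ^ l ≤ volume C := by
  induction n with
  | zero =>
    intro A B C _ _ _ _ _ _ h
    rcases A.eq_empty_or_nonempty with rfl | ⟨a, ha⟩
    · simp [hk]
    rcases B.eq_empty_or_nonempty with rfl | ⟨b, hb⟩
    · simp [hl]
    have hA : A = univ := Subsingleton.eq_univ_of_nonempty ⟨a, ha⟩
    have hB : B = univ := Subsingleton.eq_univ_of_nonempty ⟨b, hb⟩
    have hC : C = univ := Subsingleton.eq_univ_of_nonempty ⟨_, h a ha b hb⟩
    subst hA hB hC
    simp [volume_pi, Measure.pi_of_empty]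
  | succ n ih =>
    intro A B C hA hB hC hA' hB' hC' h
    have mp := (volume_preserving_piFinSuccAbove (fun _ : Fin (n + 1) => ℝ) 0).symm
    set e := (MeasurableEquiv.piFinSuccAbove (fun _ : Fin (n + 1) => ℝ) 0).symm with he
    have hev : ∀ x, e x = Fin.cons x.1 x.2 := by
      intro x
      simp [he, MeasurableEquiv.piFinSuccAbove, Fin.insertNthEquiv]
    have hcont : Continuous e := by
      have : (e : ℝ × (Fin n → ℝ) → _) = fun x => Fin.cons x.1 x.2 := funext hev
      rw [this]
      exact Continuous.finCons (by fun_prop) (by fun_prop)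
    have hb : ∀ S : Set (Fin (n+1) → ℝ), Bornology.IsBounded S → Bornology.IsBounded (e ⁻¹' S) := by
      intro S hS
      obtain ⟨r, hr⟩ := hS.subset_closedBall 0
      rw [isBounded_iff_forall_norm_le]
      refine ⟨r, fun x hx => ?_⟩
      have h1 := hr hx
      rw [mem_closedBall_zero_iff, hev] at h1
      have hr0 : 0 ≤ r := (norm_nonneg _).trans h1
      rw [pi_norm_le_iff_of_nonneg hr0] at h1
      rw [Prod.norm_def]
      refine max_le (by simpa using h1 0) ?_
      rw [pi_norm_le_iff_of_nonneg hr0]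
      intro i
      simpa using h1 i.succ
    have hv : ∀ S : Set (Fin (n+1) → ℝ), volume (e ⁻¹' S) = volume S := fun S =>
      mp.measure_preimage_equiv S
    rw [← hv A, ← hv B, ← hv C]
    refine bm_step hk hl hkl ih _ _ _ (hA.preimage hcont) (hB.preimage hcont) (hC.preimage hcont)
      (hb _ hA') (hb _ hB') (hb _ hC') ?_
    intro a ha b hb
    have := h _ ha _ hb
    rw [mem_preimage]
    convert this using 1
    simp only [hev]
    ext i
    refine Fin.cases ?_ (fun j => ?_) i <;> simp

lemma bm_euc {k l : ℝ} (hk : 0 < k) (hl : 0 < l) (hkl : k + l = 1) {n : ℕ}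
    {A B C : Set (EuclideanSpace ℝ (Fin n))} (hA : IsOpen A) (hB : IsOpen B) (hC : IsOpen C)
    (hA' : Bornology.IsBounded A) (hB' : Bornology.IsBounded B) (hC' : Bornology.IsBounded C)
    (h : ∀ a ∈ A, ∀ b ∈ B, k • a + l • b ∈ C) :
      volume A ^ k * volume B ^ l ≤ volume C := by
  have mp := (PiLp.volume_preserving_toLp (Fin n))
  have hcont : Continuous (WithLp.toLp 2 : (Fin n → ℝ) → EuclideanSpace ℝ (Fin n)) := by fun_prop
  have hb : ∀ S : Set (EuclideanSpace ℝ (Fin n)), Bornology.IsBounded S →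
      Bornology.IsBounded ((WithLp.toLp 2 : (Fin n → ℝ) → EuclideanSpace ℝ (Fin n)) ⁻¹' S) := by
    intro S hS
    exact (PiLp.antilipschitzWith_toLp 2 (fun _ : Fin n => ℝ)).isBounded_preimage hS
  rw [← mp.measure_preimage hA.measurableSet.nullMeasurableSet,
    ← mp.measure_preimage hB.measurableSet.nullMeasurableSet,
    ← mp.measure_preimage hC.measurableSet.nullMeasurableSet]
  refine bm_pi hk hl hkl n _ _ _ (hA.preimage hcont) (hB.preimage hcont) (hC.preimage hcont)
      (hb _ hA') (hb _ hB') (hb _ hC') ?_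
  intro a ha b hb
  exact h _ ha _ hb

open scoped Pointwise in
/-- Brunn-Minkowski, phrased with balls. -/
lemma bm_ball {n : ℕ} {A B C : Set (EuclideanSpace ℝ (Fin n))} (hA : IsOpen A) (hB : IsOpen B)
    (hC : IsOpen C)
    (hA' : Bornology.IsBounded A) (hB' : Bornology.IsBounded B) (hC' : Bornology.IsBounded C)
    (h : ∀ a ∈ A, ∀ b ∈ B, a + b ∈ C) {a b : ℝ} (ha : 0 < a) (hb : 0 < b)
    (hAv : volume A = volume (ball (0 : EuclideanSpace ℝ (Fin n)) a))
    (hBv : volume B = volume (ball (0 : EuclideanSpace ℝ (Fin n)) b)) :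
    volume (ball (0 : EuclideanSpace ℝ (Fin n)) (a + b)) ≤ volume C := by
  set V := volume (ball (0 : EuclideanSpace ℝ (Fin n)) (a + b))
  have hs : 0 < a + b := by positivity
  have sc : ∀ (S : Set (EuclideanSpace ℝ (Fin n))) (x : ℝ), 0 < x → 
      volume S = volume (ball (0 : EuclideanSpace ℝ (Fin n)) x) →
      volume (((a + b) / x) • S) = V := by
    intro S x hx hS
    rw [Measure.addHaar_smul, hS, ← Measure.addHaar_smul, _root_.smul_ball (by positivity), smul_zero,
      Real.norm_of_nonneg (by positivity), div_mul_cancel₀ _ hx.ne']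
  have := bm_euc (k := a / (a + b)) (l := b / (a + b)) (by positivity) (by positivity)
    (by field_simp) (A := ((a + b) / a) • A) (B := ((a + b) / b) • B) (C := C)
    (hA.smul₀ (by positivity)) (hB.smul₀ (by positivity)) hC (hA'.smul₀ _) (hB'.smul₀ _) hC' (by
      rintro _ ⟨x, hx, rfl⟩ _ ⟨y, hy, rfl⟩
      simp only [smul_smul]
      have e1 : a / (a + b) * ((a + b) / a) = 1 := by field_simp
      have e2 : b / (a + b) * ((a + b) / b) = 1 := by field_simp
      rw [e1, e2, one_smul, one_smul]
      exact h x hx y hy)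
  rw [sc A a ha hAv, sc B b hb hBv, ← ENNReal.rpow_add_of_nonneg _ _ (by positivity) (by positivity),
    ← add_div, div_self hs.ne', ENNReal.rpow_one] at this
  exact this

lemma exists_ball_volume {n : ℕ} (hn : 0 < n) {V : ENNReal} (hV : V ≠ ⊤) :
    ∃ a : ℝ, 0 ≤ a ∧ volume (ball (0 : EuclideanSpace ℝ (Fin n)) a) = V := by
  have : Nonempty (Fin n) := ⟨⟨0, hn⟩⟩
  set w := volume (ball (0 : EuclideanSpace ℝ (Fin n)) 1)
  have hw0 : w ≠ 0 := (measure_ball_pos _ _ one_pos).ne'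
  have hw1 : w ≠ ⊤ := measure_ball_lt_top.ne
  refine ⟨(V / w).toReal ^ (1 / (n:ℝ)), by positivity, ?_⟩
  rw [Measure.addHaar_ball _ _ (by positivity), finrank_euclideanSpace_fin, ← Real.rpow_natCast,
    ← Real.rpow_mul (by positivity), one_div, inv_mul_cancel₀ (by positivity), Real.rpow_one,
    ENNReal.ofReal_toReal (ENNReal.div_ne_top hV hw0), ENNReal.div_mul_cancel hw0 hw1]

lemma ball_volume_lt_iff {n : ℕ} (hn : 0 < n) {a b : ℝ} (hb : 0 ≤ b) :
    volume (ball (0 : EuclideanSpace ℝ (Fin n)) b) < volume (ball (0 : EuclideanSpace ℝ (Fin n)) a) ↔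
      b < a := by
  have : Nonempty (Fin n) := ⟨⟨0, hn⟩⟩
  constructor
  · intro h
    by_contra! hab
    exact absurd (measure_mono (ball_subset_ball hab)) (not_le.2 h)
  · intro h
    rw [Measure.addHaar_ball _ _ hb, Measure.addHaar_ball _ _ (hb.trans h.le)]
    have hw0 : volume (ball (0 : EuclideanSpace ℝ (Fin n)) 1) ≠ 0 := (measure_ball_pos _ _ one_pos).ne'
    have hw1 : volume (ball (0 : EuclideanSpace ℝ (Fin n)) 1) ≠ ⊤ := measure_ball_lt_top.ne
    rw [ENNReal.mul_lt_mul_iff_left hw0 hw1]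
    apply ENNReal.ofReal_lt_ofReal_iff_of_nonneg (by positivity) |>.2
    rw [finrank_euclideanSpace_fin]
    exact pow_lt_pow_left₀ h hb hn.ne'


open MeasureTheory Metric Set Real

lemma dl_pow {p : ℝ} (hp : 1 < p) (D : ℝ) :
    ∫⁻ τ in Ioi (0:ℝ), ENNReal.ofReal (p * (p - 1) * τ ^ (p - 2)) * ENNReal.ofReal (D - τ)
      = ENNReal.ofReal D ^ p := by
  rcases le_or_gt D 0 with hD | hD
  · rw [ENNReal.ofReal_of_nonpos hD, ENNReal.zero_rpow_of_pos (by linarith)]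
    rw [setLIntegral_congr_fun (g := fun _ => 0) measurableSet_Ioi]
    · simp
    · intro τ hτ
      have : D - τ ≤ 0 := by have : 0 < τ := hτ; linarith
      simp [ENNReal.ofReal_of_nonpos this]
  · have hsplit : Ioi (0:ℝ) = Ioc 0 D ∪ Ioi D := (Ioc_union_Ioi_eq_Ioi hD.le).symm
    rw [hsplit, lintegral_union measurableSet_Ioi (by
      rw [Set.disjoint_left]; rintro x ⟨_, h1⟩ h2; exact absurd h1 (not_le.2 h2))]
    have z : ∫⁻ τ in Ioi D, ENNReal.ofReal (p * (p - 1) * τ ^ (p - 2)) * ENNReal.ofReal (D - τ) = 0 := by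
      rw [setLIntegral_congr_fun (g := fun _ => 0) measurableSet_Ioi]
      · simp
      · intro τ hτ
        have : D - τ ≤ 0 := by have : D < τ := hτ; linarith
        simp [ENNReal.ofReal_of_nonpos this]
    rw [z, add_zero]
    have i1 : IntervalIntegrable (fun τ : ℝ => τ ^ (p - 2)) volume 0 D :=
      intervalIntegral.intervalIntegrable_rpow' (by linarith)
    have i2 : IntervalIntegrable (fun τ : ℝ => τ ^ (p - 1)) volume 0 D :=
      intervalIntegral.intervalIntegrable_rpow' (by linarith)
    have i3 : IntervalIntegrable (fun τ : ℝ => p * (p - 1) * D * τ ^ (p - 2) - p * (p - 1) * τ ^ (p - 1))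
      volume 0 D := (i1.const_mul _).sub (i2.const_mul _)
    have hcongr : ∀ τ ∈ Ioc 0 D, ENNReal.ofReal (p * (p - 1) * τ ^ (p - 2)) * ENNReal.ofReal (D - τ)
        = ENNReal.ofReal (p * (p - 1) * D * τ ^ (p - 2) - p * (p - 1) * τ ^ (p - 1)) := by
      intro τ hτ
      rw [← ENNReal.ofReal_mul (by have := hτ.1; have : 0 < p - 1 := by linarith
                                   positivity)]
      congr 1
      have : τ ^ (p - 1) = τ ^ (p - 2) * τ := by
        rw [← Real.rpow_add_one hτ.1.ne']; congr 1; ring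
      rw [this]; ring
    rw [setLIntegral_congr_fun measurableSet_Ioc hcongr, ← ofReal_integral_eq_lintegral_ofReal i3.1]
    · rw [← intervalIntegral.integral_of_le hD.le, intervalIntegral.integral_sub (i1.const_mul _) (i2.const_mul _),
        intervalIntegral.integral_const_mul, intervalIntegral.integral_const_mul,
        integral_rpow (Or.inl (by linarith)), integral_rpow (Or.inl (by linarith)),
        ENNReal.ofReal_rpow_of_pos hD]
      congr 1
      have e1 : p - 2 + 1 = p - 1 := by ring
      have e2 : p - 1 + 1 = p := by ring
      rw [e1, e2, Real.zero_rpow (by linarith), Real.zero_rpow (by linarith)]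
      have : D ^ p = D ^ (p - 1) * D := by
        rw [← Real.rpow_add_one hD.ne']; congr 1; ring
      rw [this]
      have h1 : p - 1 ≠ 0 := by linarith
      have h2 : p ≠ 0 := by linarith
      field_simp
      ring
    · filter_upwards [ae_restrict_mem measurableSet_Ioc] with τ hτ
      have : p * (p - 1) * D * τ ^ (p - 2) - p * (p - 1) * τ ^ (p - 1) =
          p * (p - 1) * τ ^ (p - 2) * (D - τ) := by
        have : τ ^ (p - 1) = τ ^ (p - 2) * τ := by
          rw [← Real.rpow_add_one hτ.1.ne']; congr 1; ring
        rw [this]; ring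
      have h0 := hτ.1
      have h1 : 0 ≤ D - τ := by linarith [hτ.2]
      have h2 : 0 < p - 1 := by linarith
      simp only [Pi.zero_apply]
      rw [this]; positivity

lemma dl_lintegral {X : Type*} [MeasurableSpace X] (μ : Measure X) [SigmaFinite μ] {a b : X → ℝ}
    (ha : Measurable a) (hb : Measurable b) (ha0 : ∀ x, 0 ≤ a x) {p : ℝ} (hp : 1 < p) :
    ∫⁻ x, ENNReal.ofReal (b x - a x) ^ p ∂μ = ∫⁻ τ in Ioi (0:ℝ),
      ENNReal.ofReal (p * (p - 1) * τ ^ (p - 2)) *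
        ∫⁻ s in Ioi (0:ℝ), μ {x | a x ≤ s ∧ s + τ < b x} := by
  have inner : ∀ τ : ℝ, ∫⁻ x, ENNReal.ofReal (b x - a x - τ) ∂μ =
      ∫⁻ s in Ioi (0:ℝ), μ {x | a x ≤ s ∧ s + τ < b x} := by
    intro τ
    have e1 : ∀ x, ENNReal.ofReal (b x - a x - τ) =
        ∫⁻ s in Ioi (0:ℝ), {z : X × ℝ | a z.1 ≤ z.2 ∧ z.2 + τ < b z.1}.indicator 1 (x, s) := by
      intro x
      have hset : (fun s : ℝ => {z : X × ℝ | a z.1 ≤ z.2 ∧ z.2 + τ < b z.1}.indicator (1 : X × ℝ → ENNReal) (x, s)) =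
          (Ico (a x) (b x - τ)).indicator 1 := by
        funext s
        by_cases h : a x ≤ s ∧ s + τ < b x
        · rw [indicator_of_mem (show (x, s) ∈ {z : X × ℝ | a z.1 ≤ z.2 ∧ z.2 + τ < b z.1} from h),
            indicator_of_mem (show s ∈ Ico (a x) (b x - τ) from ⟨h.1, lt_sub_iff_add_lt.2 h.2⟩)]; rfl
        · rw [indicator_of_notMem (show (x, s) ∉ {z : X × ℝ | a z.1 ≤ z.2 ∧ z.2 + τ < b z.1} from h),
            indicator_of_notMem (show s ∉ Ico (a x) (b x - τ) from fun h' => h ⟨h'.1, lt_sub_iff_add_lt.1 h'.2⟩)]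
      rw [hset, lintegral_indicator_one measurableSet_Ico, Measure.restrict_apply measurableSet_Ico]
      have : (Ico (a x) (b x - τ) ∩ Ioi 0 : Set ℝ) =ᵐ[volume] Ico (a x) (b x - τ) := by
        have h1 : (Ico (a x) (b x - τ) ∩ Ici 0 : Set ℝ) = Ico (a x) (b x - τ) :=
          inter_eq_left.2 (fun s hs => (ha0 x).trans hs.1)
        have h2 := (ae_eq_refl (Ico (a x) (b x - τ))).inter (Ioi_ae_eq_Ici (μ := volume) (a := (0:ℝ)))
        rw [h1] at h2
        exact h2
      rw [measure_congr this, Real.volume_Ico]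
      congr 1; ring
    have hms : MeasurableSet {z : X × ℝ | a z.1 ≤ z.2 ∧ z.2 + τ < b z.1} :=
      (measurableSet_le (ha.comp measurable_fst) measurable_snd).inter
        (measurableSet_lt (measurable_snd.add_const _) (hb.comp measurable_fst))
    simp_rw [e1]
    rw [lintegral_lintegral_swap (f := fun x s => {z : X × ℝ | a z.1 ≤ z.2 ∧ z.2 + τ < b z.1}.indicator 1 (x, s))
      ((measurable_one.indicator hms).aemeasurable)]
    refine lintegral_congr (fun s => ?_)
    have : (fun x : X => {z : X × ℝ | a z.1 ≤ z.2 ∧ z.2 + τ < b z.1}.indicator (1 : X × ℝ → ENNReal) (x, s)) =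
          ({x | a x ≤ s ∧ s + τ < b x}).indicator 1 := by
      funext x
      by_cases h : a x ≤ s ∧ s + τ < b x
      · rw [indicator_of_mem (show (x, s) ∈ {z : X × ℝ | a z.1 ≤ z.2 ∧ z.2 + τ < b z.1} from h),
            indicator_of_mem (show x ∈ {x | a x ≤ s ∧ s + τ < b x} from h)]; rfl
      · rw [indicator_of_notMem (show (x, s) ∉ {z : X × ℝ | a z.1 ≤ z.2 ∧ z.2 + τ < b z.1} from h),
            indicator_of_notMem (show x ∉ {x | a x ≤ s ∧ s + τ < b x} from h)]
    rw [this, lintegral_indicator_one]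
    exact (measurableSet_le ha measurable_const).inter (measurableSet_lt measurable_const hb)
  simp_rw [← inner, ← dl_pow hp]
  rw [lintegral_lintegral_swap]
  · refine lintegral_congr (fun τ => ?_)
    rw [lintegral_const_mul' _ _ ENNReal.ofReal_ne_top]
  · apply Measurable.aemeasurable
    have h1 : Measurable fun z : X × ℝ => a z.1 := ha.comp measurable_fst
    have h2 : Measurable fun z : X × ℝ => b z.1 := hb.comp measurable_fst
    have h3 : Measurable fun z : X × ℝ => z.2 := measurable_snd
    exact ((h3.pow_const _).const_mul _).ennreal_ofReal.mul ((h2.sub h1).sub h3).ennreal_ofReal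

/-- Rearrangement contraction. -/
lemma contraction {X : Type*} [MeasurableSpace X] (μ : Measure X) [SigmaFinite μ] {a b a' b' : X → ℝ}
    (ha : Measurable a) (hb : Measurable b) (ha0 : ∀ x, 0 ≤ a x)
    (ha' : Measurable a') (hb' : Measurable b') (ha0' : ∀ x, 0 ≤ a' x)
    (e1 : ∀ t, 0 ≤ t → μ {x | t < a' x} = μ {x | t < a x})
    (e2 : ∀ t, 0 ≤ t → μ {x | t < b' x} = μ {x | t < b x})
    (hfin : ∀ t, 0 ≤ t → μ {x | t < a x} ≠ ⊤)
    (nest : ∀ s t, {x | s < a' x} ⊆ {x | t < b' x} ∨ {x | t < b' x} ⊆ {x | s < a' x})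
    {p : ℝ} (hp : 1 < p) :
    ∫⁻ x, ENNReal.ofReal (b' x - a' x) ^ p ∂μ ≤ ∫⁻ x, ENNReal.ofReal (b x - a x) ^ p ∂μ := by
  rw [dl_lintegral μ ha hb ha0 hp, dl_lintegral μ ha' hb' ha0' hp]
  refine setLIntegral_mono' measurableSet_Ioi (fun τ hτ => ?_)
  refine mul_le_mul_right (setLIntegral_mono' (measurableSet_Ioi (a := (0:ℝ))) (fun s hs => ?_)) _
  have hs : 0 < s := hs
  have hτ : 0 < τ := hτ
  have d : ∀ f g : X → ℝ, {x | f x ≤ s ∧ s + τ < g x} = {x | s + τ < g x} \ {x | s < f x} := by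
    intro f g; ext x; simp [and_comm]
  rw [d, d]
  have low : μ {x | s + τ < b x} - μ {x | s < a x} ≤ μ ({x | s + τ < b x} \ {x | s < a x}) :=
    le_measure_sdiff
  refine le_trans ?_ low
  rcases nest s (s + τ) with h | h
  · rw [measure_sdiff h (measurableSet_lt measurable_const ha').nullMeasurableSet
      (by rw [e1 s hs.le]; exact hfin s hs.le), e1 s hs.le, e2 _ (by positivity)]
  · rw [sdiff_eq_empty.2 h]; simp

noncomputable def rearr {N : ℕ} (u : EuclideanSpace ℝ (Fin N) → ℝ) (r : ℝ) : ℝ :=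
  sInf {t | 0 ≤ t ∧ volume {x | t < u x} ≤ volume (ball (0 : EuclideanSpace ℝ (Fin N)) r)}

section
variable {N : ℕ} {u : EuclideanSpace ℝ (Fin N) → ℝ}

lemma rearr_nonneg (r : ℝ) : 0 ≤ rearr u r := Real.sInf_nonneg (fun _ h => h.1)

lemma lt_rearr_iff {M : ℝ} (hM : ∀ x, u x ≤ M) {t : ℝ} (ht : 0 ≤ t) (r : ℝ) :
    t < rearr u r ↔ volume (ball (0 : EuclideanSpace ℝ (Fin N)) r) < volume {x | t < u x} := by
  constructor
  · intro h
    by_contra! hc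
    have hb : BddBelow {t | 0 ≤ t ∧ volume {x | t < u x} ≤ volume (ball (0 : EuclideanSpace ℝ (Fin N)) r)} :=
      ⟨0, fun _ h => h.1⟩
    exact absurd (csInf_le hb ⟨ht, hc⟩) (not_le.2 h)
  · intro h
    have hU : {x | t < u x} = ⋃ n : ℕ, {x | t + 1 / ((n:ℝ) + 1) < u x} := by
      ext x
      simp only [mem_ofPred_eq, mem_iUnion]
      constructor
      · intro hx
        obtain ⟨n, hn⟩ := exists_nat_one_div_lt (sub_pos.2 hx)
        exact ⟨n, by linarith⟩
      · rintro ⟨n, hn⟩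
        have : 0 < 1 / ((n:ℝ) + 1) := by positivity
        linarith
    have hmono : Monotone fun n : ℕ => {x | t + 1 / ((n:ℝ) + 1) < u x} := by
      intro n m hnm x hx
      have : 1 / ((m:ℝ) + 1) ≤ 1 / ((n:ℝ) + 1) := by gcongr
      simp only [mem_ofPred_eq] at hx ⊢
      linarith
    rw [hU, hmono.measure_iUnion, lt_iSup_iff] at h
    obtain ⟨n, hn⟩ := h
    have hpos : 0 < 1 / ((n:ℝ) + 1) := by positivity
    refine lt_of_lt_of_le (show t < t + 1 / ((n:ℝ) + 1) by linarith) (le_csInf ⟨max M 0, le_max_right _ _, ?_⟩ ?_)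
    · have : {x | max M 0 < u x} = ∅ := by
        ext x; simp; intro h; exact absurd (hM x) (not_le.2 h)
      rw [this]; simp
    · rintro s ⟨hs0, hs⟩
      by_contra! hc
      refine absurd (hn.trans_le (le_trans (measure_mono ?_) hs)) (lt_irrefl _)
      intro x hx
      exact hc.trans hx

lemma rearr_antitone {M : ℝ} (hM : ∀ x, u x ≤ M) : Antitone (rearr u) := by
  intro r s hrs
  by_contra! hc
  have h0 := rearr_nonneg (u := u) r
  rw [lt_rearr_iff hM h0] at hc
  have : ¬ (rearr u r < rearr u r) := lt_irrefl _
  rw [lt_rearr_iff hM h0] at this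
  exact this ((measure_mono (ball_subset_ball hrs)).trans_lt hc)

lemma rearr_level (hN : 0 < N) {M : ℝ} (hM : ∀ x, u x ≤ M) {t : ℝ} (ht : 0 ≤ t)
    (hfin : volume {x | t < u x} ≠ ⊤) :
    volume {x : EuclideanSpace ℝ (Fin N) | t < rearr u ‖x‖} = volume {x | t < u x} := by
  obtain ⟨a, ha, hav⟩ := exists_ball_volume hN hfin
  have : {x : EuclideanSpace ℝ (Fin N) | t < rearr u ‖x‖} = ball 0 a := by
    ext x
    rw [mem_ofPred_eq, lt_rearr_iff hM ht, ← hav, ball_volume_lt_iff hN (norm_nonneg _), mem_ball_zero_iff]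
  rw [this, hav]

lemma rearr_shift (hN : 0 < N) {U : EuclideanSpace ℝ (Fin N) → ℝ} {M : ℝ} (hM : ∀ x, u x ≤ M) {M' : ℝ} (hM' : ∀ x, U x ≤ M')
    (hu : Continuous u) (hb : ∀ t, 0 ≤ t → Bornology.IsBounded {x | t < u x})
    {ε : ℝ} (hε : 0 < ε) {δ : ℝ} (hδ : 0 ≤ δ) (hU : ∀ x y, dist x y < ε → u y ≤ U x + δ) (r : ℝ) :
    rearr u r ≤ rearr U (r + ε) + δ := by
  wlog hr : 0 ≤ r generalizing r
  · have h1 := this 0 le_rfl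
    have h2 : rearr u r = rearr u 0 := by
      unfold rearr
      rw [ball_eq_empty.2 (not_le.1 hr).le, ball_zero]
    rw [h2]
    refine h1.trans ?_
    have := rearr_antitone hM' (show r + ε ≤ 0 + ε by linarith)
    linarith
  by_contra! hc
  set t := rearr U (r + ε) + δ with htd
  have ht0 : 0 ≤ rearr U (r + ε) := rearr_nonneg _
  have ht : 0 ≤ t := by positivity
  have h1 : ¬ (t - δ < rearr U (r + ε)) := by simp [htd]
  rw [lt_rearr_iff hM' (by simpa [htd] using ht0)] at h1
  rw [lt_rearr_iff hM ht] at hc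
  apply h1
  set A := {x | t < u x}
  have hAo : IsOpen A := isOpen_lt continuous_const hu
  have hAb : Bornology.IsBounded A := hb t ht
  obtain ⟨a, ha, hav⟩ := exists_ball_volume hN (hAb.measure_lt_top (μ := volume)).ne
  rw [← hav, ball_volume_lt_iff hN hr] at hc
  have hbm := bm_ball (A := A) (B := ball 0 ε) (C := Metric.thickening ε A) hAo isOpen_ball
    isOpen_thickening hAb isBounded_ball hAb.thickening (by
      intro x hx y hy
      rw [mem_thickening_iff]
      exact ⟨x, hx, by simpa using hy⟩) (hr.trans_lt hc) hε hav.symm rfl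
  refine lt_of_lt_of_le ((ball_volume_lt_iff hN (by positivity)).2 (show r + ε < a + ε by linarith)) (hbm.trans (measure_mono ?_))
  intro x hx
  rw [mem_thickening_iff] at hx
  obtain ⟨y, hy, hxy⟩ := hx
  have := hU x y hxy
  simp only [A, mem_ofPred_eq] at hy ⊢
  linarith
end


open MeasureTheory Metric Set Real

section
variable {N : ℕ}

lemma hsymm_apply (x : ({(0 : EuclideanSpace ℝ (Fin N))}ᶜ : Set _)) :
    (x : EuclideanSpace ℝ (Fin N)) = ((homeomorphUnitSphereProd (EuclideanSpace ℝ (Fin N)) x).2 : ℝ) •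
      ((homeomorphUnitSphereProd (EuclideanSpace ℝ (Fin N)) x).1 : EuclideanSpace ℝ (Fin N)) := by
  have hx : ‖(x : EuclideanSpace ℝ (Fin N))‖ ≠ 0 := norm_ne_zero_iff.2 x.2
  simp [smul_smul, hx]

lemma polar_lintegral (hN : 0 < N) {F : EuclideanSpace ℝ (Fin N) → ENNReal} (hF : Measurable F) :
    ∫⁻ x, F x = ∫⁻ ω, (∫⁻ r in Ioi (0:ℝ), ENNReal.ofReal (r ^ (N - 1)) *
      F (r • (ω : EuclideanSpace ℝ (Fin N)))) ∂(volume : Measure (EuclideanSpace ℝ (Fin N))).toSphere := by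
  have : Nonempty (Fin N) := ⟨⟨0, hN⟩⟩
  have : Nontrivial (EuclideanSpace ℝ (Fin N)) := inferInstance
  set μ : Measure (EuclideanSpace ℝ (Fin N)) := volume with hμ
  have hm : Measurable fun z : sphere (0 : EuclideanSpace ℝ (Fin N)) 1 × Ioi (0:ℝ) =>
      F ((z.2 : ℝ) • (z.1 : EuclideanSpace ℝ (Fin N))) := by
    apply hF.comp
    fun_prop
  calc ∫⁻ x, F x ∂μ = ∫⁻ x : ({(0)}ᶜ : Set (EuclideanSpace ℝ (Fin N))), F x ∂(μ.comap (↑)) := by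
        rw [lintegral_subtype_comap (measurableSet_singleton _).compl F, restrict_compl_singleton]
    _ = ∫⁻ z, F ((z.2 : ℝ) • (z.1 : EuclideanSpace ℝ (Fin N)))
        ∂(μ.toSphere.prod (.volumeIoiPow (N - 1))) := by
        have h := μ.measurePreserving_homeomorphUnitSphereProd
        rw [finrank_euclideanSpace_fin] at h
        rw [← h.lintegral_comp hm]
        refine lintegral_congr (fun x => ?_)
        rw [← hsymm_apply]
    _ = _ := by
        rw [lintegral_prod _ hm.aemeasurable]
        refine lintegral_congr (fun ω => ?_)
        have h1 : Measurable fun r : ℝ => F (r • (ω : EuclideanSpace ℝ (Fin N))) := hF.comp (by fun_prop)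
        rw [Measure.volumeIoiPow]
        refine (lintegral_withDensity_eq_lintegral_mul _ (by fun_prop) (h1.comp measurable_subtype_coe)).trans ?_
        exact lintegral_subtype_comap measurableSet_Ioi
          (fun r : ℝ => ENNReal.ofReal (r ^ (N - 1)) * F (r • (ω : EuclideanSpace ℝ (Fin N))))

lemma polar_integral (hN : 0 < N) {F : EuclideanSpace ℝ (Fin N) → ℝ} (hF : Integrable F) :
    Integrable (fun ω : sphere (0 : EuclideanSpace ℝ (Fin N)) 1 => ∫ r in Ioi (0:ℝ), r ^ (N - 1) *
      F (r • (ω : EuclideanSpace ℝ (Fin N)))) (volume : Measure (EuclideanSpace ℝ (Fin N))).toSphere ∧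
    ∫ x, F x = ∫ ω, (∫ r in Ioi (0:ℝ), r ^ (N - 1) *
      F (r • (ω : EuclideanSpace ℝ (Fin N)))) ∂(volume : Measure (EuclideanSpace ℝ (Fin N))).toSphere := by
  have : Nonempty (Fin N) := ⟨⟨0, hN⟩⟩
  have : Nontrivial (EuclideanSpace ℝ (Fin N)) := inferInstance
  set μ : Measure (EuclideanSpace ℝ (Fin N)) := volume with hμ
  have h := μ.measurePreserving_homeomorphUnitSphereProd
  rw [finrank_euclideanSpace_fin] at h
  set G := fun z : sphere (0 : EuclideanSpace ℝ (Fin N)) 1 × Ioi (0:ℝ) =>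
      F ((z.2 : ℝ) • (z.1 : EuclideanSpace ℝ (Fin N))) with hG
  have hGc : G ∘ (homeomorphUnitSphereProd (EuclideanSpace ℝ (Fin N))) = (fun x : ({(0 : EuclideanSpace ℝ (Fin N))}ᶜ : Set (EuclideanSpace ℝ (Fin N))) => F (x : EuclideanSpace ℝ (Fin N))) := by
    funext x
    simp only [hG, Function.comp]
    rw [← hsymm_apply]
  have hinner : ∀ ω : sphere (0 : EuclideanSpace ℝ (Fin N)) 1, ∫ r, G (ω, r) ∂(Measure.volumeIoiPow (N - 1))
      = ∫ r in Ioi (0:ℝ), r ^ (N - 1) * F (r • (ω : EuclideanSpace ℝ (Fin N))) := by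
    intro ω
    simp only [Measure.volumeIoiPow, ENNReal.ofReal, hG]
    rw [integral_withDensity_eq_integral_smul,
      integral_subtype_comap measurableSet_Ioi
        fun a : ℝ ↦ Real.toNNReal (a ^ (N - 1)) • F (a • (ω : EuclideanSpace ℝ (Fin N))),
      setIntegral_congr_fun measurableSet_Ioi fun x hx ↦ ?_]
    · rw [NNReal.smul_def, Real.coe_toNNReal _ (pow_nonneg hx.out.le _), smul_eq_mul]
    · exact (measurable_subtype_coe.pow_const _).real_toNNReal
  have hGi : Integrable G (μ.toSphere.prod (.volumeIoiPow (N - 1))) := by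
    rw [← h.integrable_comp_emb (Homeomorph.measurableEmbedding _), hGc]
    have := (integrableOn_iff_comap_subtypeVal (μ := μ) (f := F) (measurableSet_singleton (0 : EuclideanSpace ℝ (Fin N))).compl).1
      hF.integrableOn
    exact this
  simp_rw [← hinner]
  refine ⟨hGi.integral_prod_left, ?_⟩
  rw [← integral_prod _ hGi, ← h.integral_comp (Homeomorph.measurableEmbedding _) G]
  calc ∫ x, F x ∂μ = ∫ x : ({(0)}ᶜ : Set (EuclideanSpace ℝ (Fin N))), F x ∂(μ.comap (↑)) := by
        rw [integral_subtype_comap (measurableSet_singleton _).compl F, restrict_compl_singleton]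
    _ = _ := by
        refine integral_congr_ae (Filter.Eventually.of_forall fun x => ?_)
        exact (congrFun hGc x).symm

lemma ae_norm (hN : 0 < N) {P : ℝ → Prop} (h : ∀ᵐ r : ℝ, P r) : ∀ᵐ x : EuclideanSpace ℝ (Fin N), P ‖x‖ := by
  set S := toMeasurable volume {r | ¬ P r} with hS
  have hS0 : volume S = 0 := by rw [hS, measure_toMeasurable]; exact h
  have hSm : MeasurableSet S := measurableSet_toMeasurable _ _
  have hm : MeasurableSet {x : EuclideanSpace ℝ (Fin N) | ‖x‖ ∈ S} := measurable_norm hSm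
  have h0 : volume {x : EuclideanSpace ℝ (Fin N) | ‖x‖ ∈ S} = 0 := by
    rw [← lintegral_indicator_one hm, polar_lintegral hN (measurable_one.indicator hm)]
    apply lintegral_eq_zero_of_ae_eq_zero
    refine Filter.Eventually.of_forall fun ω => ?_
    apply lintegral_eq_zero_of_ae_eq_zero
    have hn : ∀ᵐ r : ℝ, r ∉ S := by
      rw [ae_iff]; simpa using hS0
    filter_upwards [ae_restrict_mem (measurableSet_Ioi (a := (0:ℝ))), ae_restrict_of_ae hn] with r hr hrS
    have h0r : 0 < r := hr
    have hω : ‖(ω : EuclideanSpace ℝ (Fin N))‖ = 1 := by simp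
    rw [indicator_of_notMem, mul_zero]; rfl
    simp only [mem_ofPred_eq, norm_smul, hω, mul_one, Real.norm_of_nonneg h0r.le]
    exact hrS
  rw [ae_iff]
  refine measure_mono_null (fun x hx => ?_) h0
  exact subset_toMeasurable _ _ hx
end


open MeasureTheory Metric Set Real

section
variable {N : ℕ}

lemma symm_step (hN : 0 < N) {p : ℝ} (hp : 1 < p) {v : EuclideanSpace ℝ (Fin N) → ℝ}
    (hv : ContDiff ℝ (⊤ : ℕ∞) v) (hc : HasCompactSupport v) {δ : ℝ} (hδ : 0 < δ) :
    ∃ ε0 > 0, ∀ ε, 0 < ε → ε < ε0 →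
      ∫⁻ x : EuclideanSpace ℝ (Fin N), ENNReal.ofReal ((rearr (fun x => |v x|) (‖x‖ - ε) - rearr (fun x => |v x|) ‖x‖) / ε) ^ p ≤
      ∫⁻ x, ENNReal.ofReal ((cthickening 1 (tsupport v)).indicator (fun x => ‖fderiv ℝ v x‖ + δ) x) ^ p := by
  set g := fun x => ‖fderiv ℝ v x‖ with hg
  have hgcont : Continuous (fderiv ℝ v) := hv.continuous_fderiv (by simp)
  have hgsupp : HasCompactSupport (fderiv ℝ v) := hc.fderiv ℝ
  have huc : UniformContinuous (fderiv ℝ v) := hgsupp.uniformContinuous_of_continuous hgcont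
  obtain ⟨ε1, hε1, h1⟩ := Metric.uniformContinuous_iff.1 huc δ hδ
  refine ⟨min ε1 1, by positivity, fun ε hε hεlt => ?_⟩
  set u := fun x => |v x| with hu
  set K := cthickening 1 (tsupport v) with hK
  have hKc : IsCompact K := hc.isCompact.cthickening
  set U := fun x => u x + K.indicator (fun x => ε * (g x + δ)) x with hU
  have hucont : Continuous u := hv.continuous.abs
  obtain ⟨M, hM⟩ := hc.exists_bound_of_continuous hv.continuous
  have hM : ∀ x, u x ≤ M := hM
  obtain ⟨C, hC⟩ := hgsupp.exists_bound_of_continuous hgcont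
  have hC0 : 0 ≤ C := (norm_nonneg _).trans (hC 0)
  have hind0 : ∀ x, 0 ≤ K.indicator (fun x => ε * (g x + δ)) x := by
    intro x; apply indicator_nonneg; intro y _; positivity
  have hM' : ∀ x, U x ≤ M + ε * (C + δ) := by
    intro x
    have : K.indicator (fun x => ε * (g x + δ)) x ≤ ε * (C + δ) := by
      apply indicator_le' (fun y _ => ?_) (fun y _ => by positivity)
      have : g y ≤ C := hC y
      gcongr
    simp only [hU]
    linarith [hM x]
  have hsupp : ∀ t, 0 ≤ t → {x | t < u x} ⊆ tsupport v := by
    intro t ht x hx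
    apply subset_tsupport
    intro h0
    simp only [hu, mem_ofPred_eq, h0, abs_zero] at hx
    linarith
  have hsK : tsupport v ⊆ K := self_subset_cthickening _
  have hbu : ∀ t, 0 ≤ t → Bornology.IsBounded {x | t < u x} := fun t ht => hc.isCompact.isBounded.subset (hsupp t ht)
  have hbU : ∀ t, 0 ≤ t → Bornology.IsBounded {x | t < U x} := fun t ht => hKc.isBounded.subset (by
    intro x hx
    by_contra hxK
    have h2 : u x = 0 := by
      have : x ∉ tsupport v := fun h => hxK (hsK h)
      simp [hu, image_eq_zero_of_notMem_tsupport this]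
    simp only [hU, mem_ofPred_eq, h2, indicator_of_notMem hxK] at hx
    linarith)
  have hshift : ∀ x y, dist x y < ε → u y ≤ U x + 0 := by
    intro x y hxy
    rw [add_zero]
    by_cases hx : x ∈ K
    · simp only [hU, indicator_of_mem hx]
      have hmv := (convex_ball x ε).norm_image_sub_le_of_norm_fderiv_le (𝕜 := ℝ) (f := v) (C := g x + δ)
        (fun z _ => hv.differentiable (by simp) z) (by
          intro z hz
          have h3 := h1 (a := z) (b := x) ((mem_ball.1 hz).trans (hεlt.trans_le (min_le_left _ _)))
          rw [dist_eq_norm] at h3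
          have := norm_sub_norm_le (fderiv ℝ v z) (fderiv ℝ v x)
          simp only [hg]; linarith) (mem_ball_self hε) (show y ∈ ball x ε by rwa [mem_ball, dist_comm])
      have h4 : |v y| - |v x| ≤ |v y - v x| := abs_sub_abs_le_abs_sub _ _
      rw [Real.norm_eq_abs, ← dist_eq_norm, dist_comm] at hmv
      have : (g x + δ) * dist x y ≤ ε * (g x + δ) := by
        rw [mul_comm]; gcongr
      simp only [hu]
      linarith
    · have : y ∉ tsupport v := by
        intro hy
        apply hx
        apply mem_cthickening_of_dist_le x y 1 _ hy (hxy.le.trans (hεlt.le.trans (min_le_right _ _)))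
      have h2 : u y = 0 := by simp [hu, image_eq_zero_of_notMem_tsupport this]
      rw [h2]
      have := hind0 x
      have : 0 ≤ u x := abs_nonneg _
      simp only [hU]
      positivity
  have hKm : MeasurableSet K := isClosed_cthickening.measurableSet
  have hgm : Measurable g := hgcont.norm.measurable
  have hUm : Measurable U := hucont.measurable.add (((hgm.add_const _).const_mul _).indicator hKm)
  have ma := (rearr_antitone hM).measurable
  have mb := (rearr_antitone hM').measurable
  have key := contraction (volume : Measure (EuclideanSpace ℝ (Fin N))) (a := u) (b := U)
    (a' := fun x => rearr u ‖x‖) (b' := fun x => rearr U ‖x‖) hucont.measurable hUm (fun x => abs_nonneg _)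
    (ma.comp measurable_norm) (mb.comp measurable_norm) (fun x => rearr_nonneg _)
    (fun t ht => rearr_level hN hM ht ((hbu t ht).measure_lt_top).ne)
    (fun t ht => rearr_level hN hM' ht ((hbU t ht).measure_lt_top).ne)
    (fun t ht => ((hbu t ht).measure_lt_top).ne)
    (by
      intro s t
      by_cases h : {x : EuclideanSpace ℝ (Fin N) | s < rearr u ‖x‖} ⊆ {x | t < rearr U ‖x‖}
      · exact Or.inl h
      right
      rw [not_subset] at h
      obtain ⟨x, hx1, hx2⟩ := h
      intro y hy
      simp only [mem_ofPred_eq, not_lt] at hx1 hx2 hy ⊢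
      have : ‖y‖ ≤ ‖x‖ := by
        by_contra! hc
        exact absurd (hy.trans_le ((rearr_antitone hM' hc.le).trans hx2)) (lt_irrefl _)
      exact hx1.trans_le (rearr_antitone hM this)) hp
  have hp0 : 0 ≤ p := by linarith
  have hdiv : ∀ D : ℝ, ENNReal.ofReal (D / ε) ^ p = ENNReal.ofReal (ε⁻¹) ^ p * ENNReal.ofReal D ^ p := by
    intro D
    rw [← ENNReal.mul_rpow_of_nonneg _ _ hp0, ← ENNReal.ofReal_mul (by positivity)]
    congr 2; field_simp
  have hCt : ENNReal.ofReal (ε⁻¹) ^ p ≠ ⊤ := ENNReal.rpow_ne_top_of_nonneg hp0 ENNReal.ofReal_ne_top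
  have hR : ∀ x, ENNReal.ofReal (K.indicator (fun x => g x + δ) x) ^ p = ENNReal.ofReal ((U x - u x) / ε) ^ p := by
    intro x
    congr 2
    by_cases hx : x ∈ K
    · simp only [hU, indicator_of_mem hx]; field_simp; ring
    · simp only [hU, indicator_of_notMem hx]; simp
  change _ ≤ ∫⁻ x, ENNReal.ofReal (K.indicator (fun x => g x + δ) x) ^ p
  simp_rw [hR, hdiv]
  rw [lintegral_const_mul' _ _ hCt, lintegral_const_mul' _ _ hCt]
  refine mul_le_mul_right (le_trans (lintegral_mono fun x => ?_) key) _
  simp only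
  gcongr
  have := rearr_shift hN hM hM' hucont hbu hε le_rfl hshift (‖x‖ - ε)
  simpa using this

end


open MeasureTheory Metric Set Real

section
variable {N : ℕ}

def Adm (R : ℝ) (f : ℝ → ℝ) : Prop :=
  (∃ K : NNReal, LipschitzWith K f) ∧ Antitone f ∧ ∀ r, R ≤ r → f r = 0

lemma symm_adm (hN : 0 < N) {v : EuclideanSpace ℝ (Fin N) → ℝ}
    (hv : ContDiff ℝ (⊤ : ℕ∞) v) (hc : HasCompactSupport v) {c : EuclideanSpace ℝ (Fin N)} {R : ℝ}
    (hs : tsupport v ⊆ ball c R) : Adm R (rearr (fun x => |v x|)) := by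
  obtain ⟨K, hK⟩ := ContDiff.lipschitzWith_of_hasCompactSupport hc hv (by simp)
  obtain ⟨M, hM⟩ := hc.exists_bound_of_continuous hv.continuous
  have hM : ∀ x, |v x| ≤ M := hM
  have hsupp : ∀ t, 0 ≤ t → {x | t < |v x|} ⊆ tsupport v := by
    intro t ht x hx
    apply subset_tsupport
    intro h0
    simp only [mem_ofPred_eq, h0, abs_zero] at hx
    linarith
  have hbu : ∀ t, 0 ≤ t → Bornology.IsBounded {x | t < |v x|} := fun t ht => hc.isCompact.isBounded.subset (hsupp t ht)
  have hanti := rearr_antitone hM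
  refine ⟨⟨K, LipschitzWith.of_le_add_mul K fun r s => ?_⟩, hanti, fun r hr => ?_⟩
  · rcases lt_trichotomy r s with h | h | h
    · have := rearr_shift hN hM hM hv.continuous.abs hbu (sub_pos.2 h) (δ := K * (s - r))
        (mul_nonneg K.2 (sub_pos.2 h).le) (fun x y hxy => by
          have h1 := hK.dist_le_mul y x
          rw [Real.dist_eq, dist_comm] at h1
          have h2 := abs_sub_abs_le_abs_sub (v y) (v x)
          have h3 : (K:ℝ) * dist x y ≤ K * (s - r) := by gcongr
          linarith) r
      rw [add_sub_cancel] at this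
      rw [Real.dist_eq, abs_sub_comm, abs_of_pos (sub_pos.2 h)]
      exact this
    · rw [h]; simp
    · have := hanti h.le
      have h2 : 0 ≤ (K:ℝ) * dist r s := by positivity
      linarith
  · refine le_antisymm ?_ (rearr_nonneg _)
    by_contra! h
    rw [lt_rearr_iff hM le_rfl] at h
    refine absurd (h.trans_le ((measure_mono ((hsupp 0 le_rfl).trans hs)).trans ?_)) (lt_irrefl _)
    rw [Measure.addHaar_ball_center]
    exact measure_mono (ball_subset_ball hr)

lemma symm_energy (hN : 0 < N) {p : ℝ} (hp : 1 < p) {v : EuclideanSpace ℝ (Fin N) → ℝ}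
    (hv : ContDiff ℝ (⊤ : ℕ∞) v) (hc : HasCompactSupport v) :
    ∫⁻ x : EuclideanSpace ℝ (Fin N), ENNReal.ofReal |deriv (rearr (fun x => |v x|)) ‖x‖| ^ p ≤
      ∫⁻ x, ENNReal.ofReal ‖fderiv ℝ v x‖ ^ p := by
  obtain ⟨ρ, hρ⟩ := hc.isCompact.isBounded.subset_ball 0
  obtain ⟨⟨L, hL⟩, hanti, -⟩ := symm_adm hN hv hc hρ
  set f := rearr (fun x => |v x|) with hf
  have hp0 : 0 ≤ p := by linarith
  have hgcont : Continuous (fderiv ℝ v) := hv.continuous_fderiv (by simp)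
  have hgsupp : HasCompactSupport (fderiv ℝ v) := hc.fderiv ℝ
  obtain ⟨C, hC⟩ := hgsupp.exists_bound_of_continuous hgcont
  set K := cthickening 1 (tsupport v) with hK
  have hKc : IsCompact K := hc.isCompact.cthickening
  have hKm : MeasurableSet K := isClosed_cthickening.measurableSet
  have hseq : Filter.Tendsto (fun n : ℕ => 1 / ((n:ℝ) + 1)) Filter.atTop (nhds 0) := tendsto_one_div_add_atTop_nhds_zero_nat
  have hfm : Measurable f := hanti.measurable
  have step : ∀ δ : ℝ, 0 < δ → ∫⁻ x : EuclideanSpace ℝ (Fin N), ENNReal.ofReal |deriv f ‖x‖| ^ p ≤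
      ∫⁻ x, ENNReal.ofReal (K.indicator (fun x => ‖fderiv ℝ v x‖ + δ) x) ^ p := by
    intro δ hδ
    obtain ⟨ε0, hε0, h⟩ := symm_step hN hp hv hc hδ
    have hdiff : ∀ᵐ x : EuclideanSpace ℝ (Fin N), DifferentiableAt ℝ f ‖x‖ := ae_norm hN hL.ae_differentiableAt
    have hlim : ∀ᵐ x : EuclideanSpace ℝ (Fin N), Filter.liminf (fun n : ℕ =>
        ENNReal.ofReal ((f (‖x‖ - 1 / ((n:ℝ) + 1)) - f ‖x‖) / (1 / ((n:ℝ) + 1))) ^ p) Filter.atTop =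
        ENNReal.ofReal |deriv f ‖x‖| ^ p := by
      filter_upwards [hdiff] with x hx
      apply Filter.Tendsto.liminf_eq
      apply Filter.Tendsto.ennrpow_const
      apply ENNReal.tendsto_ofReal
      have h1 := hx.hasDerivAt.tendsto_slope_zero
      have h2 : Filter.Tendsto (fun n : ℕ => - (1 / ((n:ℝ) + 1))) Filter.atTop (nhdsWithin 0 {0}ᶜ) := by
        rw [tendsto_nhdsWithin_iff]
        refine ⟨by simpa using hseq.neg, Filter.Eventually.of_forall fun n => ?_⟩
        have : 0 < 1 / ((n:ℝ) + 1) := by positivity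
        simp only [mem_compl_iff, mem_singleton_iff]; linarith
      have h3 := (h1.comp h2).neg
      have h4 : deriv f ‖x‖ ≤ 0 := hanti.deriv_nonpos
      rw [abs_of_nonpos h4]
      refine h3.congr fun n => ?_
      have : 0 < 1 / ((n:ℝ) + 1) := by positivity
      simp only [Function.comp, smul_eq_mul, inv_neg, neg_mul, neg_neg, ← sub_eq_add_neg]
      field_simp
    rw [← lintegral_congr_ae hlim]
    refine (lintegral_liminf_le fun n => ?_).trans ?_
    · apply Measurable.pow_const
      apply Measurable.ennreal_ofReal
      exact ((hfm.comp (measurable_norm.sub_const _)).sub (hfm.comp measurable_norm)).div_const _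
    · refine Filter.liminf_le_of_frequently_le' (Filter.Eventually.frequently ?_)
      filter_upwards [hseq.eventually (gt_mem_nhds hε0)] with n hn
      exact h _ (by positivity) hn
  have hlim : Filter.Tendsto (fun n : ℕ => ∫⁻ x, ENNReal.ofReal (K.indicator (fun x => ‖fderiv ℝ v x‖ + 1 / ((n:ℝ) + 1)) x) ^ p)
      Filter.atTop (nhds (∫⁻ x, ENNReal.ofReal ‖fderiv ℝ v x‖ ^ p)) := by
    apply tendsto_lintegral_of_dominated_convergence (K.indicator fun _ => ENNReal.ofReal (C + 1) ^ p)
    · intro n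
      exact ((hgcont.norm.measurable.add_const _).indicator hKm).ennreal_ofReal.pow_const _
    · intro n
      refine Filter.Eventually.of_forall fun x => ?_
      by_cases hx : x ∈ K
      · simp only [indicator_of_mem hx]
        gcongr
        · exact hC x
        · rw [div_le_one (by positivity)]; linarith [n.cast_nonneg (α := ℝ)]
      · simp only [indicator_of_notMem hx, ENNReal.ofReal_zero]
        rw [ENNReal.zero_rpow_of_pos (by linarith)]
    · rw [lintegral_indicator_const hKm]
      exact ENNReal.mul_ne_top (ENNReal.rpow_ne_top_of_nonneg hp0 ENNReal.ofReal_ne_top) hKc.measure_lt_top.ne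
    · refine Filter.Eventually.of_forall fun x => ?_
      apply Filter.Tendsto.ennrpow_const
      apply ENNReal.tendsto_ofReal
      by_cases hx : x ∈ K
      · simp only [indicator_of_mem hx]
        simpa using hseq.const_add ‖fderiv ℝ v x‖
      · simp only [indicator_of_notMem hx]
        have : x ∉ tsupport (fderiv ℝ v) := fun h => hx (self_subset_cthickening _ (tsupport_fderiv_subset ℝ h))
        rw [image_eq_zero_of_notMem_tsupport this]
        simp
  exact ge_of_tendsto' hlim fun n => step _ (by positivity)

noncomputable def II (N : ℕ) (p : ℝ) (f : ℝ → ℝ) : ℝ := ∫ r in Ioi (0:ℝ), r ^ (N - 1) * |deriv f r| ^ p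
noncomputable def JJ (N : ℕ) (q : ℝ) (f : ℝ → ℝ) : ℝ := ∫ r in Ioi (0:ℝ), r ^ (N - 1) * f r ^ q
noncomputable def LL (N : ℕ) (p q R : ℝ) : ℝ :=
  sInf {x | ∃ f, Adm R f ∧ 0 < JJ N q f ∧ x = II N p f / JJ N q f ^ (p / q)}
noncomputable def sig (N : ℕ) : ℝ := (volume : Measure (EuclideanSpace ℝ (Fin N))).toSphere.real univ

lemma polar_radial (hN : 0 < N) (h : ℝ → ℝ) :
    ∫ x : EuclideanSpace ℝ (Fin N), h ‖x‖ = sig N * ∫ r in Ioi (0:ℝ), r ^ (N - 1) * h r := by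
  have : Nonempty (Fin N) := ⟨⟨0, hN⟩⟩
  have : Nontrivial (EuclideanSpace ℝ (Fin N)) := inferInstance
  rw [integral_fun_norm_addHaar]
  simp [sig, mul_assoc, measureReal_def]

lemma Adm.nonneg {R : ℝ} {f : ℝ → ℝ} (h : Adm R f) (r : ℝ) : 0 ≤ f r := by
  rw [← h.2.2 (max r R) (le_max_right _ _)]
  exact h.2.1 (le_max_left _ _)

lemma symm_main (hN : 0 < N) {p q : ℝ} (hp : 1 < p) (hq : 0 < q) {v : EuclideanSpace ℝ (Fin N) → ℝ}
    (hv : ContDiff ℝ (⊤ : ℕ∞) v) (hc : HasCompactSupport v) :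
    sig N * II N p (rearr (fun x => |v x|)) ≤ ∫ x, ‖fderiv ℝ v x‖ ^ p ∧
    sig N * JJ N q (rearr (fun x => |v x|)) = ∫ x, |v x| ^ q := by
  obtain ⟨ρ, hρ⟩ := hc.isCompact.isBounded.subset_ball 0
  have hadm := symm_adm hN hv hc hρ
  have hE := symm_energy hN hp hv hc
  obtain ⟨M, hM⟩ := hc.exists_bound_of_continuous hv.continuous
  have hM : ∀ x, |v x| ≤ M := hM
  have hp0 : 0 ≤ p := by linarith
  have hgcont : Continuous (fderiv ℝ v) := hv.continuous_fderiv (by simp)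
  have hgsupp : HasCompactSupport (fderiv ℝ v) := hc.fderiv ℝ
  unfold II JJ
  rw [← polar_radial hN (fun r => |deriv (rearr (fun x => |v x|)) r| ^ p),
    ← polar_radial hN (fun r => (rearr (fun x => |v x|)) r ^ q)]
  constructor
  · rw [integral_eq_lintegral_of_nonneg_ae (Filter.Eventually.of_forall fun x => by positivity) (by
        apply Measurable.aestronglyMeasurable
        exact (((measurable_deriv _).comp measurable_norm).abs).pow_const _),
      integral_eq_lintegral_of_nonneg_ae (Filter.Eventually.of_forall fun x => by positivity) (by
        apply Measurable.aestronglyMeasurable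
        exact hgcont.norm.measurable.pow_const _)]
    simp_rw [← ENNReal.ofReal_rpow_of_nonneg (abs_nonneg _) hp0, ← ENNReal.ofReal_rpow_of_nonneg (norm_nonneg _) hp0]
    refine ENNReal.toReal_mono ?_ hE
    simp_rw [ENNReal.ofReal_rpow_of_nonneg (norm_nonneg _) hp0]
    have : Integrable (fun x => ‖fderiv ℝ v x‖ ^ p) := by
      apply Continuous.integrable_of_hasCompactSupport
      · exact hgcont.norm.rpow_const (fun _ => Or.inr hp0)
      · exact hgsupp.comp_left (g := fun y => ‖y‖ ^ p) (by simp only [norm_zero]; exact Real.zero_rpow (by linarith))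
    exact (this.lintegral_lt_top).ne
  · have m1 : Measurable fun x : EuclideanSpace ℝ (Fin N) => rearr (fun x => |v x|) ‖x‖ :=
      (rearr_antitone hM).measurable.comp measurable_norm
    have m2 : Measurable fun x => |v x| := hv.continuous.abs.measurable
    rw [integral_eq_lintegral_of_nonneg_ae (Filter.Eventually.of_forall fun x => Real.rpow_nonneg (rearr_nonneg _) _)
        (m1.pow_const _).aestronglyMeasurable,
      integral_eq_lintegral_of_nonneg_ae (Filter.Eventually.of_forall fun x => by positivity)
        (m2.pow_const _).aestronglyMeasurable,
      lintegral_rpow_eq_lintegral_meas_lt_mul _ (Filter.Eventually.of_forall fun x => rearr_nonneg _) m1.aemeasurable hq,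
      lintegral_rpow_eq_lintegral_meas_lt_mul _ (Filter.Eventually.of_forall fun x => abs_nonneg _) m2.aemeasurable hq]
    congr 2
    refine setLIntegral_congr_fun measurableSet_Ioi fun t ht => ?_
    have ht : 0 < t := ht
    rw [rearr_level hN hM ht.le]
    refine ((hc.isCompact.isBounded.subset ?_).measure_lt_top).ne
    intro x hx
    apply subset_tsupport
    intro h0
    simp only [mem_ofPred_eq, h0, abs_zero] at hx
    linarith
end


open MeasureTheory Metric Set Real

section
variable {N : ℕ}

lemma integ_w {g : ℝ → ℝ} (hg : Measurable g) {C : ℝ} (hb : ∀ r, |g r| ≤ C) {R : ℝ} (h0 : ∀ r, R < r → g r = 0) :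
    IntegrableOn (fun r => r ^ (N - 1) * g r) (Ioi (0:ℝ)) := by
  have h1 : IntegrableOn (fun r => r ^ (N - 1) * g r) (Ioc (0:ℝ) R) := by
    refine Measure.integrableOn_of_bounded (M := |R| ^ (N - 1) * C) (by simp)
      (((measurable_id.pow_const _).mul hg).aestronglyMeasurable) ?_
    filter_upwards [ae_restrict_mem measurableSet_Ioc] with r hr
    rw [norm_mul, norm_pow, Real.norm_eq_abs, Real.norm_eq_abs]
    have : |r| ≤ |R| := abs_le_abs_of_nonneg hr.1.le hr.2
    gcongr
    exact hb r
  refine h1.of_forall_sdiff_eq_zero measurableSet_Ioi fun r hr => ?_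
  have : R < r := by
    by_contra! h
    exact hr.2 ⟨hr.1, h⟩
  rw [h0 r this, mul_zero]

lemma Adm.deriv_zero {R : ℝ} {f : ℝ → ℝ} (h : Adm R f) (r : ℝ) (hr : R < r) : deriv f r = 0 := by
  have : f =ᶠ[nhds r] fun _ => 0 := by
    filter_upwards [lt_mem_nhds hr] with s hs using h.2.2 s hs.le
  rw [this.deriv_eq]; simp

lemma Adm.meas {R : ℝ} {f : ℝ → ℝ} (h : Adm R f) : Measurable f := h.2.1.measurable

lemma Adm.int_I {R : ℝ} {f : ℝ → ℝ} (h : Adm R f) {p : ℝ} (hp : 0 < p) :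
    IntegrableOn (fun r => r ^ (N - 1) * |deriv f r| ^ p) (Ioi (0:ℝ)) := by
  obtain ⟨K, hK⟩ := h.1
  refine integ_w (C := (K:ℝ) ^ p) (R := R) ((measurable_deriv f).abs.pow_const _) (fun r => ?_) (fun r hr => ?_)
  · rw [abs_of_nonneg (by positivity)]
    have : |deriv f r| ≤ K := norm_deriv_le_of_lipschitz hK
    gcongr
  · rw [h.deriv_zero r hr, abs_zero, Real.zero_rpow hp.ne']

lemma Adm.anti0 {R : ℝ} {f : ℝ → ℝ} (h : Adm R f) {r : ℝ} (hr : 0 ≤ r) : f r ≤ f 0 := h.2.1 hr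

lemma Adm.int_J {R : ℝ} {f : ℝ → ℝ} (h : Adm R f) {q : ℝ} (hq : 0 < q) :
    IntegrableOn (fun r => r ^ (N - 1) * f r ^ q) (Ioi (0:ℝ)) := by
  have h1 : IntegrableOn (fun r => r ^ (N - 1) * (Ici (0:ℝ)).indicator (fun r => f r ^ q) r) (Ioi (0:ℝ)) := by
    refine integ_w (C := f 0 ^ q) (R := R) ((h.meas.pow_const _).indicator measurableSet_Ici) (fun r => ?_) (fun r hr => ?_)
    · have := h.nonneg r
      have h0 := h.nonneg 0
      by_cases hr : 0 ≤ r
      · rw [indicator_of_mem (show r ∈ Ici (0:ℝ) from hr), abs_of_nonneg (by positivity)]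
        gcongr
        exact h.anti0 hr
      · rw [indicator_of_notMem (show r ∉ Ici (0:ℝ) from hr)]; simp; positivity
    · rw [indicator_apply, h.2.2 r hr.le, Real.zero_rpow hq.ne', ite_self]
  refine h1.congr_fun (fun r hr => ?_) measurableSet_Ioi
  have h0 : 0 < r := hr
  simp only
  rw [indicator_of_mem (show r ∈ Ici (0:ℝ) from h0.le)]

lemma II_nonneg (p : ℝ) (f : ℝ → ℝ) : 0 ≤ II N p f :=
  setIntegral_nonneg measurableSet_Ioi fun r hr => by have : 0 < r := hr; positivity

lemma Adm.JJ_nonneg {R : ℝ} {f : ℝ → ℝ} (h : Adm R f) (q : ℝ) : 0 ≤ JJ N q f :=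
  setIntegral_nonneg measurableSet_Ioi fun r hr => by
    have : 0 < r := hr
    have := h.nonneg r
    positivity

lemma LL_le {p q R : ℝ} (hp : 0 < p) (hq : 0 < q) {f : ℝ → ℝ} (h : Adm R f) :
    LL N p q R * JJ N q f ^ (p / q) ≤ II N p f := by
  rcases (h.JJ_nonneg (N := N) q).eq_or_lt with h0 | h0
  · rw [← h0, Real.zero_rpow (by positivity), mul_zero]; exact II_nonneg _ _
  · have hb : BddBelow {x | ∃ f, Adm R f ∧ 0 < JJ N q f ∧ x = II N p f / JJ N q f ^ (p / q)} := by
      refine ⟨0, ?_⟩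
      rintro x ⟨f, hf, hJ, rfl⟩
      have := II_nonneg (N := N) p f
      positivity
    rw [← le_div_iff₀ (by positivity)]
    exact csInf_le hb ⟨f, h, h0, rfl⟩

lemma LL_nonneg {p q R : ℝ} : 0 ≤ LL N p q R := by
  apply Real.sInf_nonneg
  rintro x ⟨f, hf, hJ, rfl⟩
  have := II_nonneg (N := N) p f
  positivity

lemma sig_pos (hN : 0 < N) : 0 < sig N := by
  have : Nonempty (Fin N) := ⟨⟨0, hN⟩⟩
  have : Nontrivial (EuclideanSpace ℝ (Fin N)) := inferInstance
  have h : (volume : Measure (EuclideanSpace ℝ (Fin N))).toSphere ≠ 0 := Measure.toSphere_ne_zero _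
  have : NeZero ((volume : Measure (EuclideanSpace ℝ (Fin N))).toSphere) := ⟨h⟩
  exact measureReal_univ_pos

lemma lam_ge (hN : 0 < N) {p q : ℝ} (hp : 1 < p) (hq : 0 < q) (c : EuclideanSpace ℝ (Fin N)) {r : ℝ} (hr : 0 < r) :
    sig N ^ (1 - p / q) * LL N p q r ≤ lambdaPQ p q (ball c r) := by
  have hσ := sig_pos hN
  apply le_csInf
  · let b : ContDiffBump c := ⟨r / 3, r / 2, by positivity, by linarith⟩
    refine ⟨_, b, b.contDiff, b.hasCompactSupport, ?_, ⟨c, mem_ball_self hr, ?_⟩, rfl⟩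
    · rw [b.tsupport_eq]
      exact closedBall_subset_ball (by change r / 2 < r; linarith)
    · rw [b.one_of_mem_closedBall (mem_closedBall_self b.rIn_pos.le)]; exact one_ne_zero
  · rintro x ⟨v, hv, hc, hs, ⟨y, hy, hvy⟩, rfl⟩
    obtain ⟨hI, hJ⟩ := symm_main hN (p := p) (q := q) hp hq hv hc
    have hadm := symm_adm hN hv hc hs
    unfold rayleighQuot
    rw [setIntegral_eq_integral_of_forall_compl_eq_zero (fun x hx => by
        have : x ∉ tsupport (fderiv ℝ v) := fun h => hx (hs (tsupport_fderiv_subset ℝ h))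
        rw [image_eq_zero_of_notMem_tsupport this, norm_zero, Real.zero_rpow (by linarith)]),
      setIntegral_eq_integral_of_forall_compl_eq_zero (fun x hx => by
        have : x ∉ tsupport v := fun h => hx (hs h)
        rw [image_eq_zero_of_notMem_tsupport this, abs_zero, Real.zero_rpow hq.ne'])]
    have hpos : 0 < ∫ x, |v x| ^ q := by
      have hcont : Continuous fun x => |v x| ^ q := hv.continuous.abs.rpow_const (fun _ => Or.inr hq.le)
      refine hcont.integral_pos_of_hasCompactSupport_nonneg_nonzero (x := y) ?_ ?_ ?_
      · exact hc.comp_left (g := fun y => |y| ^ q) (by simp only [abs_zero]; exact Real.zero_rpow hq.ne')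
      · intro x; simp only [Pi.zero_apply]; positivity
      · positivity
    rw [← hJ] at hpos ⊢
    set f := rearr fun x => |v x|
    have hJ0 : 0 < JJ N q f := pos_of_mul_pos_right hpos hσ.le
    have hL := LL_le (N := N) (p := p) (q := q) (by linarith) hq hadm
    rw [le_div_iff₀ (by positivity)]
    refine le_trans ?_ hI
    rw [Real.mul_rpow hσ.le hJ0.le]
    calc sig N ^ (1 - p / q) * LL N p q r * (sig N ^ (p / q) * JJ N q f ^ (p / q))
        = (sig N ^ (1 - p / q) * sig N ^ (p / q)) * (LL N p q r * JJ N q f ^ (p / q)) := by ring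
      _ = sig N * (LL N p q r * JJ N q f ^ (p / q)) := by
          rw [← Real.rpow_add hσ]; simp
      _ ≤ _ := by gcongr
end


open MeasureTheory Metric Set Real

section
variable {N : ℕ}

lemma Adm.ftc {R : ℝ} {f : ℝ → ℝ} (h : Adm R f) (r s : ℝ) : ∫ ρ in r..s, deriv f ρ = f s - f r := by
  obtain ⟨K, hK⟩ := h.1
  exact (hK.lipschitzOnWith (s := uIcc r s)).absolutelyContinuousOnInterval.integral_deriv_eq_sub

lemma Adm.abs_deriv {R : ℝ} {f : ℝ → ℝ} (h : Adm R f) (r : ℝ) : |deriv f r| = - deriv f r :=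
  abs_of_nonpos h.2.1.deriv_nonpos

lemma Adm.pt_bound {R p γ : ℝ} {f : ℝ → ℝ} (h : Adm R f) (hp : 1 < p) {r : ℝ} (hr : 0 < r) (hrR : r ≤ R) (hγ : 0 ≤ γ)
    (hγ1 : -1 < γ - ((N - 1 : ℕ) : ℝ) / (p - 1)) :
    f r ≤ II N p f ^ (1 / p) *
      (r ^ (-γ) * ∫ ρ in Ioc 0 R, ρ ^ (γ - ((N - 1 : ℕ) : ℝ) / (p - 1))) ^ (1 / p.conjExponent) := by
  set m : ℝ := ((N - 1 : ℕ) : ℝ) with hm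
  have hm0 : 0 ≤ m := by positivity
  have hp0 : 0 < p := by linarith
  have hp1 : 0 < p - 1 := by linarith
  obtain ⟨K, hK⟩ := h.1
  have hKb : ∀ ρ, |deriv f ρ| ≤ K := fun ρ => norm_deriv_le_of_lipschitz hK
  have hconj := Real.HolderConjugate.conjExponent hp
  set A := fun ρ : ℝ => ρ ^ (m / p) * |deriv f ρ| with hA
  set B := fun ρ : ℝ => ρ ^ (-(m / p)) with hB
  have hmem := ae_restrict_mem (μ := volume) (measurableSet_Ioc (a := r) (b := R))
  have e1 : f r = ∫ ρ in Ioc r R, A ρ * B ρ := by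
    have h1 := h.ftc r R
    rw [h.2.2 R le_rfl, zero_sub, intervalIntegral.integral_of_le hrR] at h1
    have h2 : ∫ ρ in Ioc r R, A ρ * B ρ = ∫ ρ in Ioc r R, - deriv f ρ := by
      refine setIntegral_congr_fun measurableSet_Ioc fun ρ hρ => ?_
      have hρ0 : 0 < ρ := hr.trans hρ.1
      simp only [hA, hB]
      rw [mul_right_comm, ← Real.rpow_add hρ0, add_neg_cancel, Real.rpow_zero, one_mul, h.abs_deriv]
    rw [h2, integral_neg, h1, neg_neg]
  have hAm : Measurable A := (measurable_id.pow_const _).mul (measurable_deriv f).abs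
  have hBm : Measurable B := measurable_id.pow_const _
  have hAL : MemLp A (ENNReal.ofReal p) (volume.restrict (Ioc r R)) := by
    refine MemLp.of_bound hAm.aestronglyMeasurable (R ^ (m / p) * K) ?_
    filter_upwards [hmem] with ρ hρ
    have hρ0 : 0 < ρ := hr.trans hρ.1
    rw [Real.norm_of_nonneg (by positivity)]
    simp only [hA]
    have hR0 : 0 < R := hρ0.trans_le hρ.2
    exact mul_le_mul (Real.rpow_le_rpow hρ0.le hρ.2 (by positivity)) (hKb ρ) (abs_nonneg _) (by positivity)
  have hBL : MemLp B (ENNReal.ofReal p.conjExponent) (volume.restrict (Ioc r R)) := by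
    refine MemLp.of_bound hBm.aestronglyMeasurable (r ^ (-(m / p))) ?_
    filter_upwards [hmem] with ρ hρ
    have hρ0 : 0 < ρ := hr.trans hρ.1
    rw [Real.norm_of_nonneg (by positivity)]
    exact Real.rpow_le_rpow_of_nonpos hr hρ.1.le (by have : 0 ≤ m / p := by positivity
                                                     linarith)
  have hold := integral_mul_le_Lp_mul_Lq_of_nonneg hconj (μ := volume.restrict (Ioc r R)) (f := A) (g := B)
    (by filter_upwards [hmem] with ρ hρ; have hρ0 : 0 < ρ := hr.trans hρ.1
        simp only [hA, Pi.zero_apply]; positivity)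
    (by filter_upwards [hmem] with ρ hρ; have hρ0 : 0 < ρ := hr.trans hρ.1
        simp only [hB, Pi.zero_apply]; positivity) hAL hBL
  rw [← e1] at hold
  refine hold.trans ?_
  have i1 : ∫ ρ in Ioc r R, A ρ ^ p ≤ II N p f := by
    have : ∫ ρ in Ioc r R, A ρ ^ p = ∫ ρ in Ioc r R, ρ ^ (N - 1) * |deriv f ρ| ^ p := by
      refine setIntegral_congr_fun measurableSet_Ioc fun ρ hρ => ?_
      have hρ0 : 0 < ρ := hr.trans hρ.1
      simp only [hA]
      rw [Real.mul_rpow (by positivity) (by positivity), ← Real.rpow_mul hρ0.le, div_mul_cancel₀ _ hp0.ne', hm,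
        Real.rpow_natCast]
    rw [this]
    refine setIntegral_mono_set (h.int_I hp0) ?_ (Filter.Eventually.of_forall fun ρ hρ => hr.trans hρ.1)
    filter_upwards [ae_restrict_mem measurableSet_Ioi] with ρ hρ
    have hρ0 : 0 < ρ := hρ
    simp only [Pi.zero_apply]; positivity
  have hint : IntegrableOn (fun ρ : ℝ => ρ ^ (γ - m / (p - 1))) (Ioc 0 R) :=
    (intervalIntegral.intervalIntegrable_rpow' (a := 0) (b := R) hγ1).1
  have i2 : ∫ ρ in Ioc r R, B ρ ^ p.conjExponent ≤ r ^ (-γ) * ∫ ρ in Ioc 0 R, ρ ^ (γ - m / (p - 1)) := by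
    have hsub : Ioc r R ⊆ Ioc 0 R := Ioc_subset_Ioc_left hr.le
    calc ∫ ρ in Ioc r R, B ρ ^ p.conjExponent ≤ ∫ ρ in Ioc r R, r ^ (-γ) * ρ ^ (γ - m / (p - 1)) := by
          refine integral_mono_of_nonneg ?_ ((hint.mono_set hsub).const_mul _) ?_
          · filter_upwards [hmem] with ρ hρ
            have hρ0 : 0 < ρ := hr.trans hρ.1
            simp only [hB, Pi.zero_apply]; positivity
          · filter_upwards [hmem] with ρ hρ
            have hρ0 : 0 < ρ := hr.trans hρ.1
            simp only [hB]
            rw [← Real.rpow_mul hρ0.le]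
            have : -(m / p) * p.conjExponent = -γ + (γ - m / (p - 1)) := by
              rw [Real.conjExponent]; field_simp; ring
            rw [this, Real.rpow_add hρ0]
            have := Real.rpow_le_rpow_of_nonpos hr hρ.1.le (by linarith : -γ ≤ 0)
            gcongr
      _ = r ^ (-γ) * ∫ ρ in Ioc r R, ρ ^ (γ - m / (p - 1)) := integral_const_mul _ _
      _ ≤ _ := by
          gcongr
          · filter_upwards [ae_restrict_mem measurableSet_Ioc] with ρ hρ
            have hρ0 : 0 < ρ := hρ.1
            simp only [Pi.zero_apply]; positivity
  have hc0 := hconj.symm.pos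
  have n1 : 0 ≤ ∫ ρ in Ioc r R, A ρ ^ p := setIntegral_nonneg measurableSet_Ioc fun ρ hρ => by
    have hρ0 : 0 < ρ := hr.trans hρ.1
    simp only [hA]; positivity
  have n2 : 0 ≤ ∫ ρ in Ioc r R, B ρ ^ p.conjExponent := setIntegral_nonneg measurableSet_Ioc fun ρ hρ => by
    have hρ0 : 0 < ρ := hr.trans hρ.1
    simp only [hB]; positivity
  have := II_nonneg (N := N) p f
  gcongr

lemma adm_tent {R : ℝ} : Adm R (fun r => max (R - r) 0) := by
  refine ⟨⟨1, ?_⟩, ?_, ?_⟩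
  · have h1 : LipschitzWith 1 fun r : ℝ => R - r := by
      simpa using (LipschitzWith.const' (α := ℝ) R (K := 0)).sub LipschitzWith.id
    exact h1.max_const 0
  · intro a b hab
    simp only
    gcongr
  · intro r hr; simp [hr]

lemma JJ_tent {R : ℝ} (hR : 0 < R) {q : ℝ} (hq : 0 < q) : 0 < JJ N q (fun r => max (R - r) 0) := by
  have h := adm_tent (R := R)
  unfold JJ
  rw [setIntegral_pos_iff_support_of_nonneg_ae]
  · have : Ioo 0 R ⊆ (Function.support fun r : ℝ => r ^ (N - 1) * max (R - r) 0 ^ q) ∩ Ioi 0 := by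
      intro r hr
      refine ⟨?_, hr.1⟩
      have h1 : 0 < r := hr.1
      have h2 : 0 < max (R - r) 0 := lt_max_of_lt_left (by linarith [hr.2])
      simp only [Function.mem_support]
      positivity
    refine lt_of_lt_of_le ?_ (measure_mono this)
    simpa using hR
  · filter_upwards [ae_restrict_mem measurableSet_Ioi] with r hr
    have : 0 < r := hr
    have := h.nonneg r
    simp only [Pi.zero_apply] at this ⊢
    positivity
  · exact h.int_J hq

lemma LL_set_nonempty {R : ℝ} (hR : 0 < R) {p q : ℝ} (hq : 0 < q) :
    {x | ∃ f, Adm R f ∧ 0 < JJ N q f ∧ x = II N p f / JJ N q f ^ (p / q)}.Nonempty :=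
  ⟨_, _, adm_tent, JJ_tent hR hq, rfl⟩

lemma LL_pos (hN : 1 ≤ N) {p q R : ℝ} (hp : 1 < p) (hpq : p ≤ q) (hc : ltCritical N p q) (hR : 0 < R) :
    0 < LL N p q R := by
  have hp0 : 0 < p := by linarith
  have hq0 : 0 < q := by linarith
  have hp1 : 0 < p - 1 := by linarith
  have hN0 : (0:ℝ) < N := by exact_mod_cast hN
  have hm : ((N - 1 : ℕ) : ℝ) = N - 1 := by push_cast [hN]; ring
  have hex : max 0 (((N:ℝ) - p) / (p - 1)) < N * p / (q * (p - 1)) := by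
    apply max_lt (by positivity)
    rcases lt_or_ge p N with h | h
    · have := hc h
      have h2 : 0 < (N:ℝ) - p := by linarith
      rw [lt_div_iff₀ h2] at this
      rw [div_lt_div_iff₀ hp1 (by positivity)]
      nlinarith
    · have : ((N:ℝ) - p) / (p - 1) ≤ 0 := div_nonpos_of_nonpos_of_nonneg (by linarith) hp1.le
      have h3 : 0 < N * p / (q * (p - 1)) := by positivity
      linarith
  obtain ⟨γ, hγ1, hγ2⟩ := exists_between hex
  have hγ0 : 0 ≤ γ := (le_max_left _ _).trans hγ1.le
  have hγ3 : -1 < γ - ((N - 1 : ℕ) : ℝ) / (p - 1) := by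
    have := (le_max_right _ _).trans_lt hγ1
    rw [hm]
    have e : ((N:ℝ) - p) / (p - 1) = (N - 1) / (p - 1) - 1 := by field_simp; ring
    linarith
  set C1 := ∫ ρ in Ioc 0 R, ρ ^ (γ - ((N - 1 : ℕ) : ℝ) / (p - 1)) with hC1
  have hC10 : 0 ≤ C1 := setIntegral_nonneg measurableSet_Ioc fun ρ hρ => by
    have hρ0 : 0 < ρ := hρ.1
    positivity
  set p' := p.conjExponent with hp'
  have hconj := Real.HolderConjugate.conjExponent hp
  have hp'0 : 0 < p' := hconj.symm.pos
  have hex2 : -1 < ((N - 1 : ℕ) : ℝ) - γ * (q / p') := by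
    rw [hm, hp', Real.conjExponent]
    rw [lt_div_iff₀ (by positivity)] at hγ2
    have : γ * (q / (p / (p - 1))) < N := by
      have e : γ * (q / (p / (p - 1))) = γ * (q * (p - 1)) / p := by field_simp
      rw [e, div_lt_iff₀ hp0]
      linarith
    linarith
  set C2 := C1 ^ (q / p') * ∫ r in Ioc 0 R, r ^ (((N - 1 : ℕ) : ℝ) - γ * (q / p')) with hC2
  have hint : IntegrableOn (fun ρ : ℝ => ρ ^ (((N - 1 : ℕ) : ℝ) - γ * (q / p'))) (Ioc 0 R) :=
    (intervalIntegral.intervalIntegrable_rpow' (a := 0) (b := R) hex2).1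
  have hC20 : 0 ≤ C2 := mul_nonneg (by positivity) (setIntegral_nonneg measurableSet_Ioc fun ρ hρ => by
    have hρ0 : 0 < ρ := hρ.1
    positivity)
  have key : ∀ f, Adm R f → JJ N q f ≤ II N p f ^ (q / p) * C2 := by
    intro f hf
    have hI0 := II_nonneg (N := N) p f
    have e1 : JJ N q f = ∫ r in Ioc 0 R, r ^ (N - 1) * f r ^ q := by
      unfold JJ
      refine setIntegral_eq_of_subset_of_forall_sdiff_eq_zero measurableSet_Ioi (fun r hr => hr.1) fun r hr => ?_
      have : R < r := by
        by_contra! h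
        exact hr.2 ⟨hr.1, h⟩
      rw [hf.2.2 r this.le, Real.zero_rpow hq0.ne', mul_zero]
    rw [e1, hC2, ← mul_assoc, ← integral_const_mul]
    refine integral_mono_of_nonneg ?_ (hint.const_mul _) ?_
    · filter_upwards [ae_restrict_mem measurableSet_Ioc] with r hr
      have h0 : 0 < r := hr.1
      have := hf.nonneg r
      simp only [Pi.zero_apply]; positivity
    · filter_upwards [ae_restrict_mem measurableSet_Ioc] with r hr
      have h0 : 0 < r := hr.1
      have hb := hf.pt_bound (N := N) hp h0 hr.2 hγ0 hγ3
      have h1 : f r ^ q ≤ (II N p f ^ (1 / p) * (r ^ (-γ) * C1) ^ (1 / p')) ^ q :=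
        Real.rpow_le_rpow (hf.nonneg r) hb hq0.le
      have h2 : (II N p f ^ (1 / p) * (r ^ (-γ) * C1) ^ (1 / p')) ^ q =
          II N p f ^ (q / p) * (r ^ (-(γ * (q / p'))) * C1 ^ (q / p')) := by
        rw [Real.mul_rpow (by positivity) (by positivity), ← Real.rpow_mul hI0, ← Real.rpow_mul (by positivity),
          Real.mul_rpow (by positivity) hC10, ← Real.rpow_mul h0.le]
        rw [show 1 / p * q = q / p by ring, show 1 / p' * q = q / p' by ring, neg_mul]
      rw [h2] at h1
      calc r ^ (N - 1) * f r ^ q ≤ r ^ (N - 1) * (II N p f ^ (q / p) * (r ^ (-(γ * (q / p'))) * C1 ^ (q / p'))) := by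
            gcongr
        _ = _ := by
            rw [sub_eq_add_neg, Real.rpow_add h0, Real.rpow_natCast]; ring
  set c := (C2 ^ (p / q) + 1)⁻¹ with hcdef
  have hc0 : 0 < c := by positivity
  refine hc0.trans_le (le_csInf (LL_set_nonempty hR hq0) ?_)
  rintro x ⟨f, hf, hJ, rfl⟩
  have hI0 := II_nonneg (N := N) p f
  rw [le_div_iff₀ (by positivity), hcdef, inv_mul_le_iff₀ (by positivity)]
  have h1 : JJ N q f ^ (p / q) ≤ (II N p f ^ (q / p) * C2) ^ (p / q) :=
    Real.rpow_le_rpow hJ.le (key f hf) (by positivity)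
  rw [Real.mul_rpow (by positivity) hC20, ← Real.rpow_mul hI0, show q / p * (p / q) = 1 by field_simp, Real.rpow_one] at h1
  nlinarith

lemma LL_scale (hN : 1 ≤ N) {p q r R : ℝ} (hp : 1 < p) (hpq : p ≤ q) (hr : 0 < r) (hR : 0 < R) :
    LL N p q R * (R / r) ^ (N * (p / N + p / q - 1)) ≤ LL N p q r := by
  have hp0 : 0 < p := by linarith
  have hq0 : 0 < q := by linarith
  have hN0 : (0:ℝ) < N := by exact_mod_cast hN
  have hNN : N - 1 + 1 = N := by omega
  refine le_csInf (LL_set_nonempty hr hq0) ?_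
  rintro x ⟨f, hf, hJ, rfl⟩
  set t := r / R with ht
  have ht0 : 0 < t := by positivity
  set g := fun s => f (t * s) with hg
  have hgA : Adm R g := by
    obtain ⟨⟨K, hK⟩, ha, h0⟩ := hf
    refine ⟨⟨K * ‖t‖₊, hK.comp (lipschitzWith_smul t)⟩, ?_, ?_⟩
    · intro a b hab
      exact ha (by gcongr)
    · intro s hs
      refine h0 _ ?_
      rw [ht, div_mul_eq_mul_div, le_div_iff₀ hR]
      gcongr
  have eJ : JJ N q g = t⁻¹ ^ N * JJ N q f := by
    have := integral_comp_mul_left_Ioi (fun s => s ^ (N - 1) * f s ^ q) 0 ht0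
    rw [mul_zero, smul_eq_mul] at this
    unfold JJ
    calc ∫ s in Ioi 0, s ^ (N - 1) * g s ^ q = t⁻¹ ^ (N - 1) * ∫ s in Ioi 0, (t * s) ^ (N - 1) * f (t * s) ^ q := by
          rw [← integral_const_mul]
          congr 1; funext s
          simp only [hg, mul_pow]; rw [inv_pow]; field_simp
      _ = _ := by rw [this, ← mul_assoc, ← pow_succ, hNN]
  have eI : II N p g = t ^ p * t⁻¹ ^ N * II N p f := by
    have := integral_comp_mul_left_Ioi (fun s => s ^ (N - 1) * |deriv f s| ^ p) 0 ht0
    rw [mul_zero, smul_eq_mul] at this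
    unfold II
    calc ∫ s in Ioi 0, s ^ (N - 1) * |deriv g s| ^ p
        = (t ^ p * t⁻¹ ^ (N - 1)) * ∫ s in Ioi 0, (t * s) ^ (N - 1) * |deriv f (t * s)| ^ p := by
          rw [← integral_const_mul]
          congr 1; funext s
          rw [hg, deriv_comp_mul_left, smul_eq_mul, abs_mul, abs_of_pos ht0, Real.mul_rpow ht0.le (abs_nonneg _), mul_pow, inv_pow]
          field_simp
      _ = _ := by rw [this, ← mul_assoc, mul_assoc (t ^ p), ← pow_succ, hNN]
  have hL := LL_le (N := N) (p := p) hp0 hq0 hgA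
  rw [eJ, eI, Real.mul_rpow (by positivity) hJ.le] at hL
  rw [le_div_iff₀ (by positivity)]
  have hRt : R / r = t⁻¹ := by rw [ht, inv_div]
  have hfac : t⁻¹ ^ ((N:ℝ) * (p / N + p / q - 1)) = (t⁻¹ ^ N) ^ (p / q) * (t ^ p * t⁻¹ ^ N)⁻¹ := by
    rw [← Real.rpow_natCast, ← Real.rpow_mul (by positivity), mul_inv, ← Real.inv_rpow ht0.le,
      ← Real.rpow_neg (by positivity), ← Real.rpow_add (by positivity), ← Real.rpow_add (by positivity)]
    congr 1
    field_simp
    ring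
  rw [hRt, hfac]
  have hpos : 0 < t ^ p * t⁻¹ ^ N := by positivity
  calc LL N p q R * ((t⁻¹ ^ N) ^ (p / q) * (t ^ p * t⁻¹ ^ N)⁻¹) * JJ N q f ^ (p / q)
      = (t ^ p * t⁻¹ ^ N)⁻¹ * (LL N p q R * ((t⁻¹ ^ N) ^ (p / q) * JJ N q f ^ (p / q))) := by ring
    _ ≤ (t ^ p * t⁻¹ ^ N)⁻¹ * (t ^ p * t⁻¹ ^ N * II N p f) := by gcongr
    _ = II N p f := by field_simp

lemma kappa_pos (hN : 1 ≤ N) {p q : ℝ} (hp : 1 < p) (hpq : p ≤ q) (hc : ltCritical N p q) :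
    0 < p / N + p / q - 1 := by
  have hp0 : 0 < p := by linarith
  have hq0 : 0 < q := by linarith
  have hN0 : (0:ℝ) < N := by exact_mod_cast hN
  rcases lt_or_ge p N with h | h
  · have := hc h
    have h2 : 0 < (N:ℝ) - p := by linarith
    rw [lt_div_iff₀ h2] at this
    have e : p / N + p / q - 1 = (p * q + N * p - N * q) / (N * q) := by field_simp
    rw [e]
    apply div_pos _ (by positivity)
    nlinarith
  · have : 1 ≤ p / N := by rwa [one_le_div hN0]
    have : 0 < p / q := by positivity
    linarith
end


open MeasureTheory Metric Set Real

section
variable {N : ℕ}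

lemma bern {x y q : ℝ} (hq : 1 < q) (hy : 0 ≤ y) (hyx : y ≤ x) : x ^ q - q * y * x ^ (q - 1) ≤ (x - y) ^ q := by
  rcases (hy.trans hyx).eq_or_lt with h | h
  · have : y = 0 := by linarith
    subst h; subst this; simp
  · have h1 := one_add_mul_self_le_rpow_one_add (s := -(y / x)) (by rw [neg_le_neg_iff, div_le_one h]; exact hyx) hq.le
    have h2 : (x - y) ^ q = x ^ q * (1 + -(y / x)) ^ q := by
      rw [← Real.mul_rpow h.le (by rw [← sub_eq_add_neg, sub_nonneg, div_le_one h]; exact hyx)]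
      congr 1; field_simp; ring
    rw [h2]
    have h3 : x ^ q = x ^ (q - 1) * x := by rw [← Real.rpow_add_one h.ne']; congr 1; ring
    calc x ^ q - q * y * x ^ (q - 1) = x ^ q * (1 + q * -(y / x)) := by rw [h3]; field_simp; ring
      _ ≤ _ := by gcongr

lemma bern' {x y q : ℝ} (hq : 1 < q) (hy : 0 ≤ y) (hx : 0 ≤ x) : x ^ q - q * y * x ^ (q - 1) ≤ (max (x - y) 0) ^ q := by
  rcases le_or_gt y x with h | h
  · rw [max_eq_left (by linarith)]; exact bern hq hy h
  · rw [max_eq_right (by linarith), Real.zero_rpow (by linarith)]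
    rcases hx.eq_or_lt with h0 | h0
    · subst h0; rw [Real.zero_rpow (by linarith), Real.zero_rpow (by linarith)]; simp
    · have h3 : x ^ q = x ^ (q - 1) * x := by rw [← Real.rpow_add_one h0.ne']; congr 1; ring
      rw [h3]
      have : 0 < x ^ (q - 1) := by positivity
      have : x ≤ q * y := by nlinarith
      nlinarith

lemma split_int {g : ℝ → ℝ} (hg : IntegrableOn g (Ioi (0:ℝ))) {s : ℝ} (hs : 0 ≤ s) :
    ∫ r in Ioi (0:ℝ), g r = (∫ r in Ioc 0 s, g r) + ∫ r in Ioi s, g r := by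
  rw [← Ioc_union_Ioi_eq_Ioi hs, setIntegral_union (Ioc_disjoint_Ioi le_rfl) measurableSet_Ioi
    (hg.mono_set fun r hr => hr.1) (hg.mono_set fun r hr => hs.trans_lt hr)]

lemma ineq1 {p t : ℝ} (hp : 1 < p) (ht : 0 < t) (ht1 : t < 1) : p * t / (1 + p * t) ≤ 1 - (1 - t) ^ p := by
  have h1 := one_add_mul_self_le_rpow_one_add (s := t) (by linarith) hp.le
  have h2 : (1 + t) ^ p * (1 - t) ^ p ≤ 1 := by
    rw [← Real.mul_rpow (by linarith) (by linarith)]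
    apply Real.rpow_le_one <;> nlinarith
  have h3 : 0 < 1 + p * t := by positivity
  have h4 : 0 ≤ (1 - t) ^ p := Real.rpow_nonneg (by linarith) _
  rw [div_le_iff₀ h3]
  nlinarith

lemma ineq2 {a x : ℝ} (ha : 0 ≤ a) (ha1 : a ≤ 1) (hx : 0 ≤ x) (hx1 : x < 1) : 1 - a * (x / (1 - x)) ≤ (1 - x) ^ a := by
  have h0 : 0 < 1 - x := by linarith
  have hy : 0 ≤ x / (1 - x) := by positivity
  have h1 := rpow_one_add_le_one_add_mul_self (s := x / (1 - x)) (by linarith) ha ha1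
  have h2 : (1 - x) ^ a * (1 + x / (1 - x)) ^ a = 1 := by
    rw [← Real.mul_rpow h0.le (by linarith)]
    rw [show (1 - x) * (1 + x / (1 - x)) = 1 by field_simp; ring, Real.one_rpow]
  have h3 : 0 < (1 - x) ^ a := by positivity
  have h4 : 1 ≤ (1 - x) ^ a * (1 + a * (x / (1 - x))) := h2.symm.le.trans (by gcongr)
  have h5 : 0 ≤ a * (x / (1 - x)) := by positivity
  set z := a * (x / (1 - x))
  by_contra! hc
  nlinarith

lemma pert {p q R : ℝ} (hp : 1 < p) (hpq : p ≤ q) {f : ℝ → ℝ} (hf : Adm R f) (hJ : JJ N q f = 1)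
    {ε : ℝ} (hI : II N p f ≤ LL N p q R + ε) {t : ℝ} (ht : 0 < t) (ht1 : t ≤ 1 / (2 * q)) {s : ℝ} (hs : 0 < s) :
    0 ≤ (∫ r in Ioc 0 s, r ^ (N - 1) * f r ^ q) - f s * (∫ r in Ioc 0 s, r ^ (N - 1) * f r ^ (q - 1)) ∧
    (∫ r in Ioc 0 s, r ^ (N - 1) * f r ^ q) - f s * (∫ r in Ioc 0 s, r ^ (N - 1) * f r ^ (q - 1)) ≤ 1 ∧
    ∫ r in Ioc 0 s, r ^ (N - 1) * |deriv f r| ^ p ≤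
      (1 + p * t) * (LL N p q R * ((∫ r in Ioc 0 s, r ^ (N - 1) * f r ^ q) -
        f s * (∫ r in Ioc 0 s, r ^ (N - 1) * f r ^ (q - 1))) / (1 - q * t) + ε / (p * t)) := by
  have hp0 : 0 < p := by linarith
  have hq1 : 1 < q := by linarith
  have hq0 : 0 < q := by linarith
  have hqt : q * t ≤ 1 / 2 := by
    rw [le_div_iff₀ (by positivity)] at ht1; linarith
  have ht2 : t < 1 := by nlinarith
  have hsub : Ioc 0 s ⊆ Ioi (0:ℝ) := fun r hr => hr.1
  have iJ := hf.int_J (N := N) hq0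
  have iQ := hf.int_J (N := N) (q := q - 1) (by linarith)
  have iI := hf.int_I (N := N) hp0
  have hfs := hf.nonneg s
  set A := ∫ r in Ioc 0 s, r ^ (N - 1) * f r ^ q with hA
  set Q := ∫ r in Ioc 0 s, r ^ (N - 1) * f r ^ (q - 1) with hQ
  set P := ∫ r in Ioc 0 s, r ^ (N - 1) * |deriv f r| ^ p with hP
  have hP0 : 0 ≤ P := setIntegral_nonneg measurableSet_Ioc fun r hr => by
    have : 0 < r := hr.1
    positivity
  have hQ0 : 0 ≤ Q := setIntegral_nonneg measurableSet_Ioc fun r hr => by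
    have : 0 < r := hr.1
    have := hf.nonneg r
    positivity
  have hDint : A - f s * Q = ∫ r in Ioc 0 s, r ^ (N - 1) * ((f r - f s) * f r ^ (q - 1)) := by
    rw [hA, hQ, ← integral_const_mul, ← integral_sub (iJ.mono_set hsub) ((iQ.mono_set hsub).const_mul _)]
    congr 1; funext r
    have : f r ^ q = f r * f r ^ (q - 1) := by
      rcases (hf.nonneg r).eq_or_lt with h | h
      · rw [← h, Real.zero_rpow hq0.ne']; simp
      · rw [mul_comm, ← Real.rpow_add_one h.ne']; congr 1; ring
    rw [this]; ring
  have hD0 : 0 ≤ A - f s * Q := by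
    rw [hDint]
    refine setIntegral_nonneg measurableSet_Ioc fun r hr => ?_
    have h1 : 0 < r := hr.1
    have h2 := hf.nonneg r
    have h3 := hf.2.1 hr.2
    have : 0 ≤ f r - f s := by linarith
    positivity
  have hA1 : A ≤ 1 := by
    rw [← hJ, JJ, split_int iJ hs.le]
    have : 0 ≤ ∫ r in Ioi s, r ^ (N - 1) * f r ^ q := setIntegral_nonneg measurableSet_Ioi fun r hr => by
      have h1 : 0 < r := hs.trans hr
      have := hf.nonneg r
      positivity
    linarith
  have hD1 : A - f s * Q ≤ 1 := by nlinarith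
  refine ⟨hD0, hD1, ?_⟩
  set w := fun r => f r - t * max (f r - f s) 0 with hw
  have hwA : Adm R w := by
    obtain ⟨⟨K, hK⟩, ha, h0⟩ := hf
    refine ⟨⟨K + ‖t‖₊ * K, hK.sub ((lipschitzWith_smul t).comp
      (((show LipschitzWith K fun r => f r - f s by simpa using hK.sub (LipschitzWith.const (f s)))).max_const 0))⟩, ?_, ?_⟩
    · intro a b hab
      have h1 := ha hab
      simp only [hw]
      rcases le_total (f a) (f s) with h2 | h2 <;> rcases le_total (f b) (f s) with h3 | h3
      · rw [max_eq_right (by linarith), max_eq_right (by linarith)]; linarith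
      · rw [max_eq_right (by linarith : f a - f s ≤ 0), max_eq_left (by linarith : 0 ≤ f b - f s)]; nlinarith
      · rw [max_eq_left (by linarith : 0 ≤ f a - f s), max_eq_right (by linarith : f b - f s ≤ 0)]; nlinarith
      · rw [max_eq_left (by linarith), max_eq_left (by linarith)]; nlinarith
    · intro r hr
      simp only [hw]
      rw [h0 r hr, zero_sub, max_eq_right (by linarith)]; simp
  have hII : II N p w = II N p f - (1 - (1 - t) ^ p) * P := by
    rw [II, II, split_int (hwA.int_I hp0) hs.le, split_int iI hs.le]
    have e1 : ∫ r in Ioc 0 s, r ^ (N - 1) * |deriv w r| ^ p = (1 - t) ^ p * P := by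
      rw [hP, integral_Ioc_eq_integral_Ioo, integral_Ioc_eq_integral_Ioo, ← integral_const_mul]
      refine setIntegral_congr_fun measurableSet_Ioo fun r hr => ?_
      have : w =ᶠ[nhds r] fun r => (1 - t) * f r + t * f s := by
        filter_upwards [gt_mem_nhds hr.2] with y hy
        have := hf.2.1 hy.le
        simp only [hw]
        rw [max_eq_left (by linarith)]; ring
      rw [this.deriv_eq, deriv_add_const, deriv_const_mul_field, abs_mul, abs_of_pos (by linarith : 0 < 1 - t),
        Real.mul_rpow (by linarith) (abs_nonneg _)]
      ring
    have e2 : ∫ r in Ioi s, r ^ (N - 1) * |deriv w r| ^ p = ∫ r in Ioi s, r ^ (N - 1) * |deriv f r| ^ p := by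
      refine setIntegral_congr_fun measurableSet_Ioi fun r hr => ?_
      have : w =ᶠ[nhds r] f := by
        filter_upwards [lt_mem_nhds (show s < r from hr)] with y hy
        have := hf.2.1 hy.le
        simp only [hw]
        rw [max_eq_right (by linarith)]; ring
      rw [this.deriv_eq]
    rw [e1, e2]; ring
  have hJJ : 1 - q * t * (A - f s * Q) ≤ JJ N q w := by
    have e1 : A - f s * Q = ∫ r in Ioi 0, r ^ (N - 1) * (max (f r - f s) 0 * f r ^ (q - 1)) := by
      rw [hDint]
      symm
      rw [setIntegral_eq_of_subset_of_forall_sdiff_eq_zero (s := Ioc 0 s) measurableSet_Ioi hsub]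
      · refine setIntegral_congr_fun measurableSet_Ioc fun r hr => ?_
        have := hf.2.1 hr.2
        rw [max_eq_left (by linarith)]
      · intro r hr
        have : s < r := by
          by_contra! h
          exact hr.2 ⟨hr.1, h⟩
        have := hf.2.1 this.le
        rw [max_eq_right (by linarith)]; simp
    have iD : IntegrableOn (fun r => r ^ (N - 1) * (max (f r - f s) 0 * f r ^ (q - 1))) (Ioi 0) := by
      refine Integrable.mono' iJ ?_ ?_
      · apply Measurable.aestronglyMeasurable
        have := hf.meas
        fun_prop
      · filter_upwards [ae_restrict_mem measurableSet_Ioi] with r hr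
        have h1 : 0 < r := hr
        have h2 := hf.nonneg r
        rw [Real.norm_of_nonneg (by positivity)]
        have : f r ^ q = f r * f r ^ (q - 1) := by
          rcases (hf.nonneg r).eq_or_lt with h | h
          · rw [← h, Real.zero_rpow hq0.ne']; simp
          · rw [mul_comm, ← Real.rpow_add_one h.ne']; congr 1; ring
        rw [this]
        gcongr
        exact max_le (by linarith) h2
    rw [← hJ, e1, JJ, JJ, ← integral_const_mul, ← integral_sub iJ (iD.const_mul _)]
    refine setIntegral_mono_on (iJ.sub (iD.const_mul _)) (hwA.int_J hq0) measurableSet_Ioi fun r hr => ?_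
    have h1 : 0 < r := hr
    have h2 := hf.nonneg r
    have h3 : max (f r - f s) 0 ≤ f r := max_le (by linarith) h2
    have h4 : 0 ≤ max (f r - f s) 0 := le_max_right _ _
    have hb := bern hq1 (x := f r) (y := t * max (f r - f s) 0) (by positivity) (by nlinarith)
    calc r ^ (N - 1) * f r ^ q - q * t * (r ^ (N - 1) * (max (f r - f s) 0 * f r ^ (q - 1)))
        = r ^ (N - 1) * (f r ^ q - q * (t * max (f r - f s) 0) * f r ^ (q - 1)) := by ring
      _ ≤ _ := by gcongr
  set D := A - f s * Q with hD
  have hLL := LL_nonneg (N := N) (p := p) (q := q) (R := R)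
  set Λ := LL N p q R with hΛ
  have hx0 : 0 ≤ q * t * D := by positivity
  have hx1 : q * t * D ≤ q * t := by
    have : 0 < q * t := by positivity
    nlinarith
  have hpq1 : p / q ≤ 1 := by rwa [div_le_one hq0]
  have hJw : 1 - p / q * (q * t * D / (1 - q * t * D)) ≤ JJ N q w ^ (p / q) :=
    (ineq2 (by positivity) hpq1 hx0 (by linarith)).trans
      (Real.rpow_le_rpow (by linarith) hJJ (by positivity))
  have hfin := LL_le (N := N) (p := p) hp0 hq0 hwA
  rw [hII] at hfin
  have h5 : p / q * (q * t * D / (1 - q * t * D)) ≤ p * t * D / (1 - q * t) := by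
    have : p / q * (q * t * D / (1 - q * t * D)) = p * t * D / (1 - q * t * D) := by field_simp
    rw [this]
    gcongr
    linarith
  have h6 : (1 - (1 - t) ^ p) * P ≤ Λ * (p * t * D / (1 - q * t)) + ε := by
    have : Λ * (1 - p * t * D / (1 - q * t)) ≤ Λ * JJ N q w ^ (p / q) := by gcongr; linarith
    linarith
  have h7 : p * t / (1 + p * t) * P ≤ Λ * (p * t * D / (1 - q * t)) + ε :=
    (mul_le_mul_of_nonneg_right (ineq1 hp ht ht2) hP0).trans h6
  have hqt' : 0 < 1 - q * t := by linarith
  have hpt : 0 < p * t := by positivity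
  calc P = (1 + p * t) * (p * t / (1 + p * t) * P) / (p * t) := by field_simp
    _ ≤ (1 + p * t) * (Λ * (p * t * D / (1 - q * t)) + ε) / (p * t) := by gcongr
    _ = _ := by field_simp
end


open MeasureTheory Metric Set Real

section
variable {N : ℕ}

lemma Adm.smul {R : ℝ} {f : ℝ → ℝ} (hf : Adm R f) {c : ℝ} (hc : 0 ≤ c) : Adm R (fun r => c * f r) := by
  obtain ⟨⟨K, hK⟩, ha, h0⟩ := hf
  refine ⟨⟨‖c‖₊ * K, (lipschitzWith_smul c).comp hK⟩, fun a b hab => ?_, fun r hr => by simp [h0 r hr]⟩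
  have := ha hab
  dsimp only
  gcongr

lemma exists_norm {p q R : ℝ} (hp : 1 < p) (hpq : p ≤ q) (hR : 0 < R) {ε : ℝ} (hε : 0 < ε) :
    ∃ f, Adm R f ∧ JJ N q f = 1 ∧ II N p f ≤ LL N p q R + ε := by
  have hq0 : 0 < q := by linarith
  obtain ⟨x, ⟨f, hf, hJ, rfl⟩, hx⟩ := exists_lt_of_csInf_lt (LL_set_nonempty (N := N) (p := p) (q := q) hR hq0)
    (show sInf {x | ∃ f, Adm R f ∧ 0 < JJ N q f ∧ x = II N p f / JJ N q f ^ (p/q)} < LL N p q R + ε by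
      change LL N p q R < _; linarith)
  have hc : 0 ≤ JJ N q f ^ (-1 / q) := by positivity
  refine ⟨_, hf.smul hc, ?_, ?_⟩
  · have : JJ N q (fun r => JJ N q f ^ (-1 / q) * f r) = (JJ N q f ^ (-1 / q)) ^ q * JJ N q f := by
      rw [JJ]
      nth_rewrite 3 [JJ]
      rw [← integral_const_mul]
      refine setIntegral_congr_fun measurableSet_Ioi fun r hr => ?_
      rw [Real.mul_rpow hc (hf.nonneg r)]; ring
    rw [this, ← Real.rpow_mul hJ.le, div_mul_cancel₀ _ hq0.ne', Real.rpow_neg_one, inv_mul_cancel₀ hJ.ne']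
  · have : II N p (fun r => JJ N q f ^ (-1 / q) * f r) = (JJ N q f ^ (-1 / q)) ^ p * II N p f := by
      rw [II, II, ← integral_const_mul]
      refine setIntegral_congr_fun measurableSet_Ioi fun r hr => ?_
      rw [deriv_const_mul_field, abs_mul, abs_of_nonneg hc, Real.mul_rpow hc (abs_nonneg _)]; ring
    rw [this, ← Real.rpow_mul hJ.le, show -1 / q * p = -(p / q) by ring, Real.rpow_neg hJ.le, mul_comm, ← div_eq_mul_inv]
    exact hx.le

lemma near_min {p q R : ℝ} (hp : 1 < p) (hpq : p ≤ q) (hR : 0 < R) {η : ℝ} (hη : 0 < η) :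
    ∃ f, Adm R f ∧ JJ N q f = 1 ∧ II N p f ≤ LL N p q R + η ∧ ∀ s, 0 < s →
     ∫ r in Ioc 0 s, r ^ (N - 1) * |deriv f r| ^ p ≤
      LL N p q R * ((∫ r in Ioc 0 s, r ^ (N - 1) * f r ^ q) -
        f s * (∫ r in Ioc 0 s, r ^ (N - 1) * f r ^ (q - 1))) + η := by
  have hq0 : 0 < q := by linarith
  have hp0 : 0 < p := by linarith
  have hL := LL_nonneg (N := N) (p := p) (q := q) (R := R)
  set Λ := LL N p q R with hΛ
  set t := min (1 / (2 * q)) (η / (4 * (Λ + 1) * (p + q))) with ht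
  have ht0 : 0 < t := by positivity
  have ht1 : t ≤ 1 / (2 * q) := min_le_left _ _
  have ht2 : t ≤ η / (4 * (Λ + 1) * (p + q)) := min_le_right _ _
  obtain ⟨f, hf, hJ, hI⟩ := exists_norm (N := N) hp hpq hR (ε := min η (η * (p * t) / 4)) (by positivity)
  refine ⟨f, hf, hJ, hI.trans (by gcongr; exact min_le_left _ _), fun s hs => ?_⟩
  have hI' : II N p f ≤ LL N p q R + η * (p * t) / 4 := hI.trans (by gcongr; exact min_le_right _ _)
  obtain ⟨h1, h2, h3⟩ := pert hp hpq hf hJ hI' ht0 ht1 hs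
  refine h3.trans ?_
  rw [← hΛ]
  set D := (∫ r in Ioc 0 s, r ^ (N - 1) * f r ^ q) - f s * (∫ r in Ioc 0 s, r ^ (N - 1) * f r ^ (q - 1))
  have hqt : q * t ≤ 1 / 2 := by
    rw [le_div_iff₀ (by positivity)] at ht1; linarith
  have hpt : p * t ≤ 1 / 2 := by nlinarith
  have h4 : Λ * ((p + q) * t) ≤ η / 4 := by
    rw [le_div_iff₀ (by positivity)] at ht2
    have : 0 ≤ (p + q) * t := by positivity
    nlinarith
  have e1 : η * (p * t) / 4 / (p * t) = η / 4 := by field_simp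
  rw [e1]
  have h5 : (1 + p * t) * (Λ * D / (1 - q * t)) ≤ Λ * D + 2 * (Λ * ((p + q) * t)) := by
    have h6 : 0 < 1 - q * t := by linarith
    rw [← mul_div_assoc, div_le_iff₀ h6]
    have hx : 0 ≤ Λ * ((p + q) * t) := by positivity
    have : Λ * ((p + q) * t) * D ≤ Λ * ((p + q) * t) := by nlinarith
    nlinarith
  nlinarith

lemma pow_int {R : ℝ} (hN : 1 ≤ N) (hR : 0 ≤ R) : ∫ r in Ioc (0:ℝ) R, r ^ (N - 1) = R ^ N / N := by
  rw [← intervalIntegral.integral_of_le hR, integral_pow]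
  have : N - 1 + 1 = N := by omega
  rw [this, zero_pow (by omega), sub_zero]
  congr 1
  have : ((N - 1 : ℕ) : ℝ) + 1 = ((N - 1 + 1 : ℕ) : ℝ) := by push_cast; ring
  rw [this]; congr 1

/-- positive lower bound at `b` -/
lemma fb_lower (hN : 1 ≤ N) {p q R b : ℝ} (hp : 1 < p) (hpq : p ≤ q) (hc : ltCritical N p q) (hb : 0 < b) (hbR : b < R) :
    ∃ m > 0, ∃ η₀ > 0, ∀ f, Adm R f → JJ N q f = 1 → II N p f ≤ LL N p q R + η₀ → m ≤ f b := by
  have hq0 : 0 < q := by linarith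
  have hp0 : 0 < p := by linarith
  have hR : 0 < R := hb.trans hbR
  have hL := LL_pos hN hp hpq hc hR
  have hLb := LL_pos hN hp hpq hc hb
  have hlt : LL N p q R < LL N p q b := by
    refine lt_of_lt_of_le ?_ (LL_scale hN hp hpq hb hR)
    have : 1 < (R / b) ^ ((N:ℝ) * (p / N + p / q - 1)) := by
      apply Real.one_lt_rpow ((one_lt_div hb).2 hbR)
      have := kappa_pos hN hp hpq hc
      have : (0:ℝ) < N := by exact_mod_cast hN
      positivity
    nlinarith
  set C := q * (R ^ N / N + 1) with hC
  have hC0 : 0 < C := by positivity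
  have hd : 0 < LL N p q b - LL N p q R := by linarith
  refine ⟨(LL N p q b - LL N p q R) / (2 * LL N p q b * C), by positivity, (LL N p q b - LL N p q R) / 2, by positivity,
    fun f hf hJ hI => ?_⟩
  have hfb := hf.nonneg b
  by_cases hbig : 1 ≤ f b * C
  · rw [div_le_iff₀ (by positivity)]
    nlinarith
  push Not at hbig
  set w := fun r => max (f r - f b) 0 with hw
  have hwA : Adm b w := by
    obtain ⟨⟨K, hK⟩, ha, h0⟩ := hf
    refine ⟨⟨K, (show LipschitzWith K fun r => f r - f b by simpa using hK.sub (LipschitzWith.const (f b))).max_const 0⟩, ?_, ?_⟩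
    · intro x y hxy
      have h1 := ha hxy
      simp only [hw]
      gcongr
    · intro r hr
      have h1 := ha hr
      simp only [hw]
      exact max_eq_right (by linarith)
  have hII : II N p w ≤ II N p f := by
    refine setIntegral_mono_on (hwA.int_I hp0) (hf.int_I hp0) measurableSet_Ioi fun r hr => ?_
    have h1 : 0 < r := hr
    by_cases hrb : b < r
    · rw [hwA.deriv_zero _ hrb]
      rw [abs_zero, Real.zero_rpow hp0.ne', mul_zero]; positivity
    rcases (not_lt.1 hrb).lt_or_eq with hrb | hrb
    · have : w =ᶠ[nhds r] fun r => f r - f b := by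
        filter_upwards [gt_mem_nhds hrb] with y hy
        have := hf.2.1 hy.le
        simp only [hw]
        rw [max_eq_left (by linarith)]
      rw [this.deriv_eq, deriv_sub_const]
    · have : deriv w r = 0 := by
        apply IsLocalMin.deriv_eq_zero
        filter_upwards with y
        simp only [hw, hrb, sub_self, max_self]
        exact le_max_right _ _
      rw [this, abs_zero, Real.zero_rpow hp0.ne', mul_zero]; positivity
  have iJ := hf.int_J (N := N) hq0
  have iQ := hf.int_J (N := N) (q := q - 1) (by linarith)
  have hQ : ∫ r in Ioi 0, r ^ (N - 1) * f r ^ (q - 1) ≤ R ^ N / N + 1 := by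
    have e : ∫ r in Ioi 0, r ^ (N - 1) * f r ^ (q - 1) = ∫ r in Ioc 0 R, r ^ (N - 1) * f r ^ (q - 1) := by
      rw [setIntegral_eq_of_subset_of_forall_sdiff_eq_zero (s := Ioc 0 R) measurableSet_Ioi (fun r hr => hr.1)]
      intro r hr
      have : R < r := by
        by_contra! h
        exact hr.2 ⟨hr.1, h⟩
      rw [hf.2.2 r this.le, Real.zero_rpow (by linarith), mul_zero]
    have i1 : IntegrableOn (fun r : ℝ => r ^ (N - 1)) (Ioc 0 R) :=
      (continuous_pow _).integrableOn_Ioc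
    have hsub : Ioc 0 R ⊆ Ioi (0:ℝ) := fun r hr => hr.1
    have e2 : ∫ r in Ioc 0 R, r ^ (N - 1) * f r ^ q ≤ 1 := by
      rw [← hJ, JJ, split_int iJ hR.le]
      have : 0 ≤ ∫ r in Ioi R, r ^ (N - 1) * f r ^ q := setIntegral_nonneg measurableSet_Ioi fun r hr => by
        have h1 : 0 < r := hR.trans hr
        have := hf.nonneg r
        positivity
      linarith
    rw [e, ← pow_int hN hR.le]
    refine le_trans ?_ (add_le_add_right e2 _)
    rw [← integral_add i1 (iJ.mono_set hsub)]
    refine setIntegral_mono_on (iQ.mono_set hsub) (i1.add (iJ.mono_set hsub)) measurableSet_Ioc fun r hr => ?_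
    have h1 : 0 < r := hr.1
    have h2 := hf.nonneg r
    have h3 : f r ^ (q - 1) ≤ 1 + f r ^ q := by
      rcases le_total (f r) 1 with h | h
      · have := Real.rpow_le_one h2 h (by linarith : 0 ≤ q - 1)
        have : 0 ≤ f r ^ q := by positivity
        linarith
      · have := Real.rpow_le_rpow_of_exponent_le h (by linarith : q - 1 ≤ q)
        linarith
    calc r ^ (N - 1) * f r ^ (q - 1) ≤ r ^ (N - 1) * (1 + f r ^ q) := by gcongr
      _ = _ := by ring
  have hJJ : 1 - f b * C ≤ JJ N q w := by
    have : JJ N q f - q * f b * (∫ r in Ioi 0, r ^ (N - 1) * f r ^ (q - 1)) ≤ JJ N q w := by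
      rw [JJ, JJ, ← integral_const_mul, ← integral_sub iJ (iQ.const_mul _)]
      refine setIntegral_mono_on (iJ.sub (iQ.const_mul _)) (hwA.int_J hq0) measurableSet_Ioi fun r hr => ?_
      have h1 : 0 < r := hr
      have hb := bern' (q := q) (by linarith) hfb (hf.nonneg r)
      calc r ^ (N - 1) * f r ^ q - q * f b * (r ^ (N - 1) * f r ^ (q - 1))
         = r ^ (N - 1) * (f r ^ q - q * f b * f r ^ (q - 1)) := by ring
        _ ≤ _ := by gcongr
    refine le_trans ?_ this
    rw [hJ, hC]
    have : q * f b * (∫ r in Ioi 0, r ^ (N - 1) * f r ^ (q - 1)) ≤ q * f b * (R ^ N / N + 1) := by gcongr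
    linarith
  have hfin := LL_le (N := N) (p := p) hp0 hq0 hwA
  have hpow : 1 - f b * C ≤ JJ N q w ^ (p / q) := by
    have h1 : (1 - f b * C) ^ (p / q) ≤ JJ N q w ^ (p / q) :=
      Real.rpow_le_rpow (by linarith) hJJ (by positivity)
    refine le_trans ?_ h1
    have : 0 ≤ f b * C := by positivity
    calc 1 - f b * C = (1 - f b * C) ^ (1:ℝ) := (Real.rpow_one _).symm
      _ ≤ _ := Real.rpow_le_rpow_of_exponent_ge (by linarith) (by linarith) (by rwa [div_le_one hq0])
  rw [div_le_iff₀ (by positivity)]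
  have : LL N p q b * (1 - f b * C) ≤ LL N p q b * JJ N q w ^ (p / q) := by gcongr
  linarith
end


open MeasureTheory Metric Set Real

section
variable {N : ℕ}

lemma ray_down {Ω : Set (EuclideanSpace ℝ (Fin N))} (hΩo : IsOpen Ω) (hΩc : Convex ℝ Ω)
    {x0 : EuclideanSpace ℝ (Fin N)} (hx0 : x0 ∈ closure Ω) {v : EuclideanSpace ℝ (Fin N)} {r s : ℝ}
    (hs : 0 < s) (hsr : s ≤ r) (hr : x0 + r • v ∈ Ω) : x0 + s • v ∈ Ω := by
  have hr0 : 0 < r := hs.trans_le hsr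
  have := hΩc.combo_closure_interior_mem_interior (a := 1 - s / r) (b := s / r) hx0 (by rwa [hΩo.interior_eq])
    (by rw [sub_nonneg, div_le_one hr0]; exact hsr) (by positivity) (by ring)
  rw [hΩo.interior_eq] at this
  convert this using 1
  rw [smul_add, smul_smul, div_mul_cancel₀ _ hr0.ne', sub_smul, one_smul]; abel

lemma sector (hN : 0 < N) {Ω : Set (EuclideanSpace ℝ (Fin N))} (hΩo : IsOpen Ω) (hΩb : Bornology.IsBounded Ω)
    (hΩc : Convex ℝ Ω) {x0 : EuclideanSpace ℝ (Fin N)} (hx0 : x0 ∈ closure Ω) {h : ℝ → ℝ} (hm : Measurable h)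
    {C : ℝ} (hb : ∀ r, 0 ≤ r → |h r| ≤ C) {η γ a b : ℝ} (hη0 : 0 ≤ η)
    (hη : ∀ s, 0 < s → ∫ r in Ioc 0 s, r ^ (N - 1) * h r ≤ η) (ha : 0 < a) (hb0 : 0 < b)
    (hγ : ∀ s, a ≤ s → s ≤ b → ∫ r in Ioc 0 s, r ^ (N - 1) * h r ≤ η - γ)
    {W : Set (sphere (0 : EuclideanSpace ℝ (Fin N)) 1)} (hW : MeasurableSet W)
    (hWa : ∀ ω ∈ W, x0 + a • (ω : EuclideanSpace ℝ (Fin N)) ∈ Ω)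
    (hWb : ∀ ω ∈ W, x0 + b • (ω : EuclideanSpace ℝ (Fin N)) ∉ Ω) :
    ∫ x in Ω, h ‖x - x0‖ ≤ η * sig N - γ * (volume.toSphere.real W) := by
  set Ω' := (fun x => x0 + x) ⁻¹' Ω with hΩ'
  have hΩ'o : IsOpen Ω' := hΩo.preimage (by fun_prop)
  have hvol : volume Ω' = volume Ω := measure_preimage_add _ _ _
  have hΩf : volume Ω < ⊤ := hΩb.measure_lt_top
  set F : EuclideanSpace ℝ (Fin N) → ℝ := Ω'.indicator (fun x => h ‖x‖) with hF
  have e1 : ∫ x in Ω, h ‖x - x0‖ = ∫ x, F x := by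
    rw [← integral_indicator hΩo.measurableSet, ← integral_add_left_eq_self _ x0]
    congr 1; funext x
    by_cases hx : x0 + x ∈ Ω
    · rw [indicator_of_mem hx, hF, indicator_of_mem (show x ∈ Ω' from hx)]; simp
    · rw [indicator_of_notMem hx, hF, indicator_of_notMem (show x ∉ Ω' from hx)]
  have hFi : Integrable F := by
    rw [hF, integrable_indicator_iff hΩ'o.measurableSet]
    refine Measure.integrableOn_of_bounded (M := C) (by rw [hvol]; exact hΩf.ne) ?_ ?_
    · exact (hm.comp measurable_norm).aestronglyMeasurable
    · filter_upwards with x using hb _ (norm_nonneg _)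
  obtain ⟨i1, e2⟩ := polar_integral hN hFi
  rw [e1, e2]
  have key : ∀ ω : sphere (0 : EuclideanSpace ℝ (Fin N)) 1,
      (∫ r in Ioi 0, r ^ (N - 1) * F (r • (ω : EuclideanSpace ℝ (Fin N)))) ≤ η - W.indicator (fun _ => γ) ω := by
    intro ω
    set T := {r : ℝ | 0 < r ∧ x0 + r • (ω : EuclideanSpace ℝ (Fin N)) ∈ Ω} with hT
    have hω : ‖(ω : EuclideanSpace ℝ (Fin N))‖ = 1 := by simpa using ω.2
    have hval : ∀ r, 0 < r → F (r • (ω : EuclideanSpace ℝ (Fin N))) = T.indicator h r := by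
      intro r hr
      by_cases hx : x0 + r • (ω : EuclideanSpace ℝ (Fin N)) ∈ Ω
      · rw [hF, indicator_of_mem (show r • (ω : EuclideanSpace ℝ (Fin N)) ∈ Ω' from hx),
          indicator_of_mem (show r ∈ T from ⟨hr, hx⟩), norm_smul, hω, mul_one, Real.norm_of_nonneg hr.le]
      · rw [hF, indicator_of_notMem (show r • (ω : EuclideanSpace ℝ (Fin N)) ∉ Ω' from hx),
          indicator_of_notMem (show r ∉ T from fun h => hx h.2)]
    have e3 : (∫ r in Ioi 0, r ^ (N - 1) * F (r • (ω : EuclideanSpace ℝ (Fin N)))) =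
        ∫ r in Ioi 0, r ^ (N - 1) * T.indicator h r :=
      setIntegral_congr_fun measurableSet_Ioi fun r hr => by rw [hval r hr]
    rw [e3]
    rcases T.eq_empty_or_nonempty with hTe | hTn
    · have hωW : ω ∉ W := fun h => by
        have : a ∈ T := ⟨ha, hWa ω h⟩
        rw [hTe] at this; exact this
      rw [hTe, indicator_of_notMem hωW]; simpa using hη0
    · have hTb : BddAbove T := by
        obtain ⟨B, hB⟩ := hΩb.subset_closedBall x0
        refine ⟨B, fun r hr => ?_⟩
        have := hB hr.2
        rw [mem_closedBall, dist_eq_norm, add_sub_cancel_left, norm_smul, hω, mul_one, Real.norm_of_nonneg hr.1.le] at this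
        exact this
      set s := sSup T with hs
      have hs1 : ∀ r ∈ T, r ≤ s := fun r hr => le_csSup hTb hr
      have hs0 : 0 < s := by
        obtain ⟨r, hr⟩ := hTn
        exact hr.1.trans_le (hs1 r hr)
      have hs2 : ∀ r, 0 < r → r < s → r ∈ T := by
        intro r hr hrs
        obtain ⟨t, ht, hrt⟩ := exists_lt_of_lt_csSup hTn hrs
        exact ⟨hr, ray_down hΩo hΩc hx0 hr hrt.le ht.2⟩
      have e4 : ∫ r in Ioi 0, r ^ (N - 1) * T.indicator h r = ∫ r in Ioc 0 s, r ^ (N - 1) * h r := by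
        rw [setIntegral_eq_of_subset_of_forall_sdiff_eq_zero (s := Ioc 0 s) measurableSet_Ioi (fun r hr => hr.1),
          integral_Ioc_eq_integral_Ioo, integral_Ioc_eq_integral_Ioo]
        · exact setIntegral_congr_fun measurableSet_Ioo fun r hr => by
            rw [indicator_of_mem (hs2 r hr.1 hr.2)]
        · intro r hr
          rw [indicator_of_notMem, mul_zero]
          intro hrT
          exact hr.2 ⟨hr.1, hs1 r hrT⟩
      rw [e4]
      by_cases hωW : ω ∈ W
      · rw [indicator_of_mem hωW]
        refine hγ s (hs1 a ⟨ha, hWa ω hωW⟩) ?_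
        refine csSup_le hTn fun r hr => ?_
        by_contra! hbr
        exact hWb ω hωW (ray_down hΩo hΩc hx0 hb0 hbr.le hr.2)
      · rw [indicator_of_notMem hωW, sub_zero]
        exact hη s hs0
  calc _ ≤ ∫ ω, (η - W.indicator (fun _ => γ) ω) ∂(volume : Measure (EuclideanSpace ℝ (Fin N))).toSphere := by
        refine integral_mono i1 ?_ key
        exact (integrable_const _).sub ((integrable_const _).indicator hW)
    _ = _ := by
        rw [integral_sub (integrable_const _) ((integrable_const _).indicator hW), integral_const, integral_indicator_const _ hW]
        simp only [sig, smul_eq_mul]; ring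

lemma halves (hN : 0 < N) {Ω : Set (EuclideanSpace ℝ (Fin N))} (hΩo : IsOpen Ω) 
    {x0 x1 : EuclideanSpace ℝ (Fin N)} (h0 : ∀ x ∈ Ω, ‖x - x0‖ ≤ ‖x1 - x0‖) (h1 : ∀ x ∈ Ω, ‖x - x1‖ ≤ ‖x1 - x0‖)
    {G : EuclideanSpace ℝ (Fin N) → ℝ} (hG : Integrable G) (hG0 : ∀ x, 0 ≤ G x) :
    (∫ x in Ω, G (x - x0)) + (∫ x in Ω, G (x - x1)) ≤ ∫ x, G x := by
  haveI : NeZero N := ⟨hN.ne'⟩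
  have tr : ∀ y : EuclideanSpace ℝ (Fin N), ∫ x in Ω, G (x - y) = ∫ x in (fun x => x + y) ⁻¹' Ω, G x := by
    intro y
    rw [← integral_indicator hΩo.measurableSet, ← integral_add_right_eq_self _ y,
      ← integral_indicator (hΩo.measurableSet.preimage (by fun_prop))]
    congr 1; funext x
    by_cases hx : x + y ∈ Ω
    · rw [indicator_of_mem hx, indicator_of_mem (show x ∈ (fun x => x + y) ⁻¹' Ω from hx)]; simp
    · rw [indicator_of_notMem hx, indicator_of_notMem (show x ∉ (fun x => x + y) ⁻¹' Ω from hx)]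
  rw [tr, tr]
  have hd : AEDisjoint volume ((fun x => x + x0) ⁻¹' Ω) ((fun x => x + x1) ⁻¹' Ω) := by
    refine measure_mono_null (t := {0}) ?_ (measure_singleton _)
    rintro y ⟨hy0, hy1⟩
    have a1 := h1 _ hy0
    have a0 := h0 _ hy1
    rw [mem_singleton_iff, ← norm_eq_zero]
    have b1 : ‖y - (x1 - x0)‖ ^ 2 ≤ ‖x1 - x0‖ ^ 2 := by
      gcongr; rwa [show y - (x1 - x0) = y + x0 - x1 by abel]
    have b0 : ‖y + (x1 - x0)‖ ^ 2 ≤ ‖x1 - x0‖ ^ 2 := by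
      gcongr; rwa [show y + (x1 - x0) = y + x1 - x0 by abel]
    rw [norm_sub_sq_real] at b1
    rw [norm_add_sq_real] at b0
    have : ‖y‖ ^ 2 ≤ 0 := by linarith
    exact pow_eq_zero_iff (two_ne_zero) |>.1 (le_antisymm this (by positivity))
  rw [← integral_union_ae hd ((hΩo.measurableSet.preimage (by fun_prop)).nullMeasurableSet) hG.integrableOn hG.integrableOn]
  exact setIntegral_le_integral hG (by filter_upwards with x using hG0 x)

lemma exists_W (hN : 0 < N) {Ω : Set (EuclideanSpace ℝ (Fin N))} (hΩo : IsOpen Ω) (hΩc : Convex ℝ Ω)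
    (hne : Ω.Nonempty) {x0 : EuclideanSpace ℝ (Fin N)} (hx0 : x0 ∈ closure Ω) {b : ℝ} (hb : 0 < b) :
    ∃ a, 0 < a ∧ a ≤ b ∧ ∃ τ > 0, ∀ a', 0 < a' → a' ≤ a → 
      ∃ W : Set (sphere (0 : EuclideanSpace ℝ (Fin N)) 1), MeasurableSet W ∧ τ ≤ volume.toSphere.real W ∧
      ∀ ω ∈ W, x0 + a' • (ω : EuclideanSpace ℝ (Fin N)) ∈ Ω := by
  haveI : NeZero N := ⟨hN.ne'⟩
  haveI : Nontrivial (EuclideanSpace ℝ (Fin N)) := by infer_instance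
  obtain ⟨z, hz, hzx⟩ : ∃ z ∈ Ω, z ≠ x0 := by
    by_contra! hcon
    have hs : Ω = {x0} := eq_singleton_iff_nonempty_unique_mem.2 ⟨hne, hcon⟩
    have := hΩo.measure_pos volume hne
    rw [hs] at this
    simp at this
  have hn : 0 < ‖z - x0‖ := by rwa [norm_pos_iff, sub_ne_zero]
  have hrz : x0 + ‖z - x0‖ • (‖z - x0‖⁻¹ • (z - x0)) ∈ Ω := by
    rw [smul_smul, mul_inv_cancel₀ hn.ne', one_smul]; simpa using hz
  have ha : 0 < min b ‖z - x0‖ := lt_min hb hn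
  refine ⟨min b ‖z - x0‖, ha, min_le_left _ _, ?_⟩
  set a := min b ‖z - x0‖
  set W := {ω : sphere (0 : EuclideanSpace ℝ (Fin N)) 1 | x0 + a • (ω : EuclideanSpace ℝ (Fin N)) ∈ Ω} with hW
  have hWo : IsOpen W := hΩo.preimage (by fun_prop)
  have hWn : W.Nonempty := by
    refine ⟨⟨‖z - x0‖⁻¹ • (z - x0), by simp [norm_smul, hn.ne']⟩, ?_⟩
    exact ray_down hΩo hΩc hx0 ha (min_le_right _ _) hrz
  refine ⟨volume.toSphere.real W, ?_, fun a' ha' haa' => ⟨W, hWo.measurableSet, le_rfl, fun ω hω => ?_⟩⟩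
  · exact ENNReal.toReal_pos (hWo.measure_pos _ hWn).ne' (measure_ne_top _ _)
  · exact ray_down hΩo hΩc hx0 ha' haa' hω
end


open MeasureTheory Metric Set Real

section
variable {N : ℕ}

lemma Q_bound (hN : 1 ≤ N) {q R : ℝ} (hq : 1 < q) (hR : 0 < R) {f : ℝ → ℝ} (hf : Adm R f) (hJ : JJ N q f = 1) :
    JJ N (q - 1) f ≤ R ^ N / N + 1 := by
  have hq0 : 0 < q := by linarith
  have iJ := hf.int_J (N := N) hq0
  have iQ := hf.int_J (N := N) (q := q - 1) (by linarith)
  have e : JJ N (q - 1) f = ∫ r in Ioc 0 R, r ^ (N - 1) * f r ^ (q - 1) := by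
    rw [JJ, setIntegral_eq_of_subset_of_forall_sdiff_eq_zero (s := Ioc 0 R) measurableSet_Ioi (fun r hr => hr.1)]
    intro r hr
    have : R < r := by
      by_contra! h
      exact hr.2 ⟨hr.1, h⟩
    rw [hf.2.2 r this.le, Real.zero_rpow (by linarith), mul_zero]
  have i1 : IntegrableOn (fun r : ℝ => r ^ (N - 1)) (Ioc 0 R) :=
    (continuous_pow _).integrableOn_Ioc
  have hsub : Ioc 0 R ⊆ Ioi (0:ℝ) := fun r hr => hr.1
  have e2 : ∫ r in Ioc 0 R, r ^ (N - 1) * f r ^ q ≤ 1 := by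
    rw [← hJ, JJ, split_int iJ hR.le]
    have : 0 ≤ ∫ r in Ioi R, r ^ (N - 1) * f r ^ q := setIntegral_nonneg measurableSet_Ioi fun r hr => by
      have h1 : 0 < r := hR.trans hr
      have := hf.nonneg r
      positivity
    linarith
  rw [e, ← pow_int hN hR.le]
  refine le_trans ?_ (add_le_add_right e2 _)
  rw [← integral_add i1 (iJ.mono_set hsub)]
  refine setIntegral_mono_on (iQ.mono_set hsub) (i1.add (iJ.mono_set hsub)) measurableSet_Ioc fun r hr => ?_
  have h1 : 0 < r := hr.1
  have h2 := hf.nonneg r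
  have h3 : f r ^ (q - 1) ≤ 1 + f r ^ q := by
    rcases le_total (f r) 1 with h | h
    · have := Real.rpow_le_one h2 h (by linarith : 0 ≤ q - 1)
      have : 0 ≤ f r ^ q := by positivity
      linarith
    · have := Real.rpow_le_rpow_of_exponent_le h (by linarith : q - 1 ≤ q)
      linarith
  calc r ^ (N - 1) * f r ^ (q - 1) ≤ r ^ (N - 1) * (1 + f r ^ q) := by gcongr
    _ = _ := by ring

lemma fderiv_radial_le {f : ℝ → ℝ} {x0 x : EuclideanSpace ℝ (Fin N)} (hx : x ≠ x0)
    (hf : DifferentiableAt ℝ f ‖x - x0‖) : ‖fderiv ℝ (fun y => f ‖y - x0‖) x‖ ≤ |deriv f ‖x - x0‖| := by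
  have hn : DifferentiableAt ℝ (fun y : EuclideanSpace ℝ (Fin N) => ‖y - x0‖) x :=
    (differentiableAt_id.sub_const x0).norm ℝ (sub_ne_zero.2 hx)
  have h1 := (hf.hasDerivAt.comp_hasFDerivAt x hn.hasFDerivAt).fderiv
  have e : (f ∘ fun y : EuclideanSpace ℝ (Fin N) => ‖y - x0‖) = fun y => f ‖y - x0‖ := rfl
  rw [e] at h1
  rw [h1, norm_smul, Real.norm_eq_abs]
  have hl : LipschitzWith 1 (fun y : EuclideanSpace ℝ (Fin N) => ‖y - x0‖) := by
    have : LipschitzWith 1 (fun y : EuclideanSpace ℝ (Fin N) => dist y x0) := LipschitzWith.dist_left x0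
    simpa only [dist_eq_norm] using this
  have := norm_fderiv_le_of_lipschitz ℝ hl (x₀ := x)
  calc _ ≤ |deriv f ‖x - x0‖| * 1 := by gcongr; simpa using this
    _ = _ := mul_one _

lemma ae_norm_sub (hN : 0 < N) {P : ℝ → Prop} (h : ∀ᵐ r : ℝ, P r) (x0 : EuclideanSpace ℝ (Fin N)) :
    ∀ᵐ x : EuclideanSpace ℝ (Fin N), P ‖x - x0‖ :=
  (measurePreserving_sub_right volume x0).quasiMeasurePreserving.ae (ae_norm hN h)

lemma rad_int {Ω : Set (EuclideanSpace ℝ (Fin N))} (hΩb : Bornology.IsBounded Ω)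
    {h : ℝ → ℝ} (hm : Measurable h) {C : ℝ} (hb : ∀ r, 0 ≤ r → |h r| ≤ C) (x0 : EuclideanSpace ℝ (Fin N)) :
    IntegrableOn (fun x => h ‖x - x0‖) Ω := by
  refine Measure.integrableOn_of_bounded (M := C) hΩb.measure_lt_top.ne ?_ ?_
  · apply Measurable.aestronglyMeasurable; fun_prop
  · filter_upwards with x using hb _ (norm_nonneg _)

lemma Adm.f_bdd {R : ℝ} {f : ℝ → ℝ} (hf : Adm R f) {q : ℝ} (hq : 0 ≤ q) : ∀ r, 0 ≤ r → |f r ^ q| ≤ f 0 ^ q := by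
  intro r hr
  have := hf.nonneg r
  rw [abs_of_nonneg (by positivity)]
  exact Real.rpow_le_rpow this (hf.anti0 hr) hq

lemma Adm.d_bdd {R : ℝ} {f : ℝ → ℝ} (hf : Adm R f) {p : ℝ} (hp : 0 ≤ p) : ∃ C, ∀ r, |(|deriv f r| ^ p)| ≤ C := by
  obtain ⟨⟨K, hK⟩, -, -⟩ := hf
  refine ⟨(K:ℝ) ^ p, fun r => ?_⟩
  rw [abs_of_nonneg (by positivity)]
  exact Real.rpow_le_rpow (abs_nonneg _) (norm_deriv_le_of_lipschitz hK) hp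

lemma test_fun (hN : 0 < N) {p q R c : ℝ} (hp : 1 < p) (hpq : p ≤ q) {Ω : Set (EuclideanSpace ℝ (Fin N))}
    (hΩo : IsOpen Ω) (hΩb : Bornology.IsBounded Ω) {x0 x1 : EuclideanSpace ℝ (Fin N)} 
    (hd : ‖x1 - x0‖ = 2 * R) {f : ℝ → ℝ} (hf : Adm R f) (hc : 0 < c)
    (hM : (∫ x in Ω, f ‖x - x0‖ ^ (q - 1)) = c ^ (q - 1) * ∫ x in Ω, f ‖x - x1‖ ^ (q - 1))
    (hA0 : 0 < ∫ x in Ω, f ‖x - x0‖ ^ q) :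
    muPQ p q Ω ≤ ((∫ x in Ω, |deriv f ‖x - x0‖| ^ p) + c ^ p * ∫ x in Ω, |deriv f ‖x - x1‖| ^ p) /
      ((∫ x in Ω, f ‖x - x0‖ ^ q) + c ^ q * ∫ x in Ω, f ‖x - x1‖ ^ q) ^ (p / q) := by
  have hq1 : 1 < q := by linarith
  have hq0 : 0 < q := by linarith
  have hp0 : 0 < p := by linarith
  have hfm := hf.meas
  have i0 : ∀ (s : ℝ) (_ : 0 ≤ s) (y : EuclideanSpace ℝ (Fin N)), IntegrableOn (fun x => f ‖x - y‖ ^ s) Ω := fun s hs y =>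
    rad_int hΩb (h := fun r => f r ^ s) (by fun_prop) (hf.f_bdd hs) y
  obtain ⟨Cd, hCd⟩ := hf.d_bdd hp0.le
  have iD : ∀ y : EuclideanSpace ℝ (Fin N), IntegrableOn (fun x => |deriv f ‖x - y‖| ^ p) Ω := fun y =>
    rad_int hΩb (h := fun r => |deriv f r| ^ p) (by have := measurable_deriv f; fun_prop) (fun r _ => hCd r) y
  have tri : ∀ x : EuclideanSpace ℝ (Fin N), 2 * R ≤ ‖x - x0‖ + ‖x - x1‖ := fun x => by
    rw [← hd]
    calc ‖x1 - x0‖ = ‖(x - x0) - (x - x1)‖ := by congr 1; abel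
      _ ≤ _ := norm_sub_le _ _
  have alt : ∀ x : EuclideanSpace ℝ (Fin N), f ‖x - x0‖ = 0 ∨ f ‖x - x1‖ = 0 := fun x => by
    rcases le_or_gt R ‖x - x0‖ with h | h
    · exact Or.inl (hf.2.2 _ h)
    · exact Or.inr (hf.2.2 _ (by linarith [tri x]))
  have hn := hf.nonneg
  set v : EuclideanSpace ℝ (Fin N) → ℝ := fun x => f ‖x - x0‖ - c * f ‖x - x1‖ with hv
  have hLip : ∃ K : NNReal, LipschitzWith K v := by
    obtain ⟨⟨K, hK⟩, -, -⟩ := hf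
    have hl : ∀ y : EuclideanSpace ℝ (Fin N), LipschitzWith 1 (fun x : EuclideanSpace ℝ (Fin N) => ‖x - y‖) := fun y => by
      have : LipschitzWith 1 (fun x : EuclideanSpace ℝ (Fin N) => dist x y) := LipschitzWith.dist_left y
      simpa only [dist_eq_norm] using this
    exact ⟨_, (hK.comp (hl x0)).sub ((lipschitzWith_smul c).comp (hK.comp (hl x1)))⟩
  obtain ⟨K, hK⟩ := hLip
  have hbdd : BddBelow { R : ℝ | ∃ v : EuclideanSpace ℝ (Fin N) → ℝ, ∃ K : NNReal,
    LipschitzOnWith K v (closure Ω) ∧ (∃ x ∈ Ω, v x ≠ 0) ∧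
    (∫ x in Ω, |v x| ^ (q - 2) * v x) = 0 ∧ R = rayleighQuot p q Ω v } := by
    refine ⟨0, ?_⟩
    rintro _ ⟨v, K, -, -, -, rfl⟩
    unfold rayleighQuot
    refine div_nonneg (integral_nonneg fun x => by positivity) (Real.rpow_nonneg (integral_nonneg fun x => by positivity) _)
  refine (csInf_le hbdd ⟨v, K, hK.lipschitzOnWith, ?_, ?_, rfl⟩).trans ?_
  · by_contra! hcon
    have : ∫ x in Ω, f ‖x - x0‖ ^ q = 0 := by
      rw [setIntegral_congr_fun (g := fun _ => (0:ℝ)) hΩo.measurableSet]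
      · simp
      · intro x hx
        have h1 := hcon x hx
        simp only [hv] at h1
        have : f ‖x - x0‖ = 0 := by
          rcases alt x with h | h
          · exact h
          · rw [h] at h1; linarith
        simp only [this]
        exact Real.zero_rpow hq0.ne'
    linarith
  · have : ∀ x, |v x| ^ (q - 2) * v x = f ‖x - x0‖ ^ (q - 1) - c ^ (q - 1) * f ‖x - x1‖ ^ (q - 1) := by
      intro x
      have key : ∀ y : ℝ, 0 ≤ y → y ^ (q - 2) * y = y ^ (q - 1) := fun y hy => by
        rcases hy.eq_or_lt with h | h
        · rw [← h, Real.zero_rpow (by linarith : q - 1 ≠ 0), mul_zero]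
        · rw [← Real.rpow_add_one h.ne']; congr 1; ring
      have z : (0:ℝ) ^ (q - 1) = 0 := Real.zero_rpow (by linarith)
      simp only [hv]
      rcases alt x with h | h
      · rw [h, z, zero_sub, abs_neg, abs_of_nonneg (mul_nonneg hc.le (hn _)), mul_neg, key _ (mul_nonneg hc.le (hn _)),
          Real.mul_rpow hc.le (hn _)]; ring
      · rw [h, z, mul_zero, sub_zero, abs_of_nonneg (hn _), key _ (hn _)]; ring
    simp only [this]
    rw [integral_sub (i0 _ (by linarith) _) ((i0 _ (by linarith) _).const_mul _), integral_const_mul, hM, sub_self]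
  · unfold rayleighQuot
    have den : ∫ x in Ω, |v x| ^ q = (∫ x in Ω, f ‖x - x0‖ ^ q) + c ^ q * ∫ x in Ω, f ‖x - x1‖ ^ q := by
      rw [← integral_const_mul, ← integral_add (i0 _ hq0.le _) ((i0 _ hq0.le _).const_mul _)]
      congr 1; funext x
      have z : (0:ℝ) ^ q = 0 := Real.zero_rpow hq0.ne'
      simp only [hv]
      rcases alt x with h | h
      · rw [h, z, zero_sub, abs_neg, abs_of_nonneg (mul_nonneg hc.le (hn _)), Real.mul_rpow hc.le (hn _)]; ring
      · rw [h, z, mul_zero, sub_zero, abs_of_nonneg (hn _)]; ring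
    rw [den]
    have hA1 : 0 ≤ ∫ x in Ω, f ‖x - x1‖ ^ q := integral_nonneg fun x => Real.rpow_nonneg (hn _) _
    refine div_le_div_of_nonneg_right ?_ (by positivity)
    rw [← integral_const_mul, ← integral_add (iD _) ((iD _).const_mul _)]
    refine integral_mono_of_nonneg (by filter_upwards with x; positivity) ((iD _).add ((iD _).const_mul _)) ?_
    obtain ⟨Kf, hKf⟩ := hf.1
    have hdf : ∀ᵐ r : ℝ, DifferentiableAt ℝ f r ∧ r ≠ R ∧ r ≠ 0 := by
      filter_upwards [hKf.ae_differentiableAt_real, Measure.ae_ne volume R, Measure.ae_ne volume 0] with r h1 h2 h3 using ⟨h1, h2, h3⟩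
    apply ae_restrict_of_ae
    filter_upwards [ae_norm_sub hN hdf x0, ae_norm_sub hN hdf x1] with x h0 h1
    have hne : ∀ {y}, ‖x - y‖ ≠ 0 → x ≠ y := fun h => sub_ne_zero.1 (norm_ne_zero_iff.1 h)
    have hcont : ∀ y : EuclideanSpace ℝ (Fin N), ContinuousAt (fun x => ‖x - y‖) x := fun y => by fun_prop
    have z : (0:ℝ) ^ p = 0 := Real.zero_rpow hp0.ne'
    change ‖fderiv ℝ v x‖ ^ p ≤ |deriv f ‖x - x0‖| ^ p + c ^ p * |deriv f ‖x - x1‖| ^ p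
    have big : ∀ y, R < ‖x - y‖ → ∀ᶠ x' in nhds x, f ‖x' - y‖ = 0 := fun y hy => by
      filter_upwards [(hcont y).eventually (lt_mem_nhds hy)] with x' hx' using hf.2.2 _ hx'.le
    rcases lt_or_gt_of_ne h0.2.1 with h | h
    · have e : v =ᶠ[nhds x] fun x => f ‖x - x0‖ := by
        filter_upwards [big x1 (by linarith [tri x])] with x' hx'
        simp only [hv, hx']; ring
      rw [e.fderiv_eq]
      have := Real.rpow_le_rpow (norm_nonneg _) (fderiv_radial_le (hne h0.2.2) h0.1) hp0.le
      have : 0 ≤ c ^ p * |deriv f ‖x - x1‖| ^ p := by positivity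
      linarith
    · have e : v =ᶠ[nhds x] (-c) • (fun x => f ‖x - x1‖) := by
        filter_upwards [big x0 h] with x' hx'
        simp only [hv, hx', Pi.smul_apply, smul_eq_mul]; ring
      rw [e.fderiv_eq, fderiv_const_smul_field, Pi.smul_apply, norm_smul, norm_neg, Real.norm_of_nonneg hc.le,
        Real.mul_rpow hc.le (norm_nonneg _)]
      have := Real.rpow_le_rpow (norm_nonneg _) (fderiv_radial_le (hne h1.2.2) h1.1) hp0.le
      have h5 : 0 ≤ |deriv f ‖x - x0‖| ^ p := by positivity
      have : c ^ p * ‖fderiv ℝ (fun y => f ‖y - x1‖) x‖ ^ p ≤ c ^ p * |deriv f ‖x - x1‖| ^ p := by gcongr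
      linarith
end


open MeasureTheory Metric Set Real

section
variable {N : ℕ}

lemma ioc_low (hN : 1 ≤ N) {R s a b t m : ℝ} {f : ℝ → ℝ} (hf : Adm R f) (hs : 0 < s) (ha : 0 < a) (hab : a ≤ b)
    (hat : a ≤ t) (hm : 0 ≤ m) (hmb : m ≤ f b) : m ^ s * (a ^ N / N) ≤ ∫ r in Ioc 0 t, r ^ (N - 1) * f r ^ s := by
  have i1 := hf.int_J (N := N) hs
  have hsub : ∀ t, Ioc 0 t ⊆ Ioi (0:ℝ) := fun t r hr => hr.1
  calc m ^ s * (a ^ N / N) = ∫ r in Ioc 0 a, m ^ s * r ^ (N - 1) := by rw [integral_const_mul, pow_int hN ha.le]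
    _ ≤ ∫ r in Ioc 0 a, r ^ (N - 1) * f r ^ s := by
      refine setIntegral_mono_on ((continuous_const.mul (continuous_pow _)).integrableOn_Ioc) (i1.mono_set (hsub a))
        measurableSet_Ioc fun r hr => ?_
      have h1 : 0 < r := hr.1
      have h2 : m ≤ f r := hmb.trans (hf.2.1 (hr.2.trans hab))
      rw [mul_comm]
      gcongr
    _ ≤ _ := by
      refine setIntegral_mono_set (i1.mono_set (hsub t)) ?_ (Ioc_subset_Ioc_right hat).eventuallyLE
      filter_upwards [ae_restrict_mem measurableSet_Ioc] with r hr
      have h1 : 0 < r := hr.1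
      have := hf.nonneg r
      positivity

lemma low (hN : 1 ≤ N) {Ω : Set (EuclideanSpace ℝ (Fin N))} (hΩo : IsOpen Ω) (hΩb : Bornology.IsBounded Ω)
    (hΩc : Convex ℝ Ω) {x0 : EuclideanSpace ℝ (Fin N)} (hx0 : x0 ∈ closure Ω)
    {R s a b m : ℝ} {f : ℝ → ℝ} (hf : Adm R f) (hs : 0 < s) (ha : 0 < a) (hab : a ≤ b)
    (hm : 0 ≤ m) (hmb : m ≤ f b) 
    {W : Set (sphere (0 : EuclideanSpace ℝ (Fin N)) 1)} (hW : MeasurableSet W)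
    (hWa : ∀ ω ∈ W, x0 + a • (ω : EuclideanSpace ℝ (Fin N)) ∈ Ω) :
    m ^ s * (a ^ N / N) * (volume.toSphere.real W) ≤ ∫ x in Ω, f ‖x - x0‖ ^ s := by
  obtain ⟨B, hB⟩ := hΩb.subset_closedBall x0
  have hfm := hf.meas
  have := sector (h := fun r => - f r ^ s) (C := f 0 ^ s) (η := 0) (γ := m ^ s * (a ^ N / N)) (a := a) (b := max B 0 + 1) 
    (by omega) hΩo hΩb hΩc hx0 (by fun_prop) 
    (fun r hr => by rw [abs_neg]; exact hf.f_bdd hs.le r hr) le_rfl ?_ ha (by positivity) ?_ hW hWa ?_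
  · rw [integral_neg] at this
    linarith
  · intro t ht
    simp only [mul_neg]
    rw [integral_neg, neg_nonpos]
    refine setIntegral_nonneg measurableSet_Ioc fun r hr => ?_
    have h1 : 0 < r := hr.1
    have := hf.nonneg r
    positivity
  · intro t hat _
    simp only [mul_neg]
    rw [integral_neg, zero_sub, neg_le_neg_iff]
    exact ioc_low hN hf hs ha hab hat hm hmb
  · intro ω _ hmem
    have h1 := hB hmem
    have hω : ‖(ω : EuclideanSpace ℝ (Fin N))‖ = 1 := by simp
    rw [mem_closedBall, dist_eq_norm, add_sub_cancel_left, norm_smul, hω, mul_one, Real.norm_of_nonneg (by positivity)] at h1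
    have := le_max_left B 0
    linarith

lemma energy (hN : 1 ≤ N) {Ω : Set (EuclideanSpace ℝ (Fin N))} (hΩo : IsOpen Ω) (hΩb : Bornology.IsBounded Ω)
    (hΩc : Convex ℝ Ω) {x0 : EuclideanSpace ℝ (Fin N)} (hx0 : x0 ∈ closure Ω)
    {p q R a b m η Λ : ℝ} (hp : 1 < p) (hpq : p ≤ q) (hη : 0 ≤ η) (hΛ : 0 ≤ Λ) 
    {f : ℝ → ℝ} (hf : Adm R f) (ha : 0 < a) (hab : a ≤ b)
    (hm : 0 ≤ m) (hmb : m ≤ f b) 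
    (hnear : ∀ s, 0 < s → ∫ r in Ioc 0 s, r ^ (N - 1) * |deriv f r| ^ p ≤
      Λ * ((∫ r in Ioc 0 s, r ^ (N - 1) * f r ^ q) -
        f s * (∫ r in Ioc 0 s, r ^ (N - 1) * f r ^ (q - 1))) + η)
    {W : Set (sphere (0 : EuclideanSpace ℝ (Fin N)) 1)} (hW : MeasurableSet W)
    (hWa : ∀ ω ∈ W, x0 + a • (ω : EuclideanSpace ℝ (Fin N)) ∈ Ω)
    (hWb : ∀ ω ∈ W, x0 + b • (ω : EuclideanSpace ℝ (Fin N)) ∉ Ω) :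
    ∫ x in Ω, |deriv f ‖x - x0‖| ^ p ≤ Λ * (∫ x in Ω, f ‖x - x0‖ ^ q) + η * sig N - 
      Λ * (m * (m ^ (q - 1) * (a ^ N / N))) * (volume.toSphere.real W) := by
  have hq0 : 0 < q := by linarith
  have hp0 : 0 < p := by linarith
  have hfm := hf.meas
  have hdm := measurable_deriv f
  obtain ⟨Cd, hCd⟩ := hf.d_bdd hp0.le
  have hsub : ∀ t, Ioc 0 t ⊆ Ioi (0:ℝ) := fun t r hr => hr.1
  have split : ∀ s, 0 < s → ∫ r in Ioc 0 s, r ^ (N - 1) * (|deriv f r| ^ p - Λ * f r ^ q) ≤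
      η - Λ * (f s * (∫ r in Ioc 0 s, r ^ (N - 1) * f r ^ (q - 1))) := by
    intro s hs
    have : ∫ r in Ioc 0 s, r ^ (N - 1) * (|deriv f r| ^ p - Λ * f r ^ q) = 
       (∫ r in Ioc 0 s, r ^ (N - 1) * |deriv f r| ^ p) - Λ * ∫ r in Ioc 0 s, r ^ (N - 1) * f r ^ q := by
      rw [← integral_const_mul, ← integral_sub ((hf.int_I hp0).mono_set (hsub s)) (((hf.int_J hq0).mono_set (hsub s)).const_mul _)]
      congr 1; funext r; ring
    rw [this]
    have := hnear s hs
    linarith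
  have hQ0 : ∀ s, 0 ≤ ∫ r in Ioc 0 s, r ^ (N - 1) * f r ^ (q - 1) := fun s =>
    setIntegral_nonneg measurableSet_Ioc fun r hr => by
      have h1 : 0 < r := hr.1
      have := hf.nonneg r
      positivity
  have := sector (h := fun r => |deriv f r| ^ p - Λ * f r ^ q) (C := Cd + Λ * f 0 ^ q) (η := η)
    (γ := Λ * (m * (m ^ (q - 1) * (a ^ N / N)))) (a := a) (b := b)
    (by omega) hΩo hΩb hΩc hx0 (by fun_prop) ?_ hη ?_ ha (ha.trans_le hab) ?_ hW hWa hWb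
  · rw [integral_sub, integral_const_mul] at this
    · linarith
    · exact rad_int hΩb (h := fun r => |deriv f r| ^ p) (by fun_prop) (fun r _ => hCd r) x0
    · exact (rad_int hΩb (h := fun r => f r ^ q) (by fun_prop) (hf.f_bdd hq0.le) x0).const_mul _
  · intro r hr
    refine (abs_sub _ _).trans (add_le_add (hCd r) ?_)
    rw [abs_mul, abs_of_nonneg hΛ]
    exact mul_le_mul_of_nonneg_left (hf.f_bdd hq0.le r hr) hΛ
  · intro s hs
    refine (split s hs).trans ?_
    have := mul_nonneg hΛ (mul_nonneg (hf.nonneg s) (hQ0 s))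
    linarith
  · intro s has hsb
    refine (split s (ha.trans_le has)).trans ?_
    have h1 := ioc_low hN hf (s := q - 1) (by linarith) ha hab has hm hmb
    have h2 : m ≤ f s := hmb.trans (hf.2.1 hsb)
    have h3 : 0 ≤ f s := hf.nonneg s
    have : Λ * (m * (m ^ (q - 1) * (a ^ N / N))) ≤ Λ * (f s * (∫ r in Ioc 0 s, r ^ (N - 1) * f r ^ (q - 1))) := by gcongr
    linarith

lemma rad_integrable {R s : ℝ} {f : ℝ → ℝ} (hf : Adm R f) (hs : 0 < s) :
    Integrable (fun x : EuclideanSpace ℝ (Fin N) => f ‖x‖ ^ s) := by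
  have h1 := rad_int (Ω := closedBall (0 : EuclideanSpace ℝ (Fin N)) R) isBounded_closedBall (h := fun r => f r ^ s)
    (by have := hf.meas; fun_prop) (hf.f_bdd hs.le) 0
  simp only [sub_zero] at h1
  rwa [integrableOn_iff_integrable_of_support_subset] at h1
  intro x hx
  by_contra hcon
  rw [mem_closedBall_zero_iff, not_le] at hcon
  apply hx
  simp only [hf.2.2 _ hcon.le]
  exact Real.zero_rpow hs.ne'

lemma upper (hN : 0 < N) {Ω : Set (EuclideanSpace ℝ (Fin N))} 
    {R s : ℝ} {f : ℝ → ℝ} (hf : Adm R f) (hs : 0 < s) (x0 : EuclideanSpace ℝ (Fin N)) :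
    ∫ x in Ω, f ‖x - x0‖ ^ s ≤ sig N * JJ N s f := by
  have h1 := rad_integrable (N := N) hf hs
  refine (setIntegral_le_integral (h1.comp_sub_right x0) ?_).trans (le_of_eq ?_)
  · filter_upwards with x using Real.rpow_nonneg (hf.nonneg _) _
  · rw [integral_sub_right_eq_self (fun x : EuclideanSpace ℝ (Fin N) => f ‖x‖ ^ s) x0]
    exact polar_radial hN (fun r => f r ^ s)

lemma holder2 {A0 A1 c p q S : ℝ} (hp : 0 < p) (hpq : p ≤ q) (hA0 : 0 < A0) (hA1 : 0 ≤ A1) (hc : 0 ≤ c) (hS : A0 + A1 ≤ S) :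
    A0 + c ^ p * A1 ≤ (A0 + c ^ q * A1) ^ (p / q) * S ^ (1 - p / q) := by
  have hq : 0 < q := by linarith
  have hpq1 : p / q ≤ 1 := by rwa [div_le_one hq]
  have hT : 0 < A0 + A1 := by linarith
  have h1 := (Real.concaveOn_rpow (p := p / q) (by positivity) hpq1).2 (show (1:ℝ) ∈ Ici 0 by simp)
    (show c ^ q ∈ Ici 0 by simp only [mem_Ici]; positivity)
    (show 0 ≤ A0 / (A0 + A1) by positivity) (show 0 ≤ A1 / (A0 + A1) by positivity) (by field_simp)
  simp only [smul_eq_mul, Real.one_rpow, mul_one] at h1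
  rw [← Real.rpow_mul hc, mul_div_cancel₀ _ hq.ne'] at h1
  have e : A0 / (A0 + A1) + A1 / (A0 + A1) * c ^ q = (A0 + c ^ q * A1) / (A0 + A1) := by field_simp
  have hcq : 0 ≤ c ^ q := by positivity
  rw [e, Real.div_rpow (by positivity) hT.le] at h1
  calc A0 + c ^ p * A1 = (A0 / (A0 + A1) + A1 / (A0 + A1) * c ^ p) * (A0 + A1) := by field_simp
    _ ≤ (A0 + c ^ q * A1) ^ (p / q) / (A0 + A1) ^ (p / q) * (A0 + A1) := by gcongr
    _ = (A0 + c ^ q * A1) ^ (p / q) * (A0 + A1) ^ (1 - p / q) := by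
      rw [Real.rpow_sub hT, Real.rpow_one]; ring
    _ ≤ _ := by
      gcongr
end


open MeasureTheory Metric Set Real

section
variable {N : ℕ}

set_option maxHeartbeats 1000000 in
lemma mu_bound (hN : 1 ≤ N) {p q R a b : ℝ} (hp : 1 < p) (hpq : p ≤ q) (hcr : ltCritical N p q)
    {Ω : Set (EuclideanSpace ℝ (Fin N))} (hΩo : IsOpen Ω) (hΩb : Bornology.IsBounded Ω)
    (hΩc : Convex ℝ Ω) (hne : Ω.Nonempty) {x0 x1 : EuclideanSpace ℝ (Fin N)} 
    (hx0 : x0 ∈ closure Ω) (hx1 : x1 ∈ closure Ω) (hR : 0 < R) (hd : ‖x1 - x0‖ = 2 * R)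
    (h0 : ∀ x ∈ Ω, ‖x - x0‖ ≤ ‖x1 - x0‖) (h1 : ∀ x ∈ Ω, ‖x - x1‖ ≤ ‖x1 - x0‖)
    (ha : 0 < a) (hab : a ≤ b) (hbR : b < R)
    {W : Set (sphere (0 : EuclideanSpace ℝ (Fin N)) 1)} (hW : MeasurableSet W)
    (hWa : ∀ ω ∈ W, x0 + a • (ω : EuclideanSpace ℝ (Fin N)) ∈ Ω)
    (hWb : ∀ ω ∈ W, x0 + b • (ω : EuclideanSpace ℝ (Fin N)) ∉ Ω) :
    ∃ G > 0, muPQ p q Ω ≤ sig N ^ (1 - p / q) * LL N p q R - volume.toSphere.real W * G := by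
  have hN0 : 0 < N := by omega
  have hNr : (0:ℝ) < N := by exact_mod_cast hN0
  have hb : 0 < b := ha.trans_le hab
  have hq1 : 1 < q := by linarith
  have hq0 : 0 < q := by linarith
  have hp0 : 0 < p := by linarith
  have hσ := sig_pos (N := N) hN0
  obtain ⟨m, hm, η₀, hη₀, hfb⟩ := fb_lower hN hp hpq hcr hb hbR
  obtain ⟨a0, ha0, hab0, τ0, hτ0, hW0⟩ := exists_W hN0 hΩo hΩc hne hx0 hb
  obtain ⟨a1, ha1, hab1, τ1, hτ1, hW1⟩ := exists_W hN0 hΩo hΩc hne hx1 hb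
  obtain ⟨W0, hW0m, hW0τ, hW0a⟩ := hW0 a0 ha0 le_rfl
  obtain ⟨W1, hW1m, hW1τ, hW1a⟩ := hW1 a1 ha1 le_rfl
  set Λ := LL N p q R with hΛ
  have hΛ0 : 0 < Λ := LL_pos hN hp hpq hcr hR
  set α := m ^ q * (a0 ^ N / N) * τ0 with hα
  have hα0 : 0 < α := by positivity
  set β := m ^ (q - 1) * (a1 ^ N / N) * τ1 with hβ
  have hβ0 : 0 < β := by positivity
  set B := sig N * (R ^ N / N + 1) with hB
  have hB0 : 0 < B := by positivity
  set Cc := (B / β) ^ (1 / (q - 1)) with hCc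
  have hCc0 : 0 < Cc := by positivity
  set Dm := sig N * (1 + Cc ^ q) with hDm
  have hDm0 : 0 < Dm := by positivity
  set g := Λ * (m * (m ^ (q - 1) * (a ^ N / N))) with hg
  have hg0 : 0 < g := by positivity
  set K := sig N * (1 + Cc ^ p) / α ^ (p / q) with hK
  have hK0 : 0 < K := by positivity
  set X := sig N ^ (1 - p / q) * Λ - volume.toSphere.real W * (g / Dm ^ (p / q)) with hX
  refine ⟨g / Dm ^ (p / q), by positivity, ?_⟩
  change _ ≤ X
  have main : ∀ η, 0 < η → η ≤ η₀ → muPQ p q Ω ≤ X + η * K := by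
    intro η hη hηle
    obtain ⟨f, hf, hJ, hI, hnear⟩ := near_min (N := N) hp hpq hR hη
    have hmb : m ≤ f b := hfb f hf hJ (hI.trans (by linarith))
    have E0 := energy hN hΩo hΩb hΩc hx0 hp hpq hη.le hΛ0.le hf ha hab hm.le hmb hnear hW hWa hWb
    have E1 := energy hN hΩo hΩb hΩc hx1 hp hpq hη.le hΛ0.le hf ha hab hm.le hmb hnear (W := ∅) MeasurableSet.empty
      (by simp) (by simp)
    simp only [measureReal_empty, mul_zero, sub_zero] at E1
    have A0l := low hN hΩo hΩb hΩc hx0 hf hq0 ha0 hab0 hm.le hmb hW0m hW0a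
    have M0l := low hN hΩo hΩb hΩc hx0 hf (s := q - 1) (by linarith) ha0 hab0 hm.le hmb hW0m hW0a
    have M1l := low hN hΩo hΩb hΩc hx1 hf (s := q - 1) (by linarith) ha1 hab1 hm.le hmb hW1m hW1a
    have M0u := upper hN0 (Ω := Ω) hf (s := q - 1) (by linarith) x0
    have hQb := Q_bound hN hq1 hR hf hJ
    have hhalf := halves hN0 hΩo h0 h1 (rad_integrable (N := N) hf hq0) (fun x => Real.rpow_nonneg (hf.nonneg _) _)
    rw [polar_radial hN0 (fun r => f r ^ q)] at hhalf
    change _ ≤ sig N * JJ N q f at hhalf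
    rw [hJ, mul_one] at hhalf
    set A0 := ∫ x in Ω, f ‖x - x0‖ ^ q with hA0
    set A1 := ∫ x in Ω, f ‖x - x1‖ ^ q with hA1
    set M0 := ∫ x in Ω, f ‖x - x0‖ ^ (q - 1) with hM0
    set M1 := ∫ x in Ω, f ‖x - x1‖ ^ (q - 1) with hM1
    set P0 := ∫ x in Ω, |deriv f ‖x - x0‖| ^ p with hP0
    set P1 := ∫ x in Ω, |deriv f ‖x - x1‖| ^ p with hP1
    have hA1n : 0 ≤ A1 := integral_nonneg fun x => Real.rpow_nonneg (hf.nonneg _) _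
    have hαA : α ≤ A0 := le_trans (by rw [hα]; gcongr) A0l
    have hβM : β ≤ M1 := le_trans (by rw [hβ]; gcongr) M1l
    have hM1p : 0 < M1 := hβ0.trans_le hβM
    have hM0p : 0 < M0 := lt_of_lt_of_le (by
      have : 0 < volume.toSphere.real W0 := hτ0.trans_le hW0τ
      positivity) M0l
    have hM0B : M0 ≤ B := M0u.trans (by rw [hB]; gcongr)
    have hA0p : 0 < A0 := hα0.trans_le hαA
    set c := (M0 / M1) ^ (1 / (q - 1)) with hc
    have hc0 : 0 < c := by positivity
    have hq1' : 0 < q - 1 := by linarith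
    have hcc : c ≤ Cc := by
      rw [hc, hCc]
      gcongr
    have hcM : M0 = c ^ (q - 1) * M1 := by
      rw [hc, ← Real.rpow_mul (by positivity), one_div, inv_mul_cancel₀ hq1'.ne', Real.rpow_one, div_mul_cancel₀ _ hM1p.ne']
    have ht := test_fun hN0 hp hpq hΩo hΩb hd hf hc0 hcM hA0p
    refine ht.trans ?_
    have hcq : 0 < c ^ q := by positivity
    have hcp : 0 < c ^ p := by positivity
    set D := A0 + c ^ q * A1 with hD
    have hDα : α ≤ D := by
      have : 0 ≤ c ^ q * A1 := by positivity
      linarith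
    have hD0 : 0 < D := hα0.trans_le hDα
    have hDD : D ≤ Dm := by
      have k1 : c ^ q ≤ Cc ^ q := Real.rpow_le_rpow hc0.le hcc hq0.le
      have : c ^ q * A1 ≤ Cc ^ q * sig N := by gcongr; linarith
      rw [hDm]; linarith
    have hol := holder2 hp0 hpq hA0p hA1n hc0.le hhalf
    rw [← hD] at hol
    have hDp : 0 < D ^ (p / q) := by positivity
    rw [div_le_iff₀ hDp]
    have hcpC : c ^ p ≤ Cc ^ p := Real.rpow_le_rpow hc0.le hcc hp0.le
    have s1 : P0 + c ^ p * P1 ≤ Λ * (A0 + c ^ p * A1) + η * (sig N * (1 + c ^ p)) - g * volume.toSphere.real W := by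
      have : c ^ p * P1 ≤ c ^ p * (Λ * A1 + η * sig N) := by gcongr
      linarith
    have hWn : 0 ≤ (volume : Measure (EuclideanSpace ℝ (Fin N))).toSphere.real W := measureReal_nonneg
    set ww := (volume : Measure (EuclideanSpace ℝ (Fin N))).toSphere.real W
    have s2 : η * (sig N * (1 + c ^ p)) ≤ η * K * D ^ (p / q) := by
      have k1 : α ^ (p / q) ≤ D ^ (p / q) := Real.rpow_le_rpow hα0.le hDα (by positivity)
      calc η * (sig N * (1 + c ^ p)) ≤ η * (sig N * (1 + Cc ^ p)) := by gcongr
        _ = η * K * α ^ (p / q) := by rw [hK]; field_simp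
        _ ≤ _ := by gcongr
    have s3 : ww * (g / Dm ^ (p / q)) * D ^ (p / q) ≤ g * ww := by
      have k1 : D ^ (p / q) ≤ Dm ^ (p / q) := Real.rpow_le_rpow hD0.le hDD (by positivity)
      calc ww * (g / Dm ^ (p / q)) * D ^ (p / q) ≤ ww * (g / Dm ^ (p / q)) * Dm ^ (p / q) := by gcongr
        _ = _ := by field_simp
    have s4 : Λ * (A0 + c ^ p * A1) ≤ Λ * (D ^ (p / q) * sig N ^ (1 - p / q)) := by gcongr
    rw [hX]
    linarith
  by_contra! hcon
  have hgap : 0 < muPQ p q Ω - X := by linarith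
  have := main (min η₀ ((muPQ p q Ω - X) / (2 * K))) (by positivity) (min_le_left _ _)
  have h3 : min η₀ ((muPQ p q Ω - X) / (2 * K)) * K ≤ (muPQ p q Ω - X) / 2 := by
    calc _ ≤ (muPQ p q Ω - X) / (2 * K) * K := by gcongr; exact min_le_right _ _
      _ = _ := by field_simp
  linarith
end


open MeasureTheory Metric Set Real

section
variable {N : ℕ}

lemma halfspace {Ω : Set (EuclideanSpace ℝ (Fin N))} (hΩc : Convex ℝ Ω) {z x0 : EuclideanSpace ℝ (Fin N)}
    (hx0 : x0 ∉ Ω) (hball : ball z ‖z - x0‖ ⊆ Ω) {x : EuclideanSpace ℝ (Fin N)} (hx : x ∈ Ω) :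
    0 ≤ inner ℝ (x - x0) (z - x0) := by
  by_contra! hneg
  set k := inner ℝ (x - x0) (z - x0) with hk
  have hxx : 0 < ‖x - x0‖ ^ 2 := by
    have : x - x0 ≠ 0 := by
      intro h; rw [hk, h, inner_zero_left] at hneg; linarith
    have := norm_pos_iff.2 this
    positivity
  set t := (-k) / ‖x - x0‖ ^ 2 with ht
  have ht0 : 0 < t := div_pos (by linarith) hxx
  have htx : t * ‖x - x0‖ ^ 2 = -k := by rw [ht, div_mul_cancel₀ _ hxx.ne']
  have hy : x0 - t • (x - x0) ∈ Ω := by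
    apply hball
    rw [mem_ball, dist_eq_norm]
    have e : x0 - t • (x - x0) - z = -(t • (x - x0) + (z - x0)) := by abel
    rw [e, norm_neg]
    apply lt_of_pow_lt_pow_left₀ 2 (norm_nonneg _)
    rw [norm_add_sq_real, norm_smul, inner_smul_left, mul_pow, Real.norm_eq_abs, sq_abs, ← hk]
    simp only [conj_trivial]
    have : t ^ 2 * ‖x - x0‖ ^ 2 = t * -k := by rw [← htx]; ring
    rw [this]
    nlinarith
  apply hx0
  have := hΩc hx hy (a := t / (1 + t)) (b := 1 / (1 + t)) (by positivity) (by positivity) (by field_simp; ring)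
  convert this using 1
  have h1 : (1 + t) ≠ 0 := by positivity
  have e : (t / (1 + t)) = (1 / (1 + t)) * t := by ring
  rw [e, mul_smul, ← smul_add]
  have : t • x + (x0 - t • (x - x0)) = (1 + t) • x0 := by
    rw [smul_sub, add_smul, one_smul]; abel
  rw [this, smul_smul, one_div, inv_mul_cancel₀ h1, one_smul]

lemma exists_dir (hN : 2 ≤ N) {e : EuclideanSpace ℝ (Fin N)} (he : ‖e‖ = 1) :
    ∃ w : EuclideanSpace ℝ (Fin N), ‖w‖ = 1 ∧ inner ℝ w e = 3 / 32 := by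
  have hc : IsPreconnected (sphere (0 : EuclideanSpace ℝ (Fin N)) 1) := by
    apply isPreconnected_sphere
    rw [← Module.finrank_eq_rank]
    simp only [finrank_euclideanSpace, Fintype.card_fin]
    exact_mod_cast hN
  have h1 : e ∈ sphere (0 : EuclideanSpace ℝ (Fin N)) 1 := by simpa using he
  have h2 : -e ∈ sphere (0 : EuclideanSpace ℝ (Fin N)) 1 := by simpa using he
  have := hc.intermediate_value h2 h1 (f := fun w => inner ℝ w e) (by fun_prop)
  have hm : (3 / 32 : ℝ) ∈ Icc (inner ℝ (-e) e) (inner ℝ e e) := by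
    rw [inner_neg_left, real_inner_self_eq_norm_sq, he]; constructor <;> norm_num
  obtain ⟨w, hw, hwe⟩ := this hm
  exact ⟨w, by simpa using hw, hwe⟩

lemma vol_ball (hN : 1 ≤ N) (s : ℝ) (hs : 0 ≤ s) (x : EuclideanSpace ℝ (Fin N)) :
    volume (ball x s) = ENNReal.ofReal (s ^ N) * volume (ball (0 : EuclideanSpace ℝ (Fin N)) 1) := by
  have : NeZero N := ⟨by omega⟩
  have := Measure.addHaar_ball (volume : Measure (EuclideanSpace ℝ (Fin N))) x hs
  simpa using this

/-- half difference set -/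
lemma isodiam (hN : 1 ≤ N) {Ω : Set (EuclideanSpace ℝ (Fin N))} (hΩo : IsOpen Ω) (hΩb : Bornology.IsBounded Ω)
    {ρ : ℝ} (hρ : 0 < ρ) (hv : volume Ω = volume (ball (0 : EuclideanSpace ℝ (Fin N)) ρ)) :
    ∃ C : Set (EuclideanSpace ℝ (Fin N)), IsOpen C ∧ (∀ c ∈ C, ∃ x ∈ Ω, ∃ y ∈ Ω, c = (1/2 : ℝ) • (x - y)) ∧
      volume (ball (0 : EuclideanSpace ℝ (Fin N)) ρ) ≤ volume C := by
  set A := (fun x : EuclideanSpace ℝ (Fin N) => (2:ℝ) • x) ⁻¹' Ω with hA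
  set B := (fun x : EuclideanSpace ℝ (Fin N) => (-2:ℝ) • x) ⁻¹' Ω with hB
  have hAo : IsOpen A := hΩo.preimage (by fun_prop)
  have hBo : IsOpen B := hΩo.preimage (by fun_prop)
  set C := ⋃ b ∈ B, (fun x => x - b) ⁻¹' A with hC
  have hCo : IsOpen C := isOpen_biUnion fun b _ => hAo.preimage (by fun_prop)
  obtain ⟨M, hM⟩ := hΩb.subset_closedBall 0
  have bd : ∀ x ∈ Ω, ‖x‖ ≤ M := fun x hx => by simpa using hM hx
  have hrep : ∀ c ∈ C, ∃ x ∈ Ω, ∃ y ∈ Ω, c = (1/2 : ℝ) • (x - y) := by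
    intro c hc
    simp only [hC, mem_iUnion, mem_preimage] at hc
    obtain ⟨b, hb, hc⟩ := hc
    refine ⟨_, hc, _, hb, ?_⟩
    module
  have hA' : Bornology.IsBounded A := by
    refine isBounded_closedBall.subset (?_ : A ⊆ closedBall 0 M)
    intro x hx
    have := bd _ hx
    rw [norm_smul] at this
    norm_num at this
    have := norm_nonneg x
    simp only [mem_closedBall_zero_iff]; linarith
  have hB' : Bornology.IsBounded B := by
    refine isBounded_closedBall.subset (?_ : B ⊆ closedBall 0 M)
    intro x hx
    have := bd _ hx
    rw [norm_smul] at this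
    norm_num at this
    have := norm_nonneg x
    simp only [mem_closedBall_zero_iff]; linarith
  have hC' : Bornology.IsBounded C := by
    refine isBounded_closedBall.subset (?_ : C ⊆ closedBall 0 M)
    intro c hc
    obtain ⟨x, hx, y, hy, rfl⟩ := hrep c hc
    rw [mem_closedBall_zero_iff, norm_smul]
    have := norm_sub_le x y
    have := bd x hx
    have := bd y hy
    norm_num
    linarith
  have vol2 : ∀ t : ℝ, |t| = 2 → volume ((fun x : EuclideanSpace ℝ (Fin N) => t • x) ⁻¹' Ω) = 
      volume (ball (0 : EuclideanSpace ℝ (Fin N)) (ρ / 2)) := by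
    intro t ht
    have ht0 : t ≠ 0 := by intro h; rw [h] at ht; norm_num at ht
    rw [Measure.addHaar_preimage_smul _ ht0, hv, vol_ball hN ρ hρ.le, vol_ball hN (ρ / 2) (by positivity), ← mul_assoc,
      ← ENNReal.ofReal_mul (abs_nonneg _), abs_inv, abs_pow, ht]
    simp only [finrank_euclideanSpace, Fintype.card_fin]
    congr 2
    rw [div_pow]; ring
  refine ⟨C, hCo, hrep, ?_⟩
  have := bm_ball hAo hBo hCo hA' hB' hC' (a := ρ / 2) (b := ρ / 2) ?_ (by positivity) (by positivity)
    (vol2 2 (by norm_num)) (vol2 (-2) (by norm_num))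
  · simpa using this
  · intro a ha b hb
    simp only [hC, mem_iUnion, mem_preimage]
    exact ⟨b, hb, by simpa using ha⟩

lemma full_closure (hN : 1 ≤ N) {C : Set (EuclideanSpace ℝ (Fin N))} {R : ℝ} (hR : 0 < R) (hC : IsOpen C) (hCR : C ⊆ closedBall 0 R)
    (hv : volume (ball (0 : EuclideanSpace ℝ (Fin N)) R) ≤ volume C) : closedBall 0 R ⊆ closure C := by
  have : NeZero N := ⟨by omega⟩
  rw [← closure_ball _ hR.ne']
  refine closure_minimal ?_ isClosed_closure
  intro x hx
  by_contra hcon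
  have hU : IsOpen (ball 0 R \ closure C) := isOpen_ball.sdiff isClosed_closure
  have hp := hU.measure_pos volume ⟨x, hx, hcon⟩
  have hd : Disjoint C (ball 0 R \ closure C) := disjoint_left.2 fun y hy hy' => hy'.2 (subset_closure hy)
  have h1 := measure_union hd hU.measurableSet (μ := volume)
  have h2 : volume (C ∪ (ball 0 R \ closure C)) ≤ volume (closedBall (0 : EuclideanSpace ℝ (Fin N)) R) :=
    measure_mono (union_subset hCR (sdiff_subset.trans ball_subset_closedBall))
  rw [Measure.addHaar_closedBall_eq_addHaar_ball, h1] at h2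
  have hfin : volume C ≠ ⊤ := ((measure_mono hCR).trans_lt isBounded_closedBall.measure_lt_top).ne
  have h3 : volume C < volume C + volume (ball 0 R \ closure C) := ENNReal.lt_add_right hfin hp.ne'
  exact absurd (h3.trans_le (h2.trans hv)) (lt_irrefl _)
end


open MeasureTheory Metric Set Real

theorem eq_case {N : ℕ} (hN : 2 ≤ N) {p q : ℝ} (hp : 1 < p)
    (hpq : p ≤ q) (hq : ltCritical N p q)
    {Ω : Set (EuclideanSpace ℝ (Fin N))} (hΩo : IsOpen Ω)
    (hΩb : Bornology.IsBounded Ω) (hΩc : Convex ℝ Ω) (hΩne : Ω.Nonempty) {ρ : ℝ} (hρ : 0 < ρ)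
    (hmax' : ∀ x ∈ closure Ω, ∀ y ∈ closure Ω, ‖x - y‖ ≤ 2 * ρ) {C : Set (EuclideanSpace ℝ (Fin N))}
    (hCrep : ∀ c ∈ C, ∃ x ∈ Ω, ∃ y ∈ Ω, c = (1/2 : ℝ) • (x - y)) (hfull : closedBall 0 ρ ⊆ closure C) :
    muPQ p q Ω < sig N ^ (1 - p / q) * LL N p q ρ := by
  have hN1 : 1 ≤ N := by omega
  have hN0 : 0 < N := by omega
  have : NeZero N := ⟨by omega⟩
  have hcpt : IsCompact (closure Ω) := hΩb.isCompact_closure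
  obtain ⟨z, hz⟩ := hΩne
  have hcompl : (Ωᶜ).Nonempty := by
    rw [nonempty_compl]
    intro h
    rw [h] at hΩb
    exact NormedSpace.unbounded_univ ℝ (EuclideanSpace ℝ (Fin N)) hΩb
  obtain ⟨x0, hx0, hdist⟩ := hΩo.isClosed_compl.exists_infDist_eq_dist hcompl z
  have hzx : z ≠ x0 := fun h => hx0 (h ▸ hz)
  set d0 := ‖z - x0‖ with hd0
  have hd0p : 0 < d0 := norm_pos_iff.2 (sub_ne_zero.2 hzx)
  have hball : ball z d0 ⊆ Ω := by
    intro x hx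
    by_contra hcon
    have h1 := infDist_le_dist_of_mem (x := z) (show x ∈ Ωᶜ from hcon)
    rw [hdist, dist_eq_norm, dist_comm] at h1
    rw [mem_ball] at hx
    linarith
  have hx0c : x0 ∈ closure Ω := by
    refine closure_mono hball ?_
    rw [closure_ball _ hd0p.ne', mem_closedBall, dist_comm, dist_eq_norm]
  set e := d0⁻¹ • (z - x0) with he
  have hen : ‖e‖ = 1 := by rw [he, norm_smul, norm_inv, norm_norm, inv_mul_cancel₀ hd0p.ne']
  have hze : z - x0 = d0 • e := by rw [he, smul_smul, mul_inv_cancel₀ hd0p.ne', one_smul]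
  have hhs : ∀ x ∈ closure Ω, 0 ≤ inner ℝ (x - x0) e := by
    have hcl : IsClosed {x : EuclideanSpace ℝ (Fin N) | 0 ≤ inner ℝ (x - x0) e} :=
      isClosed_le continuous_const (by fun_prop)
    refine fun x hx => closure_minimal ?_ hcl hx
    intro y hy
    have := halfspace hΩc hx0 hball hy
    rw [hze, inner_smul_right] at this
    exact nonneg_of_mul_nonneg_right this hd0p
  -- opposite point
  have hmem : ρ • e ∈ closure C := hfull (by simp [norm_smul, hen, abs_of_pos hρ])
  have himg : closure C ⊆ (fun z : EuclideanSpace ℝ (Fin N) × EuclideanSpace ℝ (Fin N) => (1/2 : ℝ) • (z.1 - z.2)) '' (closure Ω ×ˢ closure Ω) := by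
    refine closure_minimal ?_ ((hcpt.prod hcpt).image (by fun_prop)).isClosed
    intro y hy
    obtain ⟨u, hu, w, hw, rfl⟩ := hCrep y hy
    exact ⟨(u, w), ⟨subset_closure hu, subset_closure hw⟩, rfl⟩
  obtain ⟨⟨x1, w⟩, ⟨hx1, hw⟩, hxw⟩ := himg hmem
  have hxw' : x1 - w = (2 * ρ) • e := by
    have : (2:ℝ) • ((1/2 : ℝ) • (x1 - w)) = (2:ℝ) • (ρ • e) := congrArg _ hxw
    rw [smul_smul, smul_smul] at this
    norm_num at this
    exact this
  have hx1e : x1 - x0 = (2 * ρ) • e := by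
    have h1 : 2 * ρ ≤ inner ℝ (x1 - x0) e := by
      have h2 : x1 - x0 = (2 * ρ) • e + (w - x0) := by rw [← hxw']; abel
      rw [h2, inner_add_left, inner_smul_left, real_inner_self_eq_norm_sq, hen]
      have := hhs w hw
      simp only [conj_trivial]
      linarith
    have h3 := hmax' x1 hx1 x0 hx0c
    rw [← sub_eq_zero, ← norm_eq_zero]
    have h4 : ‖x1 - x0 - (2 * ρ) • e‖ ^ 2 ≤ 0 := by
      rw [norm_sub_sq_real, inner_smul_right, norm_smul, hen, Real.norm_of_nonneg (by positivity)]
      have h5 := norm_nonneg (x1 - x0)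
      nlinarith
    exact pow_eq_zero_iff (two_ne_zero) |>.1 (le_antisymm h4 (by positivity))
  have hd1 : ‖x1 - x0‖ = 2 * ρ := by rw [hx1e, norm_smul, hen, mul_one, Real.norm_of_nonneg (by positivity)]
  set W := {ω : sphere (0 : EuclideanSpace ℝ (Fin N)) 1 | 1 / 16 < inner ℝ (ω : EuclideanSpace ℝ (Fin N)) e ∧ 
    inner ℝ (ω : EuclideanSpace ℝ (Fin N)) e < 1 / 8} with hW
  have hWo : IsOpen W := by
    have hc : Continuous (fun ω : sphere (0 : EuclideanSpace ℝ (Fin N)) 1 => (inner ℝ (ω : EuclideanSpace ℝ (Fin N)) e : ℝ)) := by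
      fun_prop
    exact (isOpen_Ioo (a := (1/16:ℝ)) (b := 1/8)).preimage hc
  have hWne : W.Nonempty := by
    obtain ⟨w, hw1, hw2⟩ := exists_dir hN hen
    refine ⟨⟨w, by simpa using hw1⟩, ?_, ?_⟩
    · change _ < inner ℝ w e
      rw [hw2]; norm_num
    · change inner ℝ w e < _
      rw [hw2]; norm_num
  have hωn : ∀ ω : sphere (0 : EuclideanSpace ℝ (Fin N)) 1, ‖(ω : EuclideanSpace ℝ (Fin N))‖ = 1 := fun ω => by simp
  have hsq : ∀ (ω : sphere (0 : EuclideanSpace ℝ (Fin N)) 1) (t s : ℝ), ‖t • (ω : EuclideanSpace ℝ (Fin N)) - s • e‖ ^ 2 =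
      t ^ 2 - 2 * t * s * inner ℝ (ω : EuclideanSpace ℝ (Fin N)) e + s ^ 2 := fun ω t s => by
    rw [norm_sub_sq_real, norm_smul, norm_smul, hωn, hen, inner_smul_left, inner_smul_right]
    simp only [conj_trivial, mul_one, Real.norm_eq_abs, sq_abs]; ring
  set a := min (d0 / 8) (3 * ρ / 4) with ha
  have ha0 : 0 < a := by positivity
  have had : a ≤ d0 / 8 := min_le_left _ _
  obtain ⟨G, hG, hμ⟩ := mu_bound hN1 hp hpq hq hΩo hΩb hΩc ⟨z, hz⟩ hx0c hx1 hρ hd1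
    (fun x hx => by rw [hd1]; exact hmax' x (subset_closure hx) x0 hx0c)
    (fun x hx => by rw [hd1]; exact hmax' x (subset_closure hx) x1 hx1)
    (a := a) (b := 3 * ρ / 4) ha0 (min_le_right _ _) (by linarith) (W := W) hWo.measurableSet 
    (by
      intro ω hω
      apply hball
      rw [mem_ball, dist_eq_norm]
      have e1 : x0 + a • (ω : EuclideanSpace ℝ (Fin N)) - z = a • (ω : EuclideanSpace ℝ (Fin N)) - d0 • e := by
        rw [← hze]; abel
      rw [e1]
      apply lt_of_pow_lt_pow_left₀ 2 hd0p.le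
      rw [hsq]
      have h1 := hω.1
      have : 0 < a * d0 := by positivity
      nlinarith) 
    (by
      intro ω hω hmemb
      have h1 := hmax' _ (subset_closure hmemb) x1 hx1
      have e1 : x0 + (3 * ρ / 4) • (ω : EuclideanSpace ℝ (Fin N)) - x1 = (3 * ρ / 4) • (ω : EuclideanSpace ℝ (Fin N)) - (2 * ρ) • e := by
        rw [← hx1e]; abel
      rw [e1] at h1
      have h2 : ‖(3 * ρ / 4) • (ω : EuclideanSpace ℝ (Fin N)) - (2 * ρ) • e‖ ^ 2 ≤ (2 * ρ) ^ 2 := by gcongr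
      rw [hsq] at h2
      have h3 := hω.2
      have : 0 < ρ ^ 2 := by positivity
      nlinarith)
  refine hμ.trans_lt ?_
  have hWpos : 0 < (volume : Measure (EuclideanSpace ℝ (Fin N))).toSphere.real W :=
    ENNReal.toReal_pos (hWo.measure_pos _ hWne).ne' (measure_ne_top _ _)
  have := mul_pos hWpos hG
  linarith



open MeasureTheory Metric Set Real

theorem diam_pair {E : Type*} [NormedAddCommGroup E] {K : Set E} (hK : IsCompact K) (hne : K.Nonempty) :
    ∃ y0 ∈ K, ∃ y1 ∈ K, ∀ x ∈ K, ∀ y ∈ K, ‖x - y‖ ≤ ‖y1 - y0‖ := by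
  have hc : Continuous (fun z : E × E => ‖z.2 - z.1‖) := by fun_prop
  obtain ⟨z, hz, hmax⟩ := (hK.prod hK).exists_isMaxOn (hne.prod hne) hc.continuousOn
  refine ⟨z.1, hz.1, z.2, hz.2, fun x hx y hy => ?_⟩
  have h := (isMaxOn_iff.1 hmax) (y, x) (Set.mk_mem_prod hy hx)
  exact h

set_option maxHeartbeats 400000 in
theorem main_aux {N : ℕ} (hN : 2 ≤ N) (p q : ℝ) (hp : 1 < p)
    (hpq : p ≤ q) (hq : ltCritical N p q)
    (Ω : Set (EuclideanSpace ℝ (Fin N))) (hΩo : IsOpen Ω)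
    (hΩb : Bornology.IsBounded Ω) (hΩc : Convex ℝ Ω) (hΩne : Ω.Nonempty)
    (c : EuclideanSpace ℝ (Fin N)) (r : ℝ) (hr : 0 < r) :
    muPQ p q Ω < lambdaPQ p q (ball c r) *
      ((volume (ball c r)).toReal / (volume Ω).toReal) ^ (p / N + p / q - 1) := by
  have hN1 : 1 ≤ N := by omega
  have hN0 : 0 < N := by omega
  have hNr : (0:ℝ) < N := by exact_mod_cast hN0
  have : NeZero N := ⟨by omega⟩
  have hσ := sig_pos (N := N) hN0
  have hp0 : 0 < p := by linarith
  have hq0 : 0 < q := by linarith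
  have hcpt : IsCompact (closure Ω) := hΩb.isCompact_closure
  have hcne : (closure Ω).Nonempty := hΩne.closure
  -- diametral pair
  obtain ⟨y0, hy0, y1, hy1, hmax'⟩ := diam_pair hcpt hcne
  obtain ⟨ρ, hρ0, hρv⟩ := exists_ball_volume (n := N) hN0 (V := volume Ω) hΩb.measure_lt_top.ne
  have hΩpos : 0 < volume Ω := hΩo.measure_pos volume hΩne
  have hρ : 0 < ρ := by
    rcases hρ0.eq_or_lt with h | h
    · rw [← h, ball_zero] at hρv
      simp at hρv
      rw [← hρv] at hΩpos; simp at hΩpos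
    · exact h
  obtain ⟨R, hRd⟩ : ∃ R, ‖y1 - y0‖ = 2 * R := ⟨‖y1 - y0‖ / 2, by ring⟩
  have hR0 : 0 ≤ R := by have := norm_nonneg (y1 - y0); linarith
  obtain ⟨C, hCo, hCrep, hCv⟩ := isodiam hN1 hΩo hΩb hρ hρv.symm
  have hCR : C ⊆ closedBall 0 R := by
    intro x hx
    obtain ⟨u, hu, w, hw, rfl⟩ := hCrep x hx
    rw [mem_closedBall_zero_iff, norm_smul]
    have := hmax' u (subset_closure hu) w (subset_closure hw)
    norm_num
    linarith
  have hρR : ρ ≤ R := by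
    by_contra! hlt
    have h1 := (ball_volume_lt_iff (n := N) hN0 hR0).2 hlt
    have h2 : volume C ≤ volume (closedBall (0 : EuclideanSpace ℝ (Fin N)) R) := measure_mono hCR
    rw [Measure.addHaar_closedBall_eq_addHaar_ball] at h2
    exact absurd (h1.trans_le (hCv.trans h2)) (lt_irrefl _)
  have hR : 0 < R := hρ.trans_le hρR
  -- right-hand side
  set κ := p / N + p / q - 1 with hκ
  have hκ0 : 0 < κ := kappa_pos hN1 hp hpq hq
  have hratio : ((volume (ball c r)).toReal / (volume Ω).toReal) ^ κ = (r / ρ) ^ ((N:ℝ) * κ) := by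
    rw [← hρv, vol_ball hN1 r hr.le, vol_ball hN1 ρ hρ.le, ENNReal.toReal_mul, ENNReal.toReal_mul,
      ENNReal.toReal_ofReal (by positivity), ENNReal.toReal_ofReal (by positivity)]
    have hv1 : 0 < (volume (ball (0 : EuclideanSpace ℝ (Fin N)) 1)).toReal :=
      ENNReal.toReal_pos (isOpen_ball.measure_pos _ (by simp)).ne' isBounded_ball.measure_lt_top.ne
    rw [mul_div_mul_right _ _ hv1.ne', ← div_pow, Real.rpow_mul (by positivity), Real.rpow_natCast]
  rw [hratio]
  have hΛ := LL_pos hN1 hp hpq hq hR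
  have hrhs : sig N ^ (1 - p / q) * LL N p q R * (R / ρ) ^ ((N:ℝ) * κ) ≤ lambdaPQ p q (ball c r) * (r / ρ) ^ ((N:ℝ) * κ) := by
    have h1 := lam_ge hN0 hp hq0 c hr
    have h2 := LL_scale (N := N) hN1 hp hpq hr hR
    have e : (R / ρ) ^ ((N:ℝ) * κ) = (R / r) ^ ((N:ℝ) * κ) * (r / ρ) ^ ((N:ℝ) * κ) := by
      rw [← Real.mul_rpow (by positivity) (by positivity)]
      congr 1; field_simp
    calc _ = sig N ^ (1 - p / q) * (LL N p q R * (R / r) ^ ((N:ℝ) * κ)) * (r / ρ) ^ ((N:ℝ) * κ) := by rw [e]; ring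
      _ ≤ sig N ^ (1 - p / q) * LL N p q r * (r / ρ) ^ ((N:ℝ) * κ) := by gcongr
      _ ≤ _ := by gcongr
  refine lt_of_lt_of_le ?_ hrhs
  have hσp : 0 < sig N ^ (1 - p / q) := by positivity
  rcases hρR.lt_or_eq with hlt | heq
  · -- strict isodiametric inequality
    obtain ⟨G, hG, hμ⟩ := mu_bound hN1 hp hpq hq hΩo hΩb hΩc hΩne hy0 hy1 hR hRd
      (fun x hx => hmax' x (subset_closure hx) y0 hy0) (fun x hx => hmax' x (subset_closure hx) y1 hy1)
      (a := R / 2) (b := R / 2) (by positivity) le_rfl (by linarith) (W := ∅) MeasurableSet.empty (by simp) (by simp)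
    simp only [measureReal_empty, zero_mul, sub_zero] at hμ
    refine hμ.trans_lt ?_
    have h1 : 1 < (R / ρ) ^ ((N:ℝ) * κ) := Real.one_lt_rpow ((one_lt_div hρ).2 hlt) (by positivity)
    have h2 : 0 < sig N ^ (1 - p / q) * LL N p q R := by positivity
    nlinarith
  · -- equality case
    subst heq
    rw [div_self hρ.ne', Real.one_rpow, mul_one]
    exact eq_case hN hp hpq hq hΩo hΩb hΩc hΩne hρ (fun x hx y hy => (hmax' x hx y hy).trans hRd.le) hCrep (full_closure hN1 hρ hCo hCR hCv)


/-- Corollary 4.2. Let `1 < p ≤ q < p*`. For every open bounded convex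
set `Ω ⊂ ℝ^N` and every open ball `B ⊂ ℝ^N`,
`μ_{p,q}(Ω) < λ_{p,q}(B) · (|B|/|Ω|)^(p/N + p/q - 1)`. -/
theorem muPQ_lt_lambdaPQ_ball_volume {N : ℕ} (hN : 2 ≤ N) (p q : ℝ) (hp : 1 < p)
    (hpq : p ≤ q) (hq : ltCritical N p q)
    (Ω : Set (EuclideanSpace ℝ (Fin N))) (hΩo : IsOpen Ω)
    (hΩb : Bornology.IsBounded Ω) (hΩc : Convex ℝ Ω) (hΩne : Ω.Nonempty)
    (c : EuclideanSpace ℝ (Fin N)) (r : ℝ) (hr : 0 < r) :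
    muPQ p q Ω < lambdaPQ p q (ball c r) *
      ((volume (ball c r)).toReal / (volume Ω).toReal) ^ (p / N + p / q - 1) := by
  exact main_aux hN p q hp hpq hq Ω hΩo hΩb hΩc hΩne c r hr
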